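/- Assume a := ess sup ξ₀ < ∞ and that Q{ξ₀⁻ > λ} ≤ 1/(log λ)^{2+ε} for all large λ, and that c₅ ∈ (0,1) satisfies c₅·|log Q{ξ₀ ≥ a−ρ}| < 1/5. Then P⊗Q-almost surely, (ω,ξ) ∈ A(j_p) for infinitely many p, where j_p := p^{3p}. In particular, P⊗Q-almost surely there is a (random) increasing sequence (m_k)_{k≥1} with m_k ≥ k^{3k} such that (ω,ξ) ∈ A(m_k) for every k ≥ 1. -/

import Mathlib

open MeasureTheory ProbabilityTheory Filter Set

noncomputable section SinaiSceneryDefs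

/-- `γ_i(j) := j^((1-α)^i)`. -/
def gamScale (α : ℝ) (j : ℝ) (i : ℕ) : ℝ := j ^ ((1 - α) ^ i)

/-- `M(j) := inf{n ≥ 0 : γ_n(j) ≤ (log log j)^((1-α)/(2+ε'))}`. -/
def bigM (α ε' : ℝ) (j : ℝ) : ℕ :=
  sInf {n : ℕ | gamScale α j n ≤ (Real.log (Real.log j)) ^ ((1 - α) / (2 + ε'))}

/-- `ε_i(j) := exp(−c₄ γ_{i+2}(j))` for `i ≥ 0` (and `ε_{-1}(j) := ε₀(j)`). -/
def epsScale (α c₄ : ℝ) (j : ℝ) (i : ℕ) : ℝ := Real.exp (-(c₄ * gamScale α j (i + 2)))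

/-- `d⁺(j) := min{n ≥ 0 : V(n) ≥ j}`. -/
def dPlus (v : ℤ → ℝ) (j : ℝ) : ℕ := sInf {n : ℕ | j ≤ v n}

/-- `b⁺(j) := min{n ≥ 0 : V(n) = min_{0 ≤ x ≤ d⁺(j)} V(x)}`. -/
def bPlus (v : ℤ → ℝ) (j : ℝ) : ℕ := sInf {n : ℕ | ∀ m : ℕ, m ≤ dPlus v j → v n ≤ v m}

/-- `ν⁺((−∞,−j]) := min{n ≥ 0 : V(n) ≤ −j}`. -/
def nuMinus (v : ℤ → ℝ) (j : ℝ) : ℕ := sInf {n : ℕ | v n ≤ -j}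

/-- `|d⁻(j)|`, where `d⁻(j) := max{n ≤ 0 : V(n) ≥ j}`. -/
def dMinusAbs (v : ℤ → ℝ) (j : ℝ) : ℕ := sInf {m : ℕ | j ≤ v (-(m : ℤ))}

/-- `|b⁻(j)|`, where `b⁻(j) := max{n ≤ 0 : V(n) = min_{d⁻(j) ≤ x ≤ 0} V(x)}`. -/
def bMinusAbs (v : ℤ → ℝ) (j : ℝ) : ℕ :=
  sInf {m : ℕ | ∀ k : ℕ, k ≤ dMinusAbs v j → v (-(m : ℤ)) ≤ v (-(k : ℤ))}

/-- The interval of half-width `c·γ_i(j)^{2+ε'}` around `b⁺(j)`, with constant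
`c = c₅` for the innermost scale `i = M(j)−1` and `c = c₆` otherwise. -/
def thetaBall (α ε' c₅ c₆ : ℝ) (v : ℤ → ℝ) (j : ℝ) (i : ℕ) : Set ℤ :=
  {x : ℤ | |(x : ℝ) - (bPlus v j : ℝ)| ≤
    (if i = bigM α ε' j - 1 then c₅ else c₆) * gamScale α j i ^ (2 + ε')}

/-- `Θ̄_i(j)`: the `i`-th annulus around `b⁺(j)` (the ball at scale `i` minus the
balls at the finer scales `i+1, …, M(j)−1`). -/
def thetaBar (α ε' c₅ c₆ : ℝ) (v : ℤ → ℝ) (j : ℝ) (i : ℕ) : Set ℤ :=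
  thetaBall α ε' c₅ c₆ v j i \ ⋃ p ∈ Finset.Ioo i (bigM α ε' j), thetaBall α ε' c₅ c₆ v j p

/-- `Θ_i(j) := Θ̄_i(j) ∩ I(j)` with `I(j) = [ν⁺((−∞,−j]), d⁺(j)]`. -/
def thetaSet (α ε' c₅ c₆ : ℝ) (v : ℤ → ℝ) (j : ℝ) (i : ℕ) : Set ℤ :=
  thetaBar α ε' c₅ c₆ v j i ∩ {x : ℤ | (nuMinus v j : ℤ) ≤ x ∧ x ≤ (dPlus v j : ℤ)}

/-- `Θ_{−1}(j) := [−j^{2+ε'}, j^{2+ε'}] ∩ [d⁻(j), ν⁺((−∞,−j])]`. -/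
def thetaNeg (ε' : ℝ) (v : ℤ → ℝ) (j : ℝ) : Set ℤ :=
  {x : ℤ | -(j ^ (2 + ε')) ≤ (x : ℝ) ∧ (x : ℝ) ≤ j ^ (2 + ε') ∧
    -(dMinusAbs v j : ℤ) ≤ x ∧ x ≤ (nuMinus v j : ℤ)}

/-- `A₁^env(j) := {−4j ≤ V(b⁺(j)) ≤ −3j}`. -/
def A1env (v : ℤ → ℝ) (j : ℝ) : Prop := -4 * j ≤ v (bPlus v j) ∧ v (bPlus v j) ≤ -3 * j

/-- `A₂^env(j) := {max_{0≤x≤y≤b⁺(j)} (V(y)−V(x)) ≤ j/4}`. -/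
def A2env (v : ℤ → ℝ) (j : ℝ) : Prop :=
  ∀ x y : ℕ, x ≤ y → y ≤ bPlus v j → v y - v x ≤ j / 4

/-- `A_ann^env(j) := ∩_{i=0}^{M(j)−2} {∑_{x∈Θ_i(j)} e^{−(V(x)−V(b⁺(j)))} ≤ ε_i(j)²}`. -/
def AannEnv (α ε' c₄ c₅ c₆ : ℝ) (v : ℤ → ℝ) (j : ℝ) : Prop :=
  ∀ i : ℕ, i + 2 ≤ bigM α ε' j →
    ∑' x : thetaSet α ε' c₅ c₆ v j i, Real.exp (-(v x - v (bPlus v j)))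
      ≤ epsScale α c₄ j i ^ 2

/-- `B^env(j) := {V(b⁻(j)) ≤ −j/6, max_{d⁻(j)≤x≤y≤0} (V(y)−V(x)) ≤ j/3}`. -/
def Benv (v : ℤ → ℝ) (j : ℝ) : Prop :=
  v (-(bMinusAbs v j : ℤ)) ≤ -j / 6 ∧
    ∀ x y : ℤ, -(dMinusAbs v j : ℤ) ≤ x → x ≤ y → y ≤ 0 → v y - v x ≤ j / 3

/-- `A_i^sce(j) := {max_{x∈Θ_i(j)} ξ_x⁻ < ε_i(j)^{−1/2}}`, `0 ≤ i ≤ M(j)−2`. -/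
def AsceI (α ε' c₄ c₅ c₆ : ℝ) (v ξ : ℤ → ℝ) (j : ℝ) (i : ℕ) : Prop :=
  ∀ x ∈ thetaSet α ε' c₅ c₆ v j i, max (-(ξ x)) 0 < epsScale α c₄ j i ^ (-(1 / 2) : ℝ)

/-- `A_{−1}^sce(j) := {max_{x∈Θ_{−1}(j)} ξ_x⁻ < ε_{−1}(j)^{−1/2}}`. -/
def AsceNeg (α ε' c₄ : ℝ) (v ξ : ℤ → ℝ) (j : ℝ) : Prop :=
  ∀ x ∈ thetaNeg ε' v j, max (-(ξ x)) 0 < epsScale α c₄ j 0 ^ (-(1 / 2) : ℝ)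

/-- `A_{M(j)−1}^sce(j) := {min_{x∈Θ_{M(j)−1}(j)} ξ_x ≥ a − ρ}`. -/
def AsceTop (α ε' c₅ c₆ a ρ : ℝ) (v ξ : ℤ → ℝ) (j : ℝ) : Prop :=
  ∀ x ∈ thetaSet α ε' c₅ c₆ v j (bigM α ε' j - 1), a - ρ ≤ ξ x

/-- The ``good environment-scenery'' event `A(j)`. -/
def goodPair (α ε' c₄ c₅ c₆ a ρ : ℝ) (v ξ : ℤ → ℝ) (j : ℝ) : Prop :=
  A1env v j ∧ A2env v j ∧ AannEnv α ε' c₄ c₅ c₆ v j ∧ Benv v j ∧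
    AsceNeg α ε' c₄ v ξ j ∧
    (∀ i : ℕ, i + 2 ≤ bigM α ε' j → AsceI α ε' c₄ c₅ c₆ v ξ j i) ∧
    AsceTop α ε' c₅ c₆ a ρ v ξ j

end SinaiSceneryDefs

/-! At scale `j = p ^ (3 * p)`, look only at the sites with `t ≤ |x| ≤ t + N`, where `N` is of order
`j ^ 2` and `t` is much smaller than `j ^ 2` but beyond all the blocks of the previous scales. On
`[-t, t]` the potential is negligible compared with `j`, so `A(j)` is decided by the increments of
the potential and the scenery in the block, up to the bound on the negative parts of the scenery on
`[-j ^ (2 + ε'), j ^ (2 + ε')]`, which holds for all large `p` by Borel–Cantelli. These blocks are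
disjoint, so their good events are independent, and by the second Borel–Cantelli lemma it is enough
that they have probability at least `C / p`.

Following a V-shaped path, the potential makes a deep valley on the right part of the block and a
shallow one on the left part, with probability bounded below. The deep valley is steep at every
scale: if the potential came back close to its minimum `n` steps after the bottom, the reversed walk
before the bottom and the walk after it would both stay nonnegative for long, which, summed over the
location of the bottom, has probability `o(1)` by a second-moment estimate for the stopped walk.
Finally the bottom is determined by the environment, hence independent of the scenery, and the
scenery is at least `a - ρ` on the innermost ball with probability `Q{ξ₀ ≥ a - ρ}` to the number of
its sites, which is at least `C / p` because that number is at most `2 c₅ log log j + 1`. -/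

section Measurability

variable {Ω ι : Type*} [Countable ι] {m : MeasurableSpace Ω} {p : ι → Prop} {q : ι → Ω → Prop}

lemma measurableSet_exists_and (h : ∀ i, p i → MeasurableSet {ω | q i ω}) :
    MeasurableSet {ω | ∃ i, p i ∧ q i ω} := by
  have : {ω | ∃ i, p i ∧ q i ω} = ⋃ i, ⋃ _ : p i, {ω | q i ω} := by ext ω; simp
  exact this ▸ MeasurableSet.iUnion fun i => MeasurableSet.iUnion fun hi => h i hi

lemma measurableSet_forall_imp (h : ∀ i, p i → MeasurableSet {ω | q i ω}) :
    MeasurableSet {ω | ∀ i, p i → q i ω} := by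
  have : {ω | ∀ i, p i → q i ω} = ⋂ i, ⋂ _ : p i, {ω | q i ω} := by ext ω; simp
  exact this ▸ MeasurableSet.iInter fun i => MeasurableSet.iInter fun hi => h i hi

end Measurability

lemma exists_le_forall_iff_lt {P : ℕ → Prop} (hP : Antitone P) (m : ℕ) :
    ∃ v ≤ m, ∀ k < m, P k ↔ k < v := by
  induction m with
  | zero => exact ⟨0, le_rfl, by simp⟩
  | succ m ih =>
    obtain ⟨v, hvm, hv⟩ := ih
    by_cases hPm : P m
    · exact ⟨m + 1, le_rfl, fun k hk => iff_of_true (hP (Nat.lt_succ_iff.1 hk) hPm) hk⟩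
    · refine ⟨v, by omega, fun k hk => ?_⟩
      rcases (Nat.lt_succ_iff.1 hk).lt_or_eq with hkm | rfl
      · exact hv k hkm
      · exact iff_of_false hPm (by omega)

section MemLpTop

variable {Ω : Type*} {mΩ : MeasurableSpace Ω} {μ : Measure Ω}

lemma memLp_top_mul {f g : Ω → ℝ} (hf : MemLp f ⊤ μ) (hg : MemLp g ⊤ μ) :
    MemLp (fun ω => f ω * g ω) ⊤ μ :=
  hg.mul hf

lemma memLp_top_pow [IsFiniteMeasure μ] {f : Ω → ℝ} (hf : MemLp f ⊤ μ) (n : ℕ) :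
    MemLp (fun ω => f ω ^ n) ⊤ μ := by
  induction n with
  | zero => simpa using memLp_const 1
  | succ n ih => simpa only [pow_succ] using memLp_top_mul ih hf

lemma memLp_top_integrable [IsFiniteMeasure μ] {f : Ω → ℝ} (hf : MemLp f ⊤ μ) :
    Integrable f μ :=
  hf.integrable le_top

end MemLpTop

/-! ### Independent coordinates -/

/-- The σ-algebra generated by the coordinates `X i`, `i ∈ S`. -/
@[reducible]
def coordSigma {Ω ι β : Type*} [MeasurableSpace β] (X : ι → Ω → β) (S : Set ι) :
    MeasurableSpace Ω :=
  ⨆ i ∈ S, MeasurableSpace.comap (X i) inferInstance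

section coordSigma

variable {Ω ι β : Type*} [MeasurableSpace β] {mΩ : MeasurableSpace Ω} {μ : Measure Ω}
  {X : ι → Ω → β} {S T : Set ι}

lemma coordSigma_le (hX : ∀ i, Measurable (X i)) (S : Set ι) : coordSigma X S ≤ mΩ :=
  iSup₂_le fun i _ => (hX i).comap_le

lemma coordSigma_mono (h : S ⊆ T) : coordSigma X S ≤ coordSigma X T :=
  biSup_mono h

lemma measurable_coordSigma {i : ι} (h : i ∈ S) : Measurable[coordSigma X S] (X i) :=
  measurable_iff_comap_le.2 <|
    le_iSup₂ (f := fun i (_ : i ∈ S) => MeasurableSpace.comap (X i) inferInstance) i h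

lemma coordSigma_le_coordSigma {κ γ : Type*} [MeasurableSpace γ] {Y : κ → Ω → γ} {U : Set κ}
    (h : ∀ i ∈ U, Measurable[coordSigma X T] (Y i)) : coordSigma Y U ≤ coordSigma X T :=
  iSup₂_le fun i hi => (h i hi).comap_le

lemma indep_coordSigma (hX : ∀ i, Measurable (X i)) (hi : iIndepFun X μ) (h : Disjoint S T) :
    Indep (coordSigma X S) (coordSigma X T) μ :=
  indep_iSup_of_disjoint (fun i => (hX i).comap_le) hi h

lemma measureReal_inter_of_coordSigma (hX : ∀ i, Measurable (X i)) (hi : iIndepFun X μ)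
    (h : Disjoint S T) {A B : Set Ω} (hA : MeasurableSet[coordSigma X S] A)
    (hB : MeasurableSet[coordSigma X T] B) :
    μ.real (A ∩ B) = μ.real A * μ.real B := by
  have hAB : μ (A ∩ B) = μ A * μ B := (Indep_iff _ _ μ).1 (indep_coordSigma hX hi h) A B hA hB
  simp only [Measure.real, hAB, ENNReal.toReal_mul]

lemma integral_mul_of_coordSigma (hX : ∀ i, Measurable (X i)) (hi : iIndepFun X μ)
    (h : Disjoint S T) {f g : Ω → ℝ} (hf : Measurable[coordSigma X S] f)
    (hg : Measurable[coordSigma X T] g) :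
    ∫ ω, f ω * g ω ∂μ = (∫ ω, f ω ∂μ) * ∫ ω, g ω ∂μ := by
  have hfg : IndepFun f g μ := by
    rw [IndepFun_iff_Indep]
    exact indep_of_indep_of_le_left
      (indep_of_indep_of_le_right (indep_coordSigma hX hi h) hg.comap_le) hf.comap_le
  exact hfg.integral_fun_mul_eq_mul_integral
    (hf.mono (coordSigma_le hX S) le_rfl).aestronglyMeasurable
    (hg.mono (coordSigma_le hX T) le_rfl).aestronglyMeasurable

end coordSigma

/-! ### Random walks with bounded centred steps -/

/-- Independent centred random variables, bounded by `L`, with common variance `s`: the increments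
of the random walks below. -/
structure CenteredSteps {Ω ι : Type*} {mΩ : MeasurableSpace Ω} (μ : Measure Ω) (X : ι → Ω → ℝ)
    (L s : ℝ) : Prop where
  measurable : ∀ i, Measurable (X i)
  indep : iIndepFun X μ
  bounded : ∀ i, ∀ᵐ ω ∂μ, |X i ω| ≤ L
  integral_eq_zero : ∀ i, ∫ ω, X i ω ∂μ = 0
  integral_sq : ∀ i, ∫ ω, X i ω ^ 2 ∂μ = s

/-- The random walk with increments `X`, started at `0`. -/
def walk {Ω : Type*} (X : ℕ → Ω → ℝ) (k : ℕ) (ω : Ω) : ℝ := ∑ i ∈ Finset.range k, X i ω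

/-- The gated sum `∑_{k < m} 1_{A k} X k`. When each `A k` depends only on the first `k` steps this
is a martingale transform, and for suitable gates it is the walk run between two stopping times. -/
noncomputable def gatedSum {Ω : Type*} (X : ℕ → Ω → ℝ) (A : ℕ → Set Ω) (m : ℕ) (ω : Ω) : ℝ :=
  ∑ k ∈ Finset.range m, (A k).indicator (X k) ω

/-- The event that the walk stays in `D` up to time `k`. -/
def stayEvent {Ω : Type*} (X : ℕ → Ω → ℝ) (D : Set ℝ) (k : ℕ) : Set Ω :=
  {ω | ∀ i ≤ k, walk X i ω ∈ D}

section walk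

variable {Ω : Type*} {X : ℕ → Ω → ℝ}

@[simp] lemma walk_zero (ω : Ω) : walk X 0 ω = 0 := by simp [walk]

lemma walk_succ (k : ℕ) (ω : Ω) : walk X (k + 1) ω = walk X k ω + X k ω := by
  simp [walk, Finset.sum_range_succ]

lemma measurable_walk {k n : ℕ} (h : k ≤ n) : Measurable[coordSigma X (Iio n)] (walk X k) :=
  Finset.measurable_fun_sum _ fun _ hi =>
    measurable_coordSigma ((Finset.mem_range.1 hi).trans_le h)

lemma measurableSet_stayEvent {D : Set ℝ} (hD : MeasurableSet D) (k : ℕ) :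
    MeasurableSet[coordSigma X (Iio k)] (stayEvent X D k) :=
  measurableSet_forall_imp fun _ hi => measurable_walk hi hD

lemma gatedSum_eq_walk_sub {A : ℕ → Set Ω} {ω : Ω} {u v m : ℕ} (huv : u ≤ v) (hvm : v ≤ m)
    (hA : ∀ k < m, ω ∈ A k ↔ u ≤ k ∧ k < v) :
    gatedSum X A m ω = walk X v ω - walk X u ω := by
  classical
  have hfilter : {k ∈ Finset.range m | ω ∈ A k} = Finset.Ico u v := by
    ext k
    simp only [Finset.mem_filter, Finset.mem_range, Finset.mem_Ico]
    exact ⟨fun h => (hA k h.1).1 h.2, fun h => ⟨h.2.trans_le hvm, (hA k (h.2.trans_le hvm)).2 h⟩⟩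
  simp only [gatedSum, walk, indicator_apply]
  rw [← Finset.sum_filter, hfilter, Finset.sum_Ico_eq_sub _ huv]

lemma exists_gatedSum_stayEvent_eq_walk (D : Set ℝ) (m : ℕ) (ω : Ω) :
    ∃ v ≤ m, gatedSum X (stayEvent X D) m ω = walk X v ω ∧ (∀ i < v, walk X i ω ∈ D) ∧
      (v = m ∨ walk X v ω ∉ D) := by
  obtain ⟨v, hvm, hv⟩ := exists_le_forall_iff_lt
    (P := fun k => ω ∈ stayEvent X D k) (fun _ _ hkl h i hi => h i (hi.trans hkl)) m
  have hD : ∀ i < v, walk X i ω ∈ D := fun i hi => (hv i (by omega)).2 hi i le_rfl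
  refine ⟨v, hvm, ?_, hD, ?_⟩
  · rw [gatedSum_eq_walk_sub (Nat.zero_le v) hvm (by simpa using hv), walk_zero, sub_zero]
  · refine or_iff_not_imp_left.2 fun hne hvD => (hv v (by omega)).not.2 (lt_irrefl v) fun i hi => ?_
    rcases hi.lt_or_eq with hi | rfl
    exacts [hD i hi, hvD]

end walk

namespace CenteredSteps

variable {Ω ι : Type*} {mΩ : MeasurableSpace Ω} {μ : Measure Ω} {L s : ℝ}

section Basic

variable {X : ι → Ω → ℝ}

lemma comp (h : CenteredSteps μ X L s) {κ : Type*} {g : κ → ι} (hg : g.Injective) :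
    CenteredSteps μ (fun i => X (g i)) L s where
  measurable _ := h.measurable _
  indep := h.indep.precomp hg
  bounded _ := h.bounded _
  integral_eq_zero _ := h.integral_eq_zero _
  integral_sq _ := h.integral_sq _

lemma neg (h : CenteredSteps μ X L s) : CenteredSteps μ (fun i ω => -X i ω) L s where
  measurable i := (h.measurable i).neg
  indep := h.indep.comp (fun _ x => -x) fun _ => measurable_neg
  bounded i := by simpa only [abs_neg] using h.bounded i
  integral_eq_zero i := by rw [integral_neg, h.integral_eq_zero, neg_zero]
  integral_sq i := by simpa only [neg_sq] using h.integral_sq i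

lemma memLp_top (h : CenteredSteps μ X L s) (i : ι) : MemLp (X i) ⊤ μ :=
  memLp_top_of_bound (h.measurable i).aestronglyMeasurable L (h.bounded i)

lemma bound_nonneg [Nonempty ι] [NeZero μ] (h : CenteredSteps μ X L s) : 0 ≤ L := by
  obtain ⟨ω, hω⟩ := (h.bounded (Classical.arbitrary ι)).exists
  exact (abs_nonneg _).trans hω

lemma variance_nonneg [Nonempty ι] (h : CenteredSteps μ X L s) : 0 ≤ s :=
  h.integral_sq (Classical.arbitrary ι) ▸ integral_nonneg fun _ => sq_nonneg _

end Basic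

variable {X : ℕ → Ω → ℝ} {A : ℕ → Set Ω}

lemma ae_abs_walk_succ_sub_le (h : CenteredSteps μ X L s) :
    ∀ᵐ ω ∂μ, ∀ k, |walk X (k + 1) ω - walk X k ω| ≤ L := by
  filter_upwards [ae_all_iff.2 h.bounded] with ω hω k
  simpa only [walk_succ, add_sub_cancel_left] using hω k

lemma measurable_walk (h : CenteredSteps μ X L s) (k : ℕ) : Measurable (walk X k) :=
  (_root_.measurable_walk le_rfl).mono (coordSigma_le h.measurable (Iio k)) le_rfl

lemma memLp_top_walk (h : CenteredSteps μ X L s) (k : ℕ) : MemLp (walk X k) ⊤ μ := by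
  unfold walk
  exact memLp_finsetSum (Finset.range k) fun i _ => h.memLp_top i

lemma integral_mul_step (h : CenteredSteps μ X L s) {k : ℕ} {f : Ω → ℝ}
    (hf : Measurable[coordSigma X (Iio k)] f) : ∫ ω, f ω * X k ω ∂μ = 0 := by
  rw [integral_mul_of_coordSigma h.measurable h.indep (T := {k}) (by simp) hf
    (measurable_coordSigma rfl), h.integral_eq_zero, mul_zero]

lemma integral_mul_step_sq (h : CenteredSteps μ X L s) {k : ℕ} {f : Ω → ℝ}
    (hf : Measurable[coordSigma X (Iio k)] f) :
    ∫ ω, f ω * X k ω ^ 2 ∂μ = (∫ ω, f ω ∂μ) * s := by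
  rw [integral_mul_of_coordSigma h.measurable h.indep (T := {k}) (by simp) hf
    (Measurable.pow_const (measurable_coordSigma (mem_singleton k)) 2), h.integral_sq]

lemma measurable_gatedSum (hA : ∀ k, MeasurableSet[coordSigma X (Iio k)] (A k)) (m : ℕ) :
    Measurable[coordSigma X (Iio m)] (gatedSum X A m) := by
  refine Finset.measurable_fun_sum _ fun i hi => ?_
  have him : i < m := Finset.mem_range.1 hi
  exact (measurable_coordSigma (show i ∈ Iio m from him)).indicator
    (coordSigma_mono (Iio_subset_Iio him.le) _ (hA i))

lemma memLp_top_gatedSum (h : CenteredSteps μ X L s)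
    (hA : ∀ k, MeasurableSet[coordSigma X (Iio k)] (A k)) (m : ℕ) : MemLp (gatedSum X A m) ⊤ μ := by
  unfold gatedSum
  refine memLp_finsetSum (Finset.range m) fun i _ => ?_
  exact (h.memLp_top i).indicator (coordSigma_le h.measurable _ _ (hA i))

lemma integral_gatedSum [IsFiniteMeasure μ] (h : CenteredSteps μ X L s)
    (hA : ∀ k, MeasurableSet[coordSigma X (Iio k)] (A k)) (m : ℕ) :
    ∫ ω, gatedSum X A m ω ∂μ = 0 := by
  have hstep : ∀ k, ∫ ω, (A k).indicator (X k) ω ∂μ = 0 := fun k => by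
    have hgate := h.integral_mul_step ((measurable_const (a := (1 : ℝ))).indicator (hA k))
    simpa only [← indicator_mul_left, one_mul] using hgate
  simp only [gatedSum]
  rw [integral_finsetSum _ fun k _ => memLp_top_integrable
    ((h.memLp_top k).indicator (coordSigma_le h.measurable _ _ (hA k)))]
  exact Finset.sum_eq_zero fun k _ => hstep k

lemma integral_gatedSum_sq [IsFiniteMeasure μ] (h : CenteredSteps μ X L s)
    (hA : ∀ k, MeasurableSet[coordSigma X (Iio k)] (A k)) (m : ℕ) :
    ∫ ω, gatedSum X A m ω ^ 2 ∂μ = s * ∑ k ∈ Finset.range m, μ.real (A k) := by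
  induction m with
  | zero => simp [gatedSum]
  | succ m ih =>
    set I : Ω → ℝ := (A m).indicator fun _ => 1 with hI
    have hAm : MeasurableSet (A m) := coordSigma_le h.measurable _ _ (hA m)
    have hI_meas : Measurable[coordSigma X (Iio m)] I := measurable_const.indicator (hA m)
    have hI_top : MemLp I ⊤ μ := (memLp_const 1).indicator hAm
    have hZ_top := h.memLp_top_gatedSum hA m
    have expand : ∀ ω, gatedSum X A (m + 1) ω ^ 2 = gatedSum X A m ω ^ 2 +
        (2 * gatedSum X A m ω * I ω * X m ω + I ω * X m ω ^ 2) := fun ω => by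
      rw [gatedSum, Finset.sum_range_succ, ← gatedSum]
      by_cases hω : ω ∈ A m
      · simp only [hI, hω, indicator_of_mem]; ring
      · simp only [hI, hω, not_false_eq_true, indicator_of_notMem]; ring
    have hcross_top : MemLp (fun ω => 2 * gatedSum X A m ω * I ω * X m ω) ⊤ μ :=
      memLp_top_mul (memLp_top_mul (hZ_top.const_mul 2) hI_top) (h.memLp_top m)
    have hdiag_top : MemLp (fun ω => I ω * X m ω ^ 2) ⊤ μ :=
      memLp_top_mul hI_top (memLp_top_pow (h.memLp_top m) 2)
    have hcross_meas : Measurable[coordSigma X (Iio m)] fun ω => 2 * gatedSum X A m ω * I ω :=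
      ((measurable_gatedSum hA m).const_mul 2).mul hI_meas
    have hsum_int : Integrable (fun ω => 2 * gatedSum X A m ω * I ω * X m ω + I ω * X m ω ^ 2) μ :=
      memLp_top_integrable (hcross_top.add hdiag_top)
    simp_rw [expand]
    rw [integral_add (memLp_top_integrable (memLp_top_pow hZ_top 2)) hsum_int,
      integral_add (memLp_top_integrable hcross_top) (memLp_top_integrable hdiag_top), ih,
      h.integral_mul_step hcross_meas, h.integral_mul_step_sq hI_meas, hI,
      integral_indicator_const _ hAm, Finset.sum_range_succ, smul_eq_mul]
    ring

lemma measureReal_exists_le_abs_walk_mul_sq_le [IsProbabilityMeasure μ]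
    (h : CenteredSteps μ X L s) (m : ℕ) {l : ℝ} (hl : 0 < l) :
    μ.real {ω | ∃ k ≤ m, l ≤ |walk X k ω|} * l ^ 2 ≤ s * m := by
  set E := {ω | ∃ k ≤ m, l ≤ |walk X k ω|}
  have hA : ∀ k, MeasurableSet[coordSigma X (Iio k)] (stayEvent X (Ioo (-l) l) k) :=
    measurableSet_stayEvent measurableSet_Ioo
  have hE : MeasurableSet E :=
    measurableSet_exists_and fun k _ => measurableSet_le measurable_const (h.measurable_walk k).abs
  have hpath : ∀ ω, E.indicator (fun _ => l ^ 2) ω ≤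
      gatedSum X (stayEvent X (Ioo (-l) l)) m ω ^ 2 := fun ω => by
    refine indicator_le' (fun ω hω => ?_) (fun _ _ => sq_nonneg _) ω
    obtain ⟨k, hkm, hk⟩ := hω
    obtain ⟨v, hvm, hZ, hin, hout⟩ := exists_gatedSum_stayEvent_eq_walk (X := X) (Ioo (-l) l) m ω
    have hv : l ≤ |walk X v ω| := by
      rcases hout with rfl | hout
      · rcases hkm.lt_or_eq with hkv | rfl
        exacts [absurd (abs_lt.2 (hin k hkv)) hk.not_gt, hk]
      · exact not_lt.1 fun hlt => hout (abs_lt.1 hlt)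
    rw [hZ, ← sq_abs (walk X v ω)]
    exact pow_le_pow_left₀ hl.le hv 2
  calc μ.real E * l ^ 2 = ∫ ω, E.indicator (fun _ => l ^ 2) ω ∂μ := by
        rw [integral_indicator_const _ hE, smul_eq_mul]
    _ ≤ ∫ ω, gatedSum X (stayEvent X (Ioo (-l) l)) m ω ^ 2 ∂μ :=
        integral_mono ((integrable_const _).indicator hE)
          (memLp_top_integrable (memLp_top_pow (h.memLp_top_gatedSum hA m) 2)) hpath
    _ = s * ∑ k ∈ Finset.range m, μ.real (stayEvent X (Ioo (-l) l) k) :=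
        h.integral_gatedSum_sq hA m
    _ ≤ s * ∑ k ∈ Finset.range m, 1 :=
        mul_le_mul_of_nonneg_left (Finset.sum_le_sum fun _ _ => measureReal_le_one)
          h.variance_nonneg
    _ = s * m := by simp

end CenteredSteps

/-! ### Dipping walks -/

/-- The path `w` stays nonnegative until it reaches height `H` at some time `l ≤ N`, although it is
at height at most `h` at some time between `n` and `l`. -/
def DipsThenClimbs (w : ℕ → ℝ) (n : ℕ) (h H : ℝ) (N : ℕ) : Prop :=
  ∃ l ≤ N, H ≤ w l ∧ (∀ i ≤ l, 0 ≤ w i) ∧ ∃ k ≤ l, n ≤ k ∧ w k ≤ h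

/-- The path `w` is still between the two stages of `DipsThenClimbs` at time `k`: it has been
nonnegative so far and has dipped, but has not climbed since. -/
def DipGate (w : ℕ → ℝ) (n : ℕ) (h H : ℝ) (k : ℕ) : Prop :=
  (∃ i ≤ k, n ≤ i ∧ w i ≤ h) ∧ (∀ i ≤ k, 0 ≤ w i) ∧ ¬DipsThenClimbs w n h H k

section DipsThenClimbs

variable {w : ℕ → ℝ} {n N : ℕ} {h H : ℝ}

lemma DipsThenClimbs.mono {N' : ℕ} (hN : N ≤ N') :
    DipsThenClimbs w n h H N → DipsThenClimbs w n h H N' :=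
  fun ⟨l, hl, hrest⟩ => ⟨l, hl.trans hN, hrest⟩

lemma exists_dipGate_iff (w : ℕ → ℝ) (n : ℕ) (h H : ℝ) (N : ℕ) :
    ∃ u v, u ≤ v ∧ v ≤ N ∧ (∀ k < N, DipGate w n h H k ↔ u ≤ k ∧ k < v) ∧
      (u < v → n ≤ u ∧ w u ≤ h) ∧ (DipsThenClimbs w n h H N → w u ≤ h ∧ H ≤ w v) := by
  obtain ⟨u, huN, hu⟩ := exists_le_forall_iff_lt
    (P := fun k => ¬∃ i ≤ k, n ≤ i ∧ w i ≤ h)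
    (fun k l hkl hl ⟨i, hi, hrest⟩ => hl ⟨i, hi.trans hkl, hrest⟩) N
  obtain ⟨v, hvN, hv⟩ := exists_le_forall_iff_lt
    (P := fun k => (∀ i ≤ k, 0 ≤ w i) ∧ ¬DipsThenClimbs w n h H k)
    (fun k l hkl hl => ⟨fun i hi => hl.1 i (hi.trans hkl), fun hk => hl.2 (hk.mono hkl)⟩) N
  have u_le : ∀ i ≤ N, n ≤ i → w i ≤ h → u ≤ i := fun i hiN hni hi => by
    rcases hiN.lt_or_eq with hiN | rfl
    · exact not_lt.1 fun hiu => (hu i hiN).2 hiu ⟨i, le_rfl, hni, hi⟩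
    · exact huN
  have hdip : u < N → n ≤ u ∧ w u ≤ h := fun huN' => by
    obtain ⟨i, hiu, hni, hi⟩ := not_not.1 (mt (hu u huN').1 (lt_irrefl u))
    obtain rfl : i = u := hiu.antisymm (u_le i (by omega) hni hi)
    exact ⟨hni, hi⟩
  refine ⟨u, max u v, le_max_left _ _, max_le huN hvN, fun k hk => ?_, fun huv => hdip (by omega),
    fun hclimb => ?_⟩
  · rw [DipGate, hv k hk, ← not_lt, ← hu k hk, not_not, lt_max_iff, hu k hk |>.symm]
    by_cases hdipped : ∃ i ≤ k, n ≤ i ∧ w i ≤ h <;> simp only [hdipped, not_true, not_false_eq_true,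
      true_and, false_and, false_or]
  have hclimb_v : DipsThenClimbs w n h H v := by
    obtain rfl | hvN' := hvN.eq_or_lt
    · exact hclimb
    obtain ⟨l, hlN, hl⟩ := hclimb
    have hvl : v ≤ l := not_lt.1 fun hlv => ((hv l (by omega)).2 hlv).2 ⟨l, le_rfl, hl⟩
    by_contra hno
    exact lt_irrefl v ((hv v hvN').1 ⟨fun i hi => hl.2.1 i (hi.trans hvl), hno⟩)
  obtain ⟨l, hlv, hHl, hnonneg, k, hkl, hnk, hk⟩ := hclimb_v
  obtain rfl : l = v := hlv.antisymm <| not_lt.1 fun hlv =>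
    ((hv l (by omega)).2 hlv).2 ⟨l, le_rfl, hHl, hnonneg, k, hkl, hnk, hk⟩
  have huk : u ≤ k := u_le k (by omega) hnk hk
  refine ⟨?_, ?_⟩
  · obtain rfl | huN' := huN.eq_or_lt
    · rwa [show u = k by omega]
    · exact (hdip huN').2
  · rwa [max_eq_right (huk.trans hkl)]

lemma measurableSet_dipsThenClimbs {Ω : Type*} {_ : MeasurableSpace Ω} {w : ℕ → Ω → ℝ}
    (hw : ∀ k ≤ N, Measurable (w k)) :
    MeasurableSet {ω | DipsThenClimbs (fun k => w k ω) n h H N} :=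
  measurableSet_exists_and fun l hl =>
    (measurableSet_le measurable_const (hw l hl)).inter <|
      (measurableSet_forall_imp fun i hi =>
        measurableSet_le measurable_const (hw i (hi.trans hl))).inter <|
      measurableSet_exists_and fun k hk =>
        (MeasurableSet.const _).inter (measurableSet_le (hw k (hk.trans hl)) measurable_const)

lemma measurableSet_dipGate {Ω : Type*} {_ : MeasurableSpace Ω} {w : ℕ → Ω → ℝ} {k : ℕ}
    (hw : ∀ i ≤ k, Measurable (w i)) :
    MeasurableSet {ω | DipGate (fun i => w i ω) n h H k} :=
  (measurableSet_exists_and fun i hi =>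
    (MeasurableSet.const _).inter (measurableSet_le (hw i hi) measurable_const)).inter <|
  (measurableSet_forall_imp fun i hi => measurableSet_le measurable_const (hw i hi)).inter
    (measurableSet_dipsThenClimbs hw).compl

end DipsThenClimbs

/-- The constant in the bound `persistConst L s / √n` for the probability that a walk with centred
steps bounded by `L` and of variance `s` stays nonnegative up to time `n`. -/
noncomputable def persistConst (L s : ℝ) : ℝ := L + (L + L ^ 2) / s

namespace CenteredSteps

variable {Ω : Type*} {mΩ : MeasurableSpace Ω} {μ : Measure Ω} [IsProbabilityMeasure μ]
  {X : ℕ → Ω → ℝ} {L s : ℝ}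

lemma measureReal_dipsThenClimbs_mul_le (hX : CenteredSteps μ X L s) (n N : ℕ) {h H : ℝ}
    (hh : 0 ≤ h) :
    μ.real {ω | DipsThenClimbs (fun k => walk X k ω) n h H N} * (H - h) ≤
      (h + L) * μ.real {ω | ∀ k ≤ n, 0 ≤ walk X k ω} := by
  set E := {ω | DipsThenClimbs (fun k => walk X k ω) n h H N}
  set B := {ω | ∀ k ≤ n, 0 ≤ walk X k ω}
  set A : ℕ → Set Ω := fun k => {ω | DipGate (fun i => walk X i ω) n h H k}
  have hL := hX.bound_nonneg
  have hA : ∀ k, MeasurableSet[coordSigma X (Iio k)] (A k) := fun k =>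
    measurableSet_dipGate fun i hi => _root_.measurable_walk hi
  have hE : MeasurableSet E := measurableSet_dipsThenClimbs fun k _ => hX.measurable_walk k
  have hB : MeasurableSet B := measurableSet_forall_imp fun k _ =>
    measurableSet_le measurable_const (hX.measurable_walk k)
  have hpath : ∀ᵐ ω ∂μ, E.indicator (fun _ => H - h) ω - B.indicator (fun _ => h + L) ω ≤
      gatedSum X A N ω := by
    filter_upwards [hX.ae_abs_walk_succ_sub_le] with ω hstep
    obtain ⟨u, v, huv, hvN, hgate, hdip, hclimb⟩ :=
      exists_dipGate_iff (fun k => walk X k ω) n h H N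
    rw [gatedSum_eq_walk_sub huv hvN hgate]
    have hB_nonneg : 0 ≤ B.indicator (fun _ => h + L) ω :=
      indicator_nonneg (fun _ _ => add_nonneg hh hL) ω
    by_cases hωE : ω ∈ E
    · rw [indicator_of_mem hωE]
      linarith [hclimb hωE]
    rw [indicator_of_notMem hωE]
    rcases huv.eq_or_lt with rfl | huv
    · linarith
    obtain ⟨v, rfl⟩ : ∃ v', v = v' + 1 := ⟨v - 1, by omega⟩
    have hnonneg := ((hgate v (by omega)).2 (by omega)).2.1
    have hωB : ω ∈ B := fun i hi => hnonneg i (by have := hdip huv; omega)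
    rw [indicator_of_mem hωB]
    linarith [hdip huv, hnonneg v le_rfl, neg_le_of_abs_le (hstep v)]
  have hmean := integral_mono_ae
    (((integrable_const _).indicator hE).sub ((integrable_const _).indicator hB))
    (memLp_top_integrable (hX.memLp_top_gatedSum hA N)) hpath
  rw [hX.integral_gatedSum hA, integral_sub' ((integrable_const _).indicator hE)
    ((integrable_const _).indicator hB), integral_indicator_const _ hE,
    integral_indicator_const _ hB] at hmean
  simp only [smul_eq_mul] at hmean
  linarith

lemma measureReal_dipsThenClimbs_zero_le (hX : CenteredSteps μ X L s) (N : ℕ) {H : ℝ}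
    (hH : 0 < H) : μ.real {ω | DipsThenClimbs (fun k => walk X k ω) 0 0 H N} ≤ L / H := by
  rw [le_div_iff₀ hH]
  calc _ = μ.real {ω | DipsThenClimbs (fun k => walk X k ω) 0 0 H N} * (H - 0) := by rw [sub_zero]
    _ ≤ (0 + L) * μ.real {ω | ∀ k ≤ 0, 0 ≤ walk X k ω} :=
        hX.measureReal_dipsThenClimbs_mul_le 0 N le_rfl
    _ ≤ (0 + L) * 1 := by gcongr; exacts [by linarith [hX.bound_nonneg], measureReal_le_one]
    _ = L := by ring

lemma mul_measureReal_stayEvent_Ico_le (hX : CenteredSteps μ X L s) {K : ℝ} (hK : 0 < K) (n : ℕ) :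
    s * (n * μ.real (stayEvent X (Ico 0 K) n)) ≤ L * (K + L) := by
  set A := stayEvent X (Ico 0 K)
  have hL := hX.bound_nonneg
  have hA : ∀ k, MeasurableSet[coordSigma X (Iio k)] (A k) :=
    measurableSet_stayEvent measurableSet_Ico
  have hZ_int := memLp_top_integrable (hX.memLp_top_gatedSum hA n)
  have hpath : ∀ᵐ ω ∂μ, gatedSum X A n ω ^ 2 ≤ K * gatedSum X A n ω + L * (K + L) := by
    filter_upwards [hX.ae_abs_walk_succ_sub_le] with ω hstep
    obtain ⟨v, -, hZ, hin, -⟩ := exists_gatedSum_stayEvent_eq_walk (X := X) (Ico 0 K) n ω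
    have hv : -L ≤ walk X v ω ∧ walk X v ω ≤ K + L := by
      rcases v with - | v
      · rw [walk_zero]; constructor <;> linarith
      · obtain ⟨h0, hK⟩ := hin v (Nat.lt_succ_self v)
        obtain ⟨hlow, hupp⟩ := abs_le.1 (hstep v)
        constructor <;> linarith
    rw [hZ]
    linarith [mul_nonneg (neg_le_iff_add_nonneg.1 hv.1) (sub_nonneg.2 hv.2)]
  have hbound := integral_mono_ae
    (memLp_top_integrable (memLp_top_pow (hX.memLp_top_gatedSum hA n) 2))
    ((hZ_int.const_mul K).add (integrable_const (L * (K + L)))) hpath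
  rw [integral_add' (hZ_int.const_mul K) (integrable_const _), integral_const_mul,
    hX.integral_gatedSum hA, hX.integral_gatedSum_sq hA, integral_const, probReal_univ, one_smul,
    mul_zero, zero_add] at hbound
  refine le_trans (mul_le_mul_of_nonneg_left ?_ hX.variance_nonneg) hbound
  calc n * μ.real (A n) = ∑ _k ∈ Finset.range n, μ.real (A n) := by simp
    _ ≤ ∑ k ∈ Finset.range n, μ.real (A k) := Finset.sum_le_sum fun k hk =>
        measureReal_mono fun ω hω i hi => hω i (hi.trans (Finset.mem_range.1 hk).le)

lemma measureReal_forall_walk_nonneg_le (hX : CenteredSteps μ X L s) (hs : 0 < s) {n : ℕ}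
    (hn : 1 ≤ n) : μ.real {ω | ∀ k ≤ n, 0 ≤ walk X k ω} ≤ persistConst L s / √n := by
  set K : ℝ := √n
  have := hX.bound_nonneg
  have hK1 : 1 ≤ K := Real.one_le_sqrt.2 (by exact_mod_cast hn)
  have hKn : (n : ℝ) = K * K := (Real.mul_self_sqrt (Nat.cast_nonneg n)).symm
  have hsplit : {ω | ∀ k ≤ n, 0 ≤ walk X k ω} ⊆
      stayEvent X (Ico 0 K) n ∪ {ω | DipsThenClimbs (fun k => walk X k ω) 0 0 K n} := by
    intro ω hω
    by_cases hlow : ∀ l ≤ n, walk X l ω < K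
    · exact Or.inl fun i hi => ⟨hω i hi, hlow i hi⟩
    · push Not at hlow
      obtain ⟨l, hln, hl⟩ := hlow
      exact Or.inr ⟨l, hln, hl, fun i hi => hω i (hi.trans hln), 0, l.zero_le, le_rfl,
        (walk_zero ω).le⟩
  have hstay : μ.real (stayEvent X (Ico 0 K) n) ≤ (L + L ^ 2) / s / K := by
    rw [div_div, le_div_iff₀ (by positivity)]
    refine le_of_mul_le_mul_right ?_ (zero_lt_one.trans_le hK1)
    calc μ.real (stayEvent X (Ico 0 K) n) * (s * K) * K
        = s * (n * μ.real (stayEvent X (Ico 0 K) n)) := by rw [hKn]; ring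
      _ ≤ L * (K + L) := hX.mul_measureReal_stayEvent_Ico_le (by positivity) n
      _ ≤ (L + L ^ 2) * K := by nlinarith [sq_nonneg L]
  calc _ ≤ μ.real (stayEvent X (Ico 0 K) n) +
        μ.real {ω | DipsThenClimbs (fun k => walk X k ω) 0 0 K n} :=
        (measureReal_mono hsplit).trans (measureReal_union_le _ _)
    _ ≤ (L + L ^ 2) / s / K + L / K :=
        add_le_add hstay (hX.measureReal_dipsThenClimbs_zero_le n (by positivity))
    _ = persistConst L s / K := by rw [persistConst]; ring

lemma measureReal_dipsThenClimbs_le (hX : CenteredSteps μ X L s) (hs : 0 < s) {n : ℕ}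
    (hn : 1 ≤ n) (N : ℕ) {h H : ℝ} (hh : 0 ≤ h) (hH : 0 < H) (hhH : 2 * h ≤ H) :
    μ.real {ω | DipsThenClimbs (fun k => walk X k ω) n h H N} ≤
      persistConst L s * (2 * (h + L)) / (√n * H) := by
  set p := μ.real {ω | DipsThenClimbs (fun k => walk X k ω) n h H N}
  have := hX.bound_nonneg
  have : 0 < √(n : ℝ) := Real.sqrt_pos.2 (by exact_mod_cast hn)
  have : 0 ≤ p := measureReal_nonneg
  have hclimb : p * (H / 2) ≤ (h + L) * (persistConst L s / √n) :=
    calc p * (H / 2) ≤ p * (H - h) := by gcongr; linarith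
      _ ≤ _ := hX.measureReal_dipsThenClimbs_mul_le n N hh
      _ ≤ _ := by gcongr; exact hX.measureReal_forall_walk_nonneg_le hs hn
  calc p = p * (H / 2) * (2 / H) := by field_simp
    _ ≤ (h + L) * (persistConst L s / √n) * (2 / H) := by gcongr
    _ = persistConst L s * (2 * (h + L)) / (√n * H) := by field_simp

end CenteredSteps

/-! ### Steering a walk along a path -/

lemma walk_add {Ω : Type*} (X : ℕ → Ω → ℝ) (m k : ℕ) (ω : Ω) :
    walk X (m + k) ω = walk X m ω + walk (fun i => X (m + i)) k ω := by
  simp [walk, Finset.sum_range_add]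

lemma walk_neg {Ω : Type*} (X : ℕ → Ω → ℝ) (k : ℕ) (ω : Ω) :
    walk (fun i ω => -X i ω) k ω = -walk X k ω := by
  simp [walk]

lemma integral_sq_sub_integral_pow_four_le {Ω : Type*} {mΩ : MeasurableSpace Ω} {μ : Measure Ω}
    [IsProbabilityMeasure μ] {Z : Ω → ℝ} (hZ : Measurable Z) (hZ_top : MemLp Z ⊤ μ)
    (hmean : ∫ ω, Z ω ∂μ = 0) {a : ℝ} (ha : 0 ≤ a) (ha1 : a ≤ 1) :
    ∫ ω, Z ω ^ 2 ∂μ - ∫ ω, Z ω ^ 4 ∂μ ≤ 2 * a + 2 * μ.real {ω | a ≤ Z ω} := by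
  have hE : MeasurableSet {ω | a ≤ Z ω} := measurableSet_le measurable_const hZ
  have hint : ∀ n, Integrable (fun ω => Z ω ^ n) μ := fun n =>
    memLp_top_integrable (memLp_top_pow hZ_top n)
  have hE_int : Integrable ({ω | a ≤ Z ω}.indicator fun _ => (2 : ℝ)) μ :=
    (integrable_const _).indicator hE
  -- The linear term, which has mean zero, makes the left side nonpositive on `z ≤ 0`.
  have hpoint : ∀ ω, Z ω ^ 2 - Z ω ^ 4 + Z ω ≤
      2 * a + {ω | a ≤ Z ω}.indicator (fun _ => (2 : ℝ)) ω := fun ω => by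
    rcases le_or_gt a (Z ω) with hz | hz
    · rw [indicator_of_mem (show ω ∈ {ω | a ≤ Z ω} from hz)]
      nlinarith [sq_nonneg (Z ω ^ 2 - 1), sq_nonneg (Z ω - 1)]
    rw [indicator_of_notMem (show ω ∉ {ω | a ≤ Z ω} from hz.not_ge), add_zero]
    rcases le_or_gt 0 (Z ω) with hz0 | hz0
    · nlinarith [pow_nonneg hz0 4]
    · nlinarith [mul_nonneg (neg_nonneg.2 hz0.le) (sq_nonneg (Z ω + 1)),
        mul_nonneg (neg_nonneg.2 hz0.le) (sq_nonneg (Z ω)), sq_nonneg (Z ω * (Z ω + 1)),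
        sq_nonneg (Z ω * (Z ω - 1)), sq_nonneg (Z ω ^ 2 - 1 / 2)]
  have hmono := integral_mono (((hint 2).sub (hint 4)).add (memLp_top_integrable hZ_top))
    ((integrable_const (2 * a)).add hE_int) hpoint
  rw [integral_add' ((hint 2).sub (hint 4)) (memLp_top_integrable hZ_top),
    integral_sub' (hint 2) (hint 4), hmean, integral_add' (integrable_const _) hE_int,
    integral_indicator_const _ hE, integral_const, probReal_univ] at hmono
  simp only [smul_eq_mul] at hmono
  linarith

/-- The walk climbs by at least `s / (32 L) √n` in `n` steps without ever exceeding `12 L √n` in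
absolute value. The constants come from the fourth moment bound `3 L² s n²`. -/
def steerEvent {Ω : Type*} (X : ℕ → Ω → ℝ) (L s : ℝ) (n : ℕ) : Set Ω :=
  {ω | s / (32 * L) * √n ≤ walk X n ω ∧ ∀ k ≤ n, |walk X k ω| ≤ 12 * L * √n}

/-- The walk stays within distance `η` of the path `f` up to time `N`. -/
def tubeEvent {Ω : Type*} (X : ℕ → Ω → ℝ) (f : ℕ → ℝ) (N : ℕ) (η : ℝ) : Set Ω :=
  {ω | ∀ k ≤ N, |walk X k ω - f k| ≤ η}

/-- The walk stays within distance `4 b` of `f` up to time `N`, and within `2 b` at time `N`. -/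
def anchoredTubeEvent {Ω : Type*} (X : ℕ → Ω → ℝ) (f : ℕ → ℝ) (N : ℕ) (b : ℝ) : Set Ω :=
  tubeEvent X f N (4 * b) ∩ {ω | |walk X N ω - f N| ≤ 2 * b}

section Events

variable {Ω : Type*} {X : ℕ → Ω → ℝ}

lemma measurableSet_steerEvent (L s : ℝ) (n : ℕ) :
    MeasurableSet[coordSigma X (Iio n)] (steerEvent X L s n) :=
  (measurableSet_le measurable_const (measurable_walk le_rfl)).inter <|
    measurableSet_forall_imp fun _ hi =>
      measurableSet_le (continuous_abs.measurable.comp (measurable_walk hi)) measurable_const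

lemma measurableSet_abs_walk_sub_le {k N : ℕ} (hk : k ≤ N) (x η : ℝ) :
    MeasurableSet[coordSigma X (Iio N)] {ω | |walk X k ω - x| ≤ η} :=
  measurableSet_le (continuous_abs.measurable.comp ((measurable_walk hk).sub_const _))
    measurable_const

lemma measurableSet_anchoredTubeEvent (f : ℕ → ℝ) (N : ℕ) (b : ℝ) :
    MeasurableSet[coordSigma X (Iio N)] (anchoredTubeEvent X f N b) :=
  (measurableSet_forall_imp fun _ hk => measurableSet_abs_walk_sub_le hk _ _).inter
    (measurableSet_abs_walk_sub_le le_rfl _ _)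

lemma mem_anchoredTubeEvent_add {f : ℕ → ℝ} {N n : ℕ} {b : ℝ} {ω : Ω}
    (hω : ω ∈ anchoredTubeEvent X f N b)
    (hX : ∀ k ≤ n, |walk (fun i => X (N + i)) k ω| ≤ b) (hf : ∀ k ≤ n, |f (N + k) - f N| ≤ b)
    (hsteer : (walk X N ω ≤ f N ∧ f (N + n) - f N ≤ walk (fun i => X (N + i)) n ω) ∨
      (f N ≤ walk X N ω ∧ walk (fun i => X (N + i)) n ω ≤ f (N + n) - f N)) :
    ω ∈ anchoredTubeEvent X f (N + n) b := by
  obtain ⟨htube, hend⟩ := hω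
  obtain ⟨hend_low, hend_upp⟩ := abs_le.1 (show |walk X N ω - f N| ≤ 2 * b from hend)
  refine ⟨fun k hk => ?_, ?_⟩
  · rcases le_total k N with hkN | hNk
    · exact htube k hkN
    obtain ⟨k, rfl⟩ := Nat.exists_eq_add_of_le hNk
    obtain ⟨hX_low, hX_upp⟩ := abs_le.1 (hX k (by omega))
    obtain ⟨hf_low, hf_upp⟩ := abs_le.1 (hf k (by omega))
    rw [walk_add, abs_le]
    constructor <;> linarith
  · obtain ⟨hX_low, hX_upp⟩ := abs_le.1 (hX n le_rfl)
    obtain ⟨hf_low, hf_upp⟩ := abs_le.1 (hf n le_rfl)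
    rw [mem_ofPred_eq, walk_add, abs_le]
    rcases hsteer with ⟨hside, hsteer⟩ | ⟨hside, hsteer⟩ <;> constructor <;> linarith

end Events

lemma mul_measureReal_le_of_inter_subset {Ω : Type*} {m₁ m₂ mΩ : MeasurableSpace Ω}
    {μ : Measure Ω} [IsFiniteMeasure μ] (hm₁ : m₁ ≤ mΩ) (hm₂ : m₂ ≤ mΩ) (hind : Indep m₁ m₂ μ)
    {E P S T F : Set Ω} (hE : MeasurableSet[m₁] E) (hP : MeasurableSet[m₁] P)
    (hS : MeasurableSet[m₂] S) (hT : MeasurableSet[m₂] T) {c : ℝ} (hcS : c ≤ μ.real S)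
    (hcT : c ≤ μ.real T) (hSF : E ∩ P ∩ S ⊆ F) (hTF : E ∩ Pᶜ ∩ T ⊆ F) :
    μ.real E * c ≤ μ.real F := by
  have hmul : ∀ {A B}, MeasurableSet[m₁] A → MeasurableSet[m₂] B →
      μ.real (A ∩ B) = μ.real A * μ.real B := fun hA hB => by
    simp only [Measure.real, (Indep_iff _ _ μ).1 hind _ _ hA hB, ENNReal.toReal_mul]
  have hdisj : Disjoint (E ∩ P ∩ S) (E ∩ Pᶜ ∩ T) :=
    Set.disjoint_left.2 fun _ h h' => h'.1.2 h.1.2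
  calc μ.real E * c = μ.real (E ∩ P) * c + μ.real (E ∩ Pᶜ) * c := by
        rw [← measureReal_inter_add_sdiff (s := E) (hm₁ _ hP), sdiff_eq, add_mul]
    _ ≤ μ.real (E ∩ P) * μ.real S + μ.real (E ∩ Pᶜ) * μ.real T := by gcongr
    _ = μ.real (E ∩ P ∩ S ∪ E ∩ Pᶜ ∩ T) := by
        rw [measureReal_union hdisj ((hm₁ _ (hE.inter hP.compl)).inter (hm₂ _ hT)),
          hmul (hE.inter hP) hS, hmul (hE.inter hP.compl) hT]
    _ ≤ μ.real F := measureReal_mono (union_subset hSF hTF)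

namespace CenteredSteps

variable {Ω : Type*} {mΩ : MeasurableSpace Ω} {μ : Measure Ω} [IsProbabilityMeasure μ]
  {X : ℕ → Ω → ℝ} {L s : ℝ}

lemma integral_step_pow_four_le (h : CenteredSteps μ X L s) (k : ℕ) :
    ∫ ω, X k ω ^ 4 ∂μ ≤ L ^ 2 * s := by
  rw [← h.integral_sq k, ← integral_const_mul]
  refine integral_mono_ae (memLp_top_integrable (memLp_top_pow (h.memLp_top k) 4))
    ((memLp_top_integrable (memLp_top_pow (h.memLp_top k) 2)).const_mul _) ?_
  filter_upwards [h.bounded k] with ω hω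
  have hsq : X k ω ^ 2 ≤ L ^ 2 := sq_le_sq' (neg_le_of_abs_le hω) (le_of_abs_le hω)
  nlinarith [sq_nonneg (X k ω)]

lemma variance_le_sq (h : CenteredSteps μ X L s) : s ≤ L ^ 2 := by
  calc s = ∫ ω, X 0 ω ^ 2 ∂μ := (h.integral_sq 0).symm
    _ ≤ ∫ _ω, L ^ 2 ∂μ := by
        refine integral_mono_ae (memLp_top_integrable (memLp_top_pow (h.memLp_top 0) 2))
          (integrable_const _) ?_
        filter_upwards [h.bounded 0] with ω hω
        exact sq_le_sq' (neg_le_of_abs_le hω) (le_of_abs_le hω)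
    _ = L ^ 2 := by simp

lemma integral_walk (h : CenteredSteps μ X L s) (k : ℕ) : ∫ ω, walk X k ω ∂μ = 0 := by
  simpa [gatedSum, walk] using h.integral_gatedSum (A := fun _ => univ)
    (fun _ => MeasurableSet.univ) k

lemma integral_walk_sq (h : CenteredSteps μ X L s) (k : ℕ) :
    ∫ ω, walk X k ω ^ 2 ∂μ = s * k := by
  simpa [gatedSum, walk] using h.integral_gatedSum_sq (A := fun _ => univ)
    (fun _ => MeasurableSet.univ) k

lemma integral_walk_pow_four_le (h : CenteredSteps μ X L s) (k : ℕ) :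
    ∫ ω, walk X k ω ^ 4 ∂μ ≤ 3 * (L ^ 2 * s) * k ^ 2 := by
  induction k with
  | zero => simp
  | succ k ih =>
    have hint : ∀ p q, Integrable (fun ω => walk X k ω ^ p * X k ω ^ q) μ := fun p q =>
      memLp_top_integrable
        (memLp_top_mul (memLp_top_pow (h.memLp_top_walk k) p) (memLp_top_pow (h.memLp_top k) q))
    have hfactor : ∀ p q, ∫ ω, walk X k ω ^ p * X k ω ^ q ∂μ =
        (∫ ω, walk X k ω ^ p ∂μ) * ∫ ω, X k ω ^ q ∂μ := fun p q =>
      integral_mul_of_coordSigma h.measurable h.indep (S := Iio k) (T := {k}) (by simp)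
        ((_root_.measurable_walk le_rfl).pow_const p)
        (Measurable.pow_const (measurable_coordSigma (mem_singleton k)) q)
    have hmixed : ∑ q ∈ Finset.range 5, (Nat.choose 4 q : ℝ) *
        ∫ ω, walk X k ω ^ q * X k ω ^ (4 - q) ∂μ = ∫ ω, walk X (k + 1) ω ^ 4 ∂μ := by
      simp_rw [walk_succ, add_pow, ← integral_const_mul]
      rw [← integral_finsetSum _ fun q _ => (hint q (4 - q)).const_mul _]
      simp_rw [mul_comm]
    have hvar := mul_le_mul_of_nonneg_right h.variance_le_sq h.variance_nonneg
    rw [← hmixed]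
    simp only [Finset.sum_range_succ, Finset.sum_range_zero, hfactor, Nat.choose]
    norm_num [h.integral_walk, h.integral_walk_sq, h.integral_eq_zero, h.integral_sq]
    nlinarith [h.integral_step_pow_four_le k, mul_le_mul_of_nonneg_right hvar (Nat.cast_nonneg k),
      mul_nonneg (sq_nonneg L) h.variance_nonneg]

lemma le_measureReal_steerEvent (h : CenteredSteps μ X L s) (hL : 0 < L) {n : ℕ} (hn : 1 ≤ n) :
    s / (128 * L ^ 2) ≤ μ.real (steerEvent X L s n) := by
  have hn0 : (0 : ℝ) < n := by exact_mod_cast hn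
  have hs := h.variance_nonneg
  set t := 2 * L * √n with ht
  set a := s / (64 * L ^ 2) with ha
  have ht2 : t ^ 2 = 4 * L ^ 2 * n := by rw [ht, mul_pow, mul_pow, Real.sq_sqrt hn0.le]; ring
  have ht0 : 0 < t := by positivity
  have ha1 : a ≤ 1 := by
    rw [ha, div_le_one (by positivity)]
    nlinarith [h.variance_le_sq, sq_nonneg L]
  have hclimb : a ≤ μ.real {ω | a ≤ walk X n ω / t} := by
    have hmom := integral_sq_sub_integral_pow_four_le ((h.measurable_walk n).div_const t)
      (by simpa only [div_eq_mul_inv] using (h.memLp_top_walk n).mul_const t⁻¹)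
      (by rw [integral_div, h.integral_walk, zero_div]) (show 0 ≤ a by positivity) ha1
    simp only [div_pow, integral_div, h.integral_walk_sq] at hmom
    have h2 : s * n / t ^ 2 = 16 * a := by rw [ht2, ha]; field_simp; ring
    have h4 : (∫ ω, walk X n ω ^ 4 ∂μ) / t ^ 4 ≤ 12 * a := by
      rw [div_le_iff₀ (by positivity)]
      refine (h.integral_walk_pow_four_le n).trans_eq ?_
      rw [show t ^ 4 = (t ^ 2) ^ 2 by ring, ht2, ha]
      field_simp
      ring_nf
    linarith
  have hmax : μ.real {ω | ∃ k ≤ n, 12 * L * √n ≤ |walk X k ω|} ≤ a / 2 := by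
    have hkol := h.measureReal_exists_le_abs_walk_mul_sq_le n
      (show 0 < 12 * L * √(n : ℝ) by positivity)
    rw [← le_div_iff₀ (by positivity), mul_pow, Real.sq_sqrt hn0.le] at hkol
    refine hkol.trans ?_
    rw [ha, div_div, div_le_div_iff₀ (by positivity) (by positivity)]
    nlinarith [mul_nonneg (mul_nonneg hs hn0.le) (sq_nonneg L)]
  have hsub : {ω | a ≤ walk X n ω / t} ⊆
      steerEvent X L s n ∪ {ω | ∃ k ≤ n, 12 * L * √n ≤ |walk X k ω|} := by
    intro ω hω
    refine or_iff_not_imp_right.2 fun hbig => ⟨?_, fun k hk => ?_⟩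
    · refine le_trans (le_of_eq ?_) ((le_div_iff₀ ht0).1 hω)
      rw [ha, ht]; field_simp; ring
    · exact (not_le.1 fun hle => hbig ⟨k, hk, hle⟩).le
  have hunion := (measureReal_mono (μ := μ) hsub).trans (measureReal_union_le _ _)
  calc s / (128 * L ^ 2) = a - a / 2 := by rw [ha]; field_simp; ring
    _ ≤ μ.real (steerEvent X L s n) := by linarith

lemma measureReal_anchoredTubeEvent_add_ge (h : CenteredSteps μ X L s) (hL : 0 < L) {n : ℕ}
    (hn : 1 ≤ n) {f : ℕ → ℝ} {N : ℕ} (hf : ∀ k ≤ n, |f (N + k) - f N| ≤ s / (32 * L) * √n) :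
    μ.real (anchoredTubeEvent X f N (12 * L * √n)) * (s / (128 * L ^ 2)) ≤
      μ.real (anchoredTubeEvent X f (N + n) (12 * L * √n)) := by
  set Y : ℕ → Ω → ℝ := fun i => X (N + i)
  have hY : CenteredSteps μ Y L s := h.comp (add_right_injective N)
  have hdisj : Disjoint (Iio N) (Ici N) :=
    Set.disjoint_left.2 fun _ (hx : _ < N) (hx' : N ≤ _) => by omega
  have hY_le : coordSigma Y (Iio n) ≤ coordSigma X (Ici N) :=
    coordSigma_le_coordSigma fun i _ => measurable_coordSigma (Nat.le_add_right N i)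
  have hnegY_le : coordSigma (fun i ω => -Y i ω) (Iio n) ≤ coordSigma X (Ici N) :=
    coordSigma_le_coordSigma fun i _ =>
      (measurable_coordSigma (X := X) (Nat.le_add_right N i)).neg
  have hslope : s / (32 * L) * √(n : ℝ) ≤ 12 * L * √n := by
    refine mul_le_mul_of_nonneg_right ?_ (Real.sqrt_nonneg _)
    rw [div_le_iff₀ (by positivity)]
    nlinarith [h.variance_le_sq, sq_nonneg L]
  have hf' : ∀ k ≤ n, |f (N + k) - f N| ≤ 12 * L * √n := fun k hk => (hf k hk).trans hslope
  have hbelow : MeasurableSet[coordSigma X (Iio N)] {ω | walk X N ω ≤ f N} :=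
    measurableSet_le (_root_.measurable_walk le_rfl) measurable_const
  refine mul_measureReal_le_of_inter_subset (coordSigma_le h.measurable (Iio N))
    (coordSigma_le h.measurable (Ici N)) (indep_coordSigma h.measurable h.indep hdisj)
    (measurableSet_anchoredTubeEvent f N _) hbelow
    (hY_le _ (measurableSet_steerEvent L s n)) (hnegY_le _ (measurableSet_steerEvent L s n))
    (hY.le_measureReal_steerEvent hL hn) (hY.neg.le_measureReal_steerEvent hL hn) ?_ ?_
  · rintro ω ⟨⟨hω, hside⟩, hclimb, hbounded⟩
    exact mem_anchoredTubeEvent_add hω hbounded hf'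
      (Or.inl ⟨hside, (le_of_abs_le (hf n le_rfl)).trans hclimb⟩)
  · rintro ω ⟨⟨hω, hside⟩, hclimb, hbounded⟩
    simp only [walk_neg, abs_neg] at hclimb hbounded
    have hside' : f N ≤ walk X N ω := (not_le.1 (show ¬walk X N ω ≤ f N from hside)).le
    exact mem_anchoredTubeEvent_add hω hbounded hf'
      (Or.inr ⟨hside', by linarith [neg_le_of_abs_le (hf n le_rfl)]⟩)

lemma pow_le_measureReal_tubeEvent (h : CenteredSteps μ X L s) (hL : 0 < L) {n : ℕ}
    (hn : 1 ≤ n) {f : ℕ → ℝ} (hf0 : f 0 = 0)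
    (hf : ∀ k l, l ≤ n → |f (k + l) - f k| ≤ s / (32 * L) * √n) (K : ℕ) :
    (s / (128 * L ^ 2)) ^ K ≤ μ.real (tubeEvent X f (K * n) (48 * L * √n)) := by
  have hanchored : (s / (128 * L ^ 2)) ^ K ≤
      μ.real (anchoredTubeEvent X f (K * n) (12 * L * √n)) := by
    induction K with
    | zero =>
      have huniv : anchoredTubeEvent X f (0 * n) (12 * L * √n) = univ := by
        refine eq_univ_of_forall fun ω => ?_
        have hstart : |walk X 0 ω - f 0| = 0 := by rw [walk_zero, hf0, sub_zero, abs_zero]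
        rw [zero_mul]
        refine ⟨fun k hk => ?_, hstart.trans_le (by positivity)⟩
        rw [Nat.le_zero.1 hk]
        exact hstart.trans_le (by positivity)
      rw [huniv, probReal_univ, pow_zero]
    | succ K ih =>
      rw [pow_succ, Nat.succ_mul]
      exact (mul_le_mul_of_nonneg_right ih
        (div_nonneg h.variance_nonneg (by positivity))).trans
        (h.measureReal_anchoredTubeEvent_add_ge hL hn (hf (K * n)))
  refine hanchored.trans (measureReal_mono (inter_subset_left.trans_eq ?_))
  congr 1
  ring

end CenteredSteps

/-! ### Valleys of a path -/

/-- The path `w` has on `[0, N]` a valley of scale `j` with (first) bottom `b`: its depth is between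
`3.1 j` and `3.9 j`, the path never rises by more than `0.2 j` on the way down, and ends at height
at least `1.1 j`. The margins leave room for a starting point at height up to `0.01 j`. -/
structure IsValley (w : ℕ → ℝ) (N b : ℕ) (j : ℝ) : Prop where
  bottom_le : b ≤ N
  le_bottom : -3.9 * j ≤ w b
  bottom_le_neg : w b ≤ -3.1 * j
  bottom_lt : ∀ k < b, w b < w k
  rise_le : ∀ x y, x ≤ y → y ≤ b → w y - w x ≤ 0.2 * j
  le_end : 1.1 * j ≤ w N
  bottom_min : ∀ k ≤ N, w b ≤ w k

/-- On `[0, N]`, the path `w` exceeds its value at `b` by more than `h` at distance `n` or more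
from `b`. -/
def IsSteepFrom (w : ℕ → ℝ) (N b n : ℕ) (h : ℝ) : Prop :=
  (∀ k ≤ b, n ≤ k → h < w (b - k) - w b) ∧ ∀ k, b + k ≤ N → n ≤ k → h < w (b + k) - w b

/-- The path `w`, read away from the origin on the left half-line, sinks to `-0.18 j`, then climbs
to `1.1 j` at time `N`, with small fluctuations in both phases. -/
structure IsLeftValley (w : ℕ → ℝ) (N : ℕ) (j : ℝ) : Prop where
  exists_le : ∃ k ≤ N, w k ≤ -0.18 * j ∧ ∀ i ≤ k, w i ≤ 0.1 * j
  le_end : 1.1 * j ≤ w N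
  drop_le : ∀ x y, x ≤ y → y ≤ N → w x - w y ≤ 0.25 * j

/-- The V-shaped path of slope `σ` starting at `0` and of depth `y`. -/
def vShape (σ y : ℝ) (k : ℕ) : ℝ := |σ * k - y| - y

lemma vShape_zero (σ : ℝ) {y : ℝ} (hy : 0 ≤ y) : vShape σ y 0 = 0 := by
  rw [vShape, Nat.cast_zero, mul_zero, zero_sub, abs_neg, abs_of_nonneg hy, sub_self]

lemma abs_vShape_add_sub_le {σ : ℝ} (hσ : 0 ≤ σ) (y : ℝ) (k l : ℕ) :
    |vShape σ y (k + l) - vShape σ y k| ≤ σ * l := by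
  calc |vShape σ y (k + l) - vShape σ y k| ≤ |σ * (k + l : ℕ) - y - (σ * k - y)| := by
        rw [vShape, vShape, sub_sub_sub_cancel_right]
        exact abs_abs_sub_abs_le _ _
    _ = |σ * l| := by congr 1; push_cast; ring
    _ = σ * l := abs_of_nonneg (by positivity)

lemma exists_abs_mul_sub_le {σ y : ℝ} (hσ : 0 < σ) (hy : 0 ≤ y) {N : ℕ} (hN : y ≤ σ * N) :
    ∃ k ≤ N, |σ * k - y| ≤ σ := by
  refine ⟨⌊y / σ⌋₊, Nat.floor_le_of_le (by rwa [div_le_iff₀' hσ]), ?_⟩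
  have hle := (le_div_iff₀ hσ).1 (Nat.floor_le (show 0 ≤ y / σ by positivity))
  have hlt := (div_lt_iff₀ hσ).1 (Nat.lt_floor_add_one (y / σ))
  rw [abs_le]
  constructor <;> linarith

lemma exists_first_argmin (w : ℕ → ℝ) (N : ℕ) :
    ∃ b ≤ N, (∀ k ≤ N, w b ≤ w k) ∧ ∀ k < b, w b < w k := by
  classical
  have hex : ∃ b, b ≤ N ∧ ∀ k ≤ N, w b ≤ w k := by
    simpa [Nat.lt_succ_iff] using
      Finset.exists_min_image (Finset.range (N + 1)) w Finset.nonempty_range_add_one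
  obtain ⟨hb, hmin⟩ := Nat.find_spec hex
  refine ⟨Nat.find hex, hb, hmin, fun k hk => not_le.1 fun hle => ?_⟩
  exact Nat.find_min hex hk ⟨hk.le.trans hb, fun m hm => hle.trans (hmin m hm)⟩

section Tube

variable {w : ℕ → ℝ} {N : ℕ} {j σ : ℝ}

lemma exists_isValley_of_tube (hj : 0 < j) (hσ : 0 < σ) (hσj : σ ≤ 0.01 * j)
    (hN : 9 * j ≤ σ * N) (hw : ∀ k ≤ N, |w k - vShape σ (3.5 * j) k| ≤ 0.01 * j) :
    ∃ b, IsValley w N b j := by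
  unfold vShape at hw
  obtain ⟨k₀, hk₀N, hk₀⟩ :=
    exists_abs_mul_sub_le hσ (y := 3.5 * j) (by positivity) (N := N) (by linarith)
  obtain ⟨b, hbN, hmin, hfirst⟩ := exists_first_argmin w N
  have hb := abs_le.1 (hw b hbN)
  have hbk₀ : w b ≤ w k₀ := hmin k₀ hk₀N
  have hb_near : |σ * b - 3.5 * j| ≤ 0.03 * j := by linarith [(abs_le.1 (hw k₀ hk₀N)).2]
  have hb_nonneg := abs_nonneg (σ * b - 3.5 * j)
  refine ⟨b, hbN, by linarith, by linarith, hfirst, fun x y hxy hyb => ?_, ?_, hmin⟩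
  · have hx := abs_le.1 (hw x (hxy.trans (hyb.trans hbN)))
    have hy := abs_le.1 (hw y (hyb.trans hbN))
    have hσxy : σ * x ≤ σ * y := by gcongr
    have hσyb : σ * y ≤ σ * b := by gcongr
    have hrise : |σ * y - 3.5 * j| ≤ |σ * x - 3.5 * j| + 0.03 * j :=
      abs_le.2 ⟨by linarith [neg_abs_le (σ * x - 3.5 * j)],
        by linarith [abs_nonneg (σ * x - 3.5 * j), (abs_le.1 hb_near).2]⟩
    linarith
  · linarith [(abs_le.1 (hw N le_rfl)).1, le_abs_self (σ * N - 3.5 * j)]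

lemma isLeftValley_of_tube (hj : 0 < j) (hσ : 0 < σ) (hσj : σ ≤ 0.01 * j)
    (hN : 9 * j ≤ σ * N) (hw : ∀ k ≤ N, |w k - vShape σ (0.2 * j) k| ≤ 0.01 * j) :
    IsLeftValley w N j := by
  unfold vShape at hw
  obtain ⟨k₀, hk₀N, hk₀⟩ :=
    exists_abs_mul_sub_le hσ (y := 0.2 * j) (by positivity) (N := N) (by linarith)
  refine ⟨⟨k₀, hk₀N, by linarith [(abs_le.1 (hw k₀ hk₀N)).2], fun i hi => ?_⟩, ?_,
    fun x y hxy hyN => ?_⟩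
  · have hσi : σ * i ≤ σ * k₀ := by gcongr
    have hσi_nonneg : 0 ≤ σ * i := by positivity
    have hnear : |σ * i - 0.2 * j| ≤ 0.2 * j + σ :=
      abs_le.2 ⟨by linarith, by linarith [(abs_le.1 hk₀).2]⟩
    linarith [(abs_le.1 (hw i (hi.trans hk₀N))).2]
  · linarith [(abs_le.1 (hw N le_rfl)).1, le_abs_self (σ * N - 0.2 * j)]
  · have hσxy : σ * x ≤ σ * y := by gcongr
    have hσx_nonneg : 0 ≤ σ * x := by positivity
    have hdrop : |σ * x - 0.2 * j| ≤ |σ * y - 0.2 * j| + 0.2 * j :=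
      abs_le.2 ⟨by linarith [abs_nonneg (σ * y - 0.2 * j)],
        by linarith [le_abs_self (σ * y - 0.2 * j)]⟩
    linarith [(abs_le.1 (hw x (hxy.trans hyN))).2, (abs_le.1 (hw y hyN)).1]

end Tube

lemma IsValley.dipsThenClimbs_of_not_isSteepFrom {w y z : ℕ → ℝ} {N b n : ℕ} {j h : ℝ}
    (hw : IsValley w N b j) (hj : 0 < j) (hw0 : w 0 = 0) (hy : ∀ k ≤ b, y k = w (b - k) - w b)
    (hz : ∀ k, z k = w (b + k) - w b) (hsteep : ¬IsSteepFrom w N b n h) :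
    (DipsThenClimbs y n h (3 * j) b ∧ DipsThenClimbs z 0 0 (3 * j) (N - b)) ∨
      (DipsThenClimbs y 0 0 (3 * j) b ∧ DipsThenClimbs z n h (3 * j) (N - b)) := by
  have hbN := hw.bottom_le
  have hdepth := hw.bottom_le_neg
  have hend := hw.le_end
  have hy_nonneg : ∀ i ≤ b, 0 ≤ y i := fun i hi => by
    rw [hy i hi]; linarith [hw.bottom_min (b - i) (by omega)]
  have hz_nonneg : ∀ i ≤ N - b, 0 ≤ z i := fun i hi => by
    rw [hz i]; linarith [hw.bottom_min (b + i) (by omega)]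
  have hy_climb : 3 * j ≤ y b := by rw [hy b le_rfl, Nat.sub_self, hw0]; linarith
  have hz_climb : 3 * j ≤ z (N - b) := by rw [hz, Nat.add_sub_cancel' hbN]; linarith
  have hy_dips : ∀ {m g}, (∃ k ≤ b, m ≤ k ∧ y k ≤ g) → DipsThenClimbs y m g (3 * j) b :=
    fun h => ⟨b, le_rfl, hy_climb, hy_nonneg, h⟩
  have hz_dips : ∀ {m g}, (∃ k ≤ N - b, m ≤ k ∧ z k ≤ g) →
      DipsThenClimbs z m g (3 * j) (N - b) := fun h => ⟨N - b, le_rfl, hz_climb, hz_nonneg, h⟩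
  have hy0 : y 0 ≤ 0 := by rw [hy 0 (Nat.zero_le b), Nat.sub_zero, sub_self]
  have hz0 : z 0 ≤ 0 := by rw [hz, add_zero, sub_self]
  rcases not_and_or.1 hsteep with hleft | hright
  · push Not at hleft
    obtain ⟨k, hk, hnk, hkh⟩ := hleft
    exact Or.inl ⟨hy_dips ⟨k, hk, hnk, (hy k hk).trans_le hkh⟩,
      hz_dips ⟨0, Nat.zero_le _, le_rfl, hz0⟩⟩
  · push Not at hright
    obtain ⟨k, hk, hnk, hkh⟩ := hright
    exact Or.inr ⟨hy_dips ⟨0, Nat.zero_le _, le_rfl, hy0⟩,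
      hz_dips ⟨k, by omega, hnk, (hz k).trans_le hkh⟩⟩

section Measurability

variable {Ω : Type*} {_ : MeasurableSpace Ω} {w : ℕ → Ω → ℝ} {N : ℕ} {j : ℝ}

lemma measurableSet_isValley (hw : ∀ k ≤ N, Measurable (w k)) {b : ℕ} (hb : b ≤ N) :
    MeasurableSet {ω | IsValley (fun k => w k ω) N b j} := by
  have hiff : {ω | IsValley (fun k => w k ω) N b j} =
      {ω | -3.9 * j ≤ w b ω} ∩ {ω | w b ω ≤ -3.1 * j} ∩ {ω | ∀ k < b, w b ω < w k ω} ∩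
      {ω | ∀ y ≤ b, ∀ x ≤ y, w y ω - w x ω ≤ 0.2 * j} ∩ {ω | 1.1 * j ≤ w N ω} ∩
      {ω | ∀ k ≤ N, w b ω ≤ w k ω} := by
    ext ω
    exact ⟨fun h => ⟨⟨⟨⟨⟨h.2, h.3⟩, h.4⟩, fun y hy x hx => h.5 x y hx hy⟩, h.6⟩, h.7⟩,
      fun ⟨⟨⟨⟨⟨h2, h3⟩, h4⟩, h5⟩, h6⟩, h7⟩ =>
        ⟨hb, h2, h3, h4, fun x y hx hy => h5 y hy x hx, h6, h7⟩⟩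
  have hwb := hw b hb
  rw [hiff]
  refine (((((measurableSet_le measurable_const hwb).inter
    (measurableSet_le hwb measurable_const)).inter ?_).inter ?_).inter
    (measurableSet_le measurable_const (hw N le_rfl))).inter ?_
  · exact measurableSet_forall_imp fun k hk => measurableSet_lt hwb (hw k (hk.le.trans hb))
  · exact measurableSet_forall_imp fun y hy => measurableSet_forall_imp fun x hx =>
      measurableSet_le ((hw y (hy.trans hb)).sub (hw x (hx.trans (hy.trans hb)))) measurable_const
  · exact measurableSet_forall_imp fun k hk => measurableSet_le hwb (hw k hk)

lemma measurableSet_isSteepFrom (hw : ∀ k ≤ N, Measurable (w k)) {b : ℕ} (hb : b ≤ N) (n : ℕ)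
    (h : ℝ) : MeasurableSet {ω | IsSteepFrom (fun k => w k ω) N b n h} := by
  simp only [IsSteepFrom, ofPred_and, ofPred_forall]
  exact (MeasurableSet.iInter fun k => .iInter fun _ => .iInter fun _ =>
    measurableSet_lt measurable_const ((hw (b - k) (by omega)).sub (hw b hb))).inter <|
    .iInter fun k => .iInter fun hk => .iInter fun _ =>
      measurableSet_lt measurable_const ((hw (b + k) hk).sub (hw b hb))

lemma measurableSet_isLeftValley (hw : ∀ k ≤ N, Measurable (w k)) :
    MeasurableSet {ω | IsLeftValley (fun k => w k ω) N j} := by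
  have hiff : {ω | IsLeftValley (fun k => w k ω) N j} =
      {ω | ∃ k ≤ N, w k ω ≤ -0.18 * j ∧ ∀ i ≤ k, w i ω ≤ 0.1 * j} ∩ {ω | 1.1 * j ≤ w N ω} ∩
      {ω | ∀ y ≤ N, ∀ x ≤ y, w x ω - w y ω ≤ 0.25 * j} := by
    ext ω
    exact ⟨fun h => ⟨⟨h.1, h.2⟩, fun y hy x hx => h.3 x y hx hy⟩,
      fun ⟨⟨h1, h2⟩, h3⟩ => ⟨h1, h2, fun x y hx hy => h3 y hy x hx⟩⟩
  rw [hiff]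
  refine (MeasurableSet.inter ?_ (measurableSet_le measurable_const (hw N le_rfl))).inter ?_
  · exact measurableSet_exists_and fun k hk =>
      (measurableSet_le (hw k hk) measurable_const).inter <|
        measurableSet_forall_imp fun i hi =>
          measurableSet_le (hw i (hi.trans hk)) measurable_const
  · exact measurableSet_forall_imp fun y hy => measurableSet_forall_imp fun x hx =>
      measurableSet_le ((hw x (hx.trans hy)).sub (hw y hy)) measurable_const

end Measurability

/-! ### Valleys of a random potential -/

/-- `V` is the potential on `ℤ` with increments `X`, normalized to vanish at the origin. -/
structure IsPotential {Ω : Type*} (X V : ℤ → Ω → ℝ) : Prop where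
  zero : ∀ ω, V 0 ω = 0
  add_one : ∀ x ω, V (x + 1) ω = V x ω + X (x + 1) ω

/-- The potential seen from `t`, to the right, has a valley of scale `j` with bottom `t + b`, and
exceeds its minimum by more than `h i` at distance `n i` from the bottom, for all `i < I`. -/
def valleyEvent {Ω : Type*} (V : ℤ → Ω → ℝ) (t : ℤ) (N b : ℕ) (j : ℝ) (I : ℕ) (n : ℕ → ℕ)
    (h : ℕ → ℝ) : Set Ω :=
  {ω | IsValley (fun k => V (t + k) ω - V t ω) N b j ∧
    ∀ i < I, IsSteepFrom (fun k => V (t + k) ω - V t ω) N b (n i) (h i)}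

/-- The potential seen from `t`, to the left, has the shape `IsLeftValley`. -/
def leftValleyEvent {Ω : Type*} (V : ℤ → Ω → ℝ) (t : ℤ) (N : ℕ) (j : ℝ) : Set Ω :=
  {ω | IsLeftValley (fun k => V (t - k) ω - V t ω) N j}

namespace IsPotential

variable {Ω : Type*} {X V : ℤ → Ω → ℝ}

lemma sub_eq_walk_right (hV : IsPotential X V) (t : ℤ) (k : ℕ) (ω : Ω) :
    V (t + k) ω - V t ω = walk (fun i : ℕ => X (t + 1 + i)) k ω := by
  induction k with
  | zero => simp
  | succ k ih =>
    have hstep := hV.add_one (t + k) ω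
    rw [walk_succ, ← ih, Nat.cast_succ, ← add_assoc, hstep, add_right_comm t 1]
    ring

lemma sub_eq_walk_left (hV : IsPotential X V) (t : ℤ) (k : ℕ) (ω : Ω) :
    V (t - k) ω - V t ω = walk (fun (i : ℕ) ω => -X (t - i) ω) k ω := by
  induction k with
  | zero => simp
  | succ k ih =>
    have hstep := hV.add_one (t - (k + 1 : ℕ)) ω
    rw [show t - ((k + 1 : ℕ) : ℤ) + 1 = t - k by push_cast; ring] at hstep
    rw [walk_succ, ← ih, hstep]
    ring

lemma measurable_sub_right (hV : IsPotential X V) (t : ℤ) {k N : ℕ} (hk : k ≤ N) :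
    Measurable[coordSigma X (Ioc t (t + N))] fun ω => V (t + k) ω - V t ω := by
  simp only [hV.sub_eq_walk_right]
  refine (measurable_walk hk).mono (coordSigma_le_coordSigma fun i (hi : i < N) => ?_) le_rfl
  exact measurable_coordSigma ⟨by omega, by omega⟩

lemma measurable_sub_left (hV : IsPotential X V) (t : ℤ) {k N : ℕ} (hk : k ≤ N) :
    Measurable[coordSigma X (Ioc (t - N) t)] fun ω => V (t - k) ω - V t ω := by
  simp only [hV.sub_eq_walk_left]
  refine (measurable_walk hk).mono (coordSigma_le_coordSigma fun i (hi : i < N) => ?_) le_rfl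
  exact (measurable_coordSigma (X := X) (S := Ioc (t - N) t) ⟨by omega, by omega⟩).neg

lemma measurableSet_valleyEvent (hV : IsPotential X V) (t : ℤ) {N b : ℕ} (hb : b ≤ N) (j : ℝ)
    (I : ℕ) (n : ℕ → ℕ) (h : ℕ → ℝ) :
    MeasurableSet[coordSigma X (Ioc t (t + N))] (valleyEvent V t N b j I n h) :=
  (measurableSet_isValley (fun _ hk => hV.measurable_sub_right t hk) hb).inter <|
    measurableSet_forall_imp fun _ _ =>
      measurableSet_isSteepFrom (fun _ hk => hV.measurable_sub_right t hk) hb _ _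

lemma measurableSet_leftValleyEvent (hV : IsPotential X V) (t : ℤ) (N : ℕ) (j : ℝ) :
    MeasurableSet[coordSigma X (Ioc (t - N) t)] (leftValleyEvent V t N j) :=
  measurableSet_isLeftValley fun _ hk => hV.measurable_sub_left t hk

end IsPotential

namespace CenteredSteps

variable {Ω : Type*} {mΩ : MeasurableSpace Ω} {μ : Measure Ω} {L s : ℝ}

lemma right {X : ℤ → Ω → ℝ} (hX : CenteredSteps μ X L s) (t : ℤ) :
    CenteredSteps μ (fun i : ℕ => X (t + 1 + i)) L s :=
  hX.comp fun _ _ h => Nat.cast_injective (add_left_cancel h)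

lemma left {X : ℤ → Ω → ℝ} (hX : CenteredSteps μ X L s) (t : ℤ) :
    CenteredSteps μ (fun (i : ℕ) ω => -X (t - i) ω) L s :=
  (hX.comp fun _ _ h => Nat.cast_injective (sub_right_injective h)).neg

lemma measureReal_dipsThenClimbs_left_inter_right {X V : ℤ → Ω → ℝ}
    (hX : CenteredSteps μ X L s) (hV : IsPotential X V) (t : ℤ) (n n' : ℕ) (h h' H H' : ℝ)
    (N N' : ℕ) :
    μ.real ({ω | DipsThenClimbs (fun k => V (t - k) ω - V t ω) n h H N} ∩
        {ω | DipsThenClimbs (fun k => V (t + k) ω - V t ω) n' h' H' N'}) =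
      μ.real {ω | DipsThenClimbs (fun k => walk (fun (i : ℕ) ω => -X (t - i) ω) k ω) n h H N} *
        μ.real
          {ω | DipsThenClimbs (fun k => walk (fun i : ℕ => X (t + 1 + i)) k ω) n' h' H' N'} := by
  simp only [← hV.sub_eq_walk_left, ← hV.sub_eq_walk_right]
  exact measureReal_inter_of_coordSigma hX.measurable hX.indep
    (Set.disjoint_left.2 fun _ hx hx' => hx'.1.not_ge hx.2)
    (measurableSet_dipsThenClimbs fun k hk => hV.measurable_sub_left t hk)
    (measurableSet_dipsThenClimbs fun k hk => hV.measurable_sub_right t hk)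

variable [IsProbabilityMeasure μ]

lemma pow_le_measureReal_vShape {X : ℕ → Ω → ℝ} (hX : CenteredSteps μ X L s) (hL : 0 < L) {m : ℕ}
    (hm : 1 ≤ m) {y : ℝ} (hy : 0 ≤ y) (K : ℕ) :
    (s / (128 * L ^ 2)) ^ K ≤
      μ.real (tubeEvent X (vShape (s / (32 * L) / √m) y) (K * m) (48 * L * √m)) := by
  have hs := hX.variance_nonneg
  refine hX.pow_le_measureReal_tubeEvent hL hm (vShape_zero _ hy) (fun k l hl => ?_) K
  calc |vShape (s / (32 * L) / √m) y (k + l) - vShape (s / (32 * L) / √m) y k|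
      ≤ s / (32 * L) / √m * l := abs_vShape_add_sub_le (by positivity) y k l
    _ ≤ s / (32 * L) / √m * m := by gcongr
    _ = s / (32 * L) * √m := by rw [div_mul_eq_mul_div, mul_div_assoc, Real.div_sqrt]

lemma slope_le {X : ℕ → Ω → ℝ} (hX : CenteredSteps μ X L s) (hL : 0 < L) {m : ℕ} (hm : 1 ≤ m)
    {η : ℝ} (hmη : 48 * L * √m ≤ η) : s / (32 * L) / √m ≤ η := by
  have hm1 : 1 ≤ √(m : ℝ) := Real.one_le_sqrt.2 (by exact_mod_cast hm)
  have hsL : s / (32 * L) ≤ L := by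
    rw [div_le_iff₀ (by positivity)]
    nlinarith [hX.variance_le_sq, sq_nonneg L]
  have hs : 0 ≤ s / (32 * L) := div_nonneg hX.variance_nonneg (by positivity)
  calc s / (32 * L) / √m ≤ s / (32 * L) := div_le_self hs hm1
    _ ≤ 48 * L * √m := by nlinarith
    _ ≤ η := hmη

variable {X V : ℤ → Ω → ℝ}

/-- Seen from its bottom, a valley consists of two independent walks which stay nonnegative up to
level `3 j`; if it is not steep, one of them returns to a low level after time `n`. -/
lemma measureReal_isValley_not_isSteepFrom_le (hX : CenteredSteps μ X L s) (hs : 0 < s)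
    (hV : IsPotential X V) (t : ℤ) {N b : ℕ} {j h : ℝ} {n : ℕ} (hj : 0 < j) (hn : 1 ≤ n)
    (hh : 0 ≤ h) (hhj : 2 * h ≤ 3 * j) :
    μ.real {ω | IsValley (fun k => V (t + k) ω - V t ω) N b j ∧
      ¬IsSteepFrom (fun k => V (t + k) ω - V t ω) N b n h} ≤
      4 * L * persistConst L s / (9 * j ^ 2) * ((h + L) / √n) := by
  set dipL : ℕ → ℝ → Set Ω := fun n h =>
    {ω | DipsThenClimbs (fun k => V (t + b - k) ω - V (t + b) ω) n h (3 * j) b}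
  set dipR : ℕ → ℝ → Set Ω := fun n h =>
    {ω | DipsThenClimbs (fun k => V (t + b + k) ω - V (t + b) ω) n h (3 * j) (N - b)}
  set bound := persistConst L s * (2 * (h + L)) / (√n * (3 * j)) with hbound_def
  have hj3 : 0 < 3 * j := by positivity
  have hL : 0 ≤ L := hX.bound_nonneg
  have hright := hX.right (t + b)
  have hleft := hX.left (t + b)
  have hbound : 0 ≤ bound :=
    measureReal_nonneg.trans (hright.measureReal_dipsThenClimbs_le hs hn 0 hh hj3 hhj)
  have hsub : {ω | IsValley (fun k => V (t + k) ω - V t ω) N b j ∧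
      ¬IsSteepFrom (fun k => V (t + k) ω - V t ω) N b n h} ⊆
      dipL n h ∩ dipR 0 0 ∪ dipL 0 0 ∩ dipR n h := fun ω ⟨hvalley, hsteep⟩ => by
    refine hvalley.dipsThenClimbs_of_not_isSteepFrom hj (by simp) (fun k hk => ?_) (fun k => ?_)
      hsteep
    · rw [Nat.cast_sub hk]; ring_nf
    · push_cast; ring_nf
  calc _ ≤ μ.real (dipL n h ∩ dipR 0 0) + μ.real (dipL 0 0 ∩ dipR n h) :=
        (measureReal_mono hsub).trans (measureReal_union_le _ _)
    _ ≤ bound * (L / (3 * j)) + L / (3 * j) * bound := by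
        simp only [dipL, dipR, hX.measureReal_dipsThenClimbs_left_inter_right hV]
        gcongr
        · exact hleft.measureReal_dipsThenClimbs_le hs hn b hh hj3 hhj
        · exact hright.measureReal_dipsThenClimbs_zero_le (N - b) hj3
        · exact hleft.measureReal_dipsThenClimbs_zero_le b hj3
        · exact hright.measureReal_dipsThenClimbs_le hs hn (N - b) hh hj3 hhj
    _ = 4 * L * persistConst L s / (9 * j ^ 2) * ((h + L) / √n) := by rw [hbound_def]; ring

lemma pow_le_measureReal_leftValleyEvent (hX : CenteredSteps μ X L s) (hs : 0 < s) (hL : 0 < L)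
    (hV : IsPotential X V) (t : ℤ) {m K : ℕ} {j : ℝ} (hj : 0 < j) (hm : 1 ≤ m)
    (hmj : 48 * L * √m ≤ 0.01 * j) (hKj : 9 * j ≤ s / (32 * L) / √m * (K * m : ℕ)) :
    (s / (128 * L ^ 2)) ^ K ≤ μ.real (leftValleyEvent V t (K * m) j) := by
  refine ((hX.left t).pow_le_measureReal_vShape hL hm (y := 0.2 * j) (by positivity) K).trans
    (measureReal_mono fun ω hω => ?_)
  refine isLeftValley_of_tube hj (by positivity) ((hX.right t).slope_le hL hm hmj) hKj
    fun k hk => ?_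
  rw [hV.sub_eq_walk_left]
  exact (hω k hk).trans hmj

lemma sub_le_measureReal_iUnion_valleyEvent (hX : CenteredSteps μ X L s) (hs : 0 < s) (hL : 0 < L)
    (hV : IsPotential X V) (t : ℤ) {m K : ℕ} {j : ℝ} (hj : 0 < j) (hm : 1 ≤ m)
    (hmj : 48 * L * √m ≤ 0.01 * j) (hKj : 9 * j ≤ s / (32 * L) / √m * (K * m : ℕ)) {I : ℕ}
    {n : ℕ → ℕ} {h : ℕ → ℝ} (hn : ∀ i < I, 1 ≤ n i) (hh : ∀ i < I, 0 ≤ h i)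
    (hhj : ∀ i < I, 2 * h i ≤ 3 * j) :
    (s / (128 * L ^ 2)) ^ K - (K * m + 1 : ℕ) *
        (4 * L * persistConst L s / (9 * j ^ 2) * ∑ i ∈ Finset.range I, (h i + L) / √(n i)) ≤
      μ.real (⋃ b ∈ Finset.range (K * m + 1), valleyEvent V t (K * m) b j I n h) := by
  set fail : ℕ → ℕ → Set Ω := fun b i => {ω | IsValley (fun k => V (t + k) ω - V t ω) (K * m) b j ∧
    ¬IsSteepFrom (fun k => V (t + k) ω - V t ω) (K * m) b (n i) (h i)}
  have hsub : tubeEvent (fun i : ℕ => X (t + 1 + i)) (vShape (s / (32 * L) / √m) (3.5 * j)) (K * m)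
      (48 * L * √m) ⊆ (⋃ b ∈ Finset.range (K * m + 1), valleyEvent V t (K * m) b j I n h) ∪
        ⋃ b ∈ Finset.range (K * m + 1), ⋃ i ∈ Finset.range I, fail b i := by
    intro ω hω
    obtain ⟨b, hb⟩ := exists_isValley_of_tube (w := fun k => V (t + k) ω - V t ω) hj
      (by positivity) ((hX.right t).slope_le hL hm hmj) hKj fun k hk => by
        rw [hV.sub_eq_walk_right]
        exact (hω k hk).trans hmj
    have hbN : b ∈ Finset.range (K * m + 1) := Finset.mem_range_succ_iff.2 hb.bottom_le
    by_cases hsteep : ∀ i < I, IsSteepFrom (fun k => V (t + k) ω - V t ω) (K * m) b (n i) (h i)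
    · exact Or.inl (mem_biUnion hbN ⟨hb, hsteep⟩)
    · push Not at hsteep
      obtain ⟨i, hi, hsteep⟩ := hsteep
      exact Or.inr (mem_biUnion hbN (mem_biUnion (Finset.mem_range.2 hi) ⟨hb, hsteep⟩))
  have hfail : μ.real (⋃ b ∈ Finset.range (K * m + 1), ⋃ i ∈ Finset.range I, fail b i) ≤
      ∑ _b ∈ Finset.range (K * m + 1), ∑ i ∈ Finset.range I,
        4 * L * persistConst L s / (9 * j ^ 2) * ((h i + L) / √(n i)) := by
    refine (measureReal_biUnion_finset_le _ _).trans (Finset.sum_le_sum fun b _ => ?_)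
    refine (measureReal_biUnion_finset_le _ _).trans (Finset.sum_le_sum fun i hi => ?_)
    rw [Finset.mem_range] at hi
    exact hX.measureReal_isValley_not_isSteepFrom_le hs hV t hj (hn i hi) (hh i hi) (hhj i hi)
  rw [Finset.sum_const, Finset.card_range, nsmul_eq_mul, ← Finset.mul_sum] at hfail
  linarith [(hX.right t).pow_le_measureReal_vShape hL hm (y := 3.5 * j) (by positivity) K,
    (measureReal_mono (μ := μ) hsub).trans (measureReal_union_le _ _)]

end CenteredSteps

/-! ### Scales -/

section Scales

variable {α ε' j : ℝ}

lemma gamScale_zero : gamScale α j 0 = j := by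
  rw [gamScale, pow_zero, Real.rpow_one]

lemma gamScale_succ (hj : 0 ≤ j) (i : ℕ) :
    gamScale α j (i + 1) = gamScale α j i ^ (1 - α) := by
  rw [gamScale, gamScale, ← Real.rpow_mul hj, pow_succ]

lemma gamScale_pos (hj : 0 < j) (i : ℕ) : 0 < gamScale α j i :=
  Real.rpow_pos_of_pos hj _

lemma one_le_gamScale (hα1 : α < 1) (hj : 1 ≤ j) (i : ℕ) : 1 ≤ gamScale α j i :=
  Real.one_le_rpow hj (pow_nonneg (sub_nonneg.2 hα1.le) _)

lemma gamScale_antitone (hα0 : 0 < α) (hα1 : α < 1) (hj : 1 ≤ j) : Antitone (gamScale α j) :=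
  fun _ _ hik => Real.rpow_le_rpow_of_exponent_le hj <|
    pow_le_pow_of_le_one (by linarith) (by linarith) hik

lemma gamScale_le_self (hα0 : 0 < α) (hα1 : α < 1) (hj : 1 ≤ j) (i : ℕ) : gamScale α j i ≤ j :=
  (gamScale_antitone hα0 hα1 hj (Nat.zero_le i)).trans_eq gamScale_zero

lemma tendsto_gamScale (hα0 : 0 < α) (hα1 : α < 1) (hj : 0 < j) :
    Tendsto (gamScale α j) atTop (nhds 1) := by
  have hexp := tendsto_pow_atTop_nhds_zero_of_lt_one (r := 1 - α) (by linarith) (by linarith)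
  rw [← Real.rpow_zero j]
  exact ((Real.continuous_const_rpow hj.ne').tendsto 0).comp hexp

/-- The value `(log log j)^((1-α)/(2+ε'))` below which the sequence of scales `γ_i(j)` is
stopped. -/
noncomputable def scaleThreshold (α ε' j : ℝ) : ℝ :=
  Real.log (Real.log j) ^ ((1 - α) / (2 + ε'))

lemma tendsto_scaleThreshold (hα1 : α < 1) (hε' : 0 < ε') :
    Tendsto (scaleThreshold α ε') atTop atTop :=
  (tendsto_rpow_atTop (div_pos (by linarith) (by linarith))).comp
    (Real.tendsto_log_atTop.comp Real.tendsto_log_atTop)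

lemma eventually_scaleThreshold_lt (hα0 : 0 < α) (hε' : 0 < ε') :
    ∀ᶠ j in atTop, scaleThreshold α ε' j < j := by
  filter_upwards [(Real.tendsto_log_atTop.comp Real.tendsto_log_atTop).eventually_ge_atTop 1,
    eventually_gt_atTop 1] with j (hloglog : 1 ≤ Real.log (Real.log j)) hj
  calc scaleThreshold α ε' j ≤ Real.log (Real.log j) ^ (1 : ℝ) := by
        refine Real.rpow_le_rpow_of_exponent_le hloglog ?_
        rw [div_le_one (by linarith)]
        linarith
    _ < Real.log j := by
        rw [Real.rpow_one]
        linarith [Real.log_le_sub_one_of_pos (Real.log_pos hj)]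
    _ < j := by linarith [Real.log_le_sub_one_of_pos (zero_lt_one.trans hj)]

lemma gamScale_bigM_le (hα0 : 0 < α) (hα1 : α < 1) (hj : 0 < j) (hR : 1 < scaleThreshold α ε' j) :
    gamScale α j (bigM α ε' j) ≤ scaleThreshold α ε' j := by
  have hne : {n : ℕ | gamScale α j n ≤ scaleThreshold α ε' j}.Nonempty :=
    (((tendsto_gamScale hα0 hα1 hj).eventually_lt_const hR).exists).imp fun _ => le_of_lt
  exact Nat.sInf_mem hne

lemma scaleThreshold_lt_gamScale {i : ℕ} (hi : i < bigM α ε' j) :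
    scaleThreshold α ε' j < gamScale α j i :=
  not_le.1 (Nat.notMem_of_lt_sInf (s := {n : ℕ | gamScale α j n ≤ scaleThreshold α ε' j}) hi)

lemma bigM_pos (hα0 : 0 < α) (hα1 : α < 1) (hj : 0 < j) (hR : 1 < scaleThreshold α ε' j)
    (hRj : scaleThreshold α ε' j < j) : 0 < bigM α ε' j := by
  refine Nat.pos_of_ne_zero fun h0 => hRj.not_ge ?_
  simpa only [h0, gamScale_zero] using gamScale_bigM_le hα0 hα1 hj hR

lemma gamScale_bigM_sub_one_rpow_le (hα0 : 0 < α) (hα1 : α < 1) (hε' : 0 < ε') (hj : 0 < j)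
    (hR : 1 < scaleThreshold α ε' j) (hRj : scaleThreshold α ε' j < j)
    (hloglog : 0 ≤ Real.log (Real.log j)) :
    gamScale α j (bigM α ε' j - 1) ^ (2 + ε') ≤ Real.log (Real.log j) := by
  set γ := gamScale α j (bigM α ε' j - 1) with hγ_def
  have hγ : 0 < γ := gamScale_pos hj _
  have hα' : 0 < 1 - α := by linarith
  have hε'' : 0 < 2 + ε' := by linarith
  have hle : γ ^ (1 - α) ≤ scaleThreshold α ε' j := by
    rw [hγ_def, ← gamScale_succ hj.le, Nat.sub_add_cancel (bigM_pos hα0 hα1 hj hR hRj)]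
    exact gamScale_bigM_le hα0 hα1 hj hR
  calc γ ^ (2 + ε') = (γ ^ (1 - α)) ^ ((2 + ε') / (1 - α)) := by
        rw [← Real.rpow_mul hγ.le, mul_div_cancel₀ _ hα'.ne']
    _ ≤ scaleThreshold α ε' j ^ ((2 + ε') / (1 - α)) := by gcongr
    _ = Real.log (Real.log j) := by
        rw [scaleThreshold, ← Real.rpow_mul hloglog, div_mul_div_cancel₀ hε''.ne',
          div_self hα'.ne', Real.rpow_one]

lemma mul_pow_le_gamScale (hα0 : 0 < α) (hj : 0 < j) {R : ℝ} (hR : 0 < R) {M : ℕ}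
    (hM : ∀ i < M, R < gamScale α j i) (k : ℕ) (hk : k < M) :
    R * (R ^ α) ^ k ≤ gamScale α j (M - 1 - k) := by
  induction k with
  | zero => simpa using (hM (M - 1) (by omega)).le
  | succ k ih =>
    set γ := gamScale α j (M - 1 - (k + 1)) with hγ_def
    have hRγ : R < γ := hM _ (by omega)
    have hγ : 0 < γ := hR.trans hRγ
    have hsucc : gamScale α j (M - 1 - k) = γ ^ (1 - α) := by
      rw [hγ_def, ← gamScale_succ hj.le]
      congr 1
      omega
    calc R * (R ^ α) ^ (k + 1) = R * (R ^ α) ^ k * R ^ α := by ring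
      _ ≤ γ ^ (1 - α) * γ ^ α := by
          gcongr
          exact (ih (by omega)).trans_eq hsucc
      _ = γ := by rw [← Real.rpow_add hγ, sub_add_cancel, Real.rpow_one]

lemma sum_gamScale_rpow_neg_le (hα0 : 0 < α) (hα1 : α < 1) {κ : ℝ} (hκ : 0 < κ) (hj : 0 < j)
    (hR : 1 < scaleThreshold α ε' j) :
    ∑ i ∈ Finset.range (bigM α ε' j), gamScale α j i ^ (-κ) ≤
      scaleThreshold α ε' j ^ (-κ) * (1 - scaleThreshold α ε' j ^ (-(α * κ)))⁻¹ := by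
  set R := scaleThreshold α ε' j
  set r := R ^ (-(α * κ))
  have hR0 : 0 < R := by linarith
  have hr0 : 0 ≤ r := by positivity
  have hr1 : r < 1 := Real.rpow_lt_one_of_one_lt_of_neg hR (neg_neg_of_pos (by positivity))
  have hterm : ∀ k < bigM α ε' j,
      gamScale α j (bigM α ε' j - 1 - k) ^ (-κ) ≤ R ^ (-κ) * r ^ k := fun k hk => by
    calc _ ≤ (R * (R ^ α) ^ k) ^ (-κ) :=
          Real.rpow_le_rpow_of_nonpos (by positivity)
            (mul_pow_le_gamScale hα0 hj hR0 (fun _ => scaleThreshold_lt_gamScale) k hk)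
            (by linarith)
      _ = R ^ (-κ) * r ^ k := by
          rw [Real.mul_rpow hR0.le (by positivity), ← Real.rpow_natCast, ← Real.rpow_natCast,
            ← Real.rpow_mul hR0.le, ← Real.rpow_mul hR0.le, ← Real.rpow_mul hR0.le]
          congr 2
          ring
  calc _ = ∑ k ∈ Finset.range (bigM α ε' j), gamScale α j (bigM α ε' j - 1 - k) ^ (-κ) :=
        (Finset.sum_range_reflect _ _).symm
    _ ≤ ∑ k ∈ Finset.range (bigM α ε' j), R ^ (-κ) * r ^ k :=
        Finset.sum_le_sum fun k hk => hterm k (Finset.mem_range.1 hk)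
    _ = R ^ (-κ) * ∑ k ∈ Finset.range (bigM α ε' j), r ^ k := by rw [Finset.mul_sum]
    _ ≤ R ^ (-κ) * (1 - r)⁻¹ := by
        gcongr
        rw [← tsum_geometric_of_lt_one hr0 hr1]
        exact (summable_geometric_of_lt_one hr0 hr1).sum_le_tsum _ fun i _ => by positivity

lemma tendsto_sum_gamScale_rpow_neg (hα0 : 0 < α) (hα1 : α < 1) (hε' : 0 < ε') {κ : ℝ}
    (hκ : 0 < κ) :
    Tendsto (fun j => ∑ i ∈ Finset.range (bigM α ε' j), gamScale α j i ^ (-κ)) atTop (nhds 0) := by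
  have hlim : Tendsto (fun R : ℝ => R ^ (-κ) * (1 - R ^ (-(α * κ)))⁻¹) atTop (nhds 0) := by
    simpa using (tendsto_rpow_neg_atTop hκ).mul
      (((tendsto_rpow_neg_atTop (mul_pos hα0 hκ)).const_sub 1).inv₀ (by simp))
  refine squeeze_zero' ?_ ?_ (hlim.comp (tendsto_scaleThreshold hα1 hε'))
  · filter_upwards [eventually_gt_atTop 0] with j hj
    exact Finset.sum_nonneg fun i _ => Real.rpow_nonneg (gamScale_pos hj i).le _
  · filter_upwards [eventually_gt_atTop 0,
      (tendsto_scaleThreshold hα1 hε').eventually_gt_atTop 1] with j hj hR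
    exact sum_gamScale_rpow_neg_le hα0 hα1 hκ hj hR

/-! ### The profile around the bottom of a valley -/

variable {c₄ c₅ c₆ : ℝ}

/-- An upper bound for the number of points of the ball of radius `c₆ γ_i(j)^(2+ε')`. -/
noncomputable def ballSize (α ε' c₆ j : ℝ) (i : ℕ) : ℝ := 2 * c₆ * gamScale α j i ^ (2 + ε') + 1

/-- The annulus `Θ_i(j)` stays at least at this distance from `b⁺(j)`: it avoids the next ball,
whose radius is at least `c₅ γ_{i+1}(j)^(2+ε')`. -/
noncomputable def profileRadius (α ε' c₅ j : ℝ) (i : ℕ) : ℕ :=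
  ⌈c₅ * gamScale α j (i + 1) ^ (2 + ε')⌉₊

/-- The height above the bottom for which the sum of `exp (-(V(x) - V(b⁺(j))))` over `Θ_i(j)` is
at most `ε_i(j)²`, `ballSize` being an upper bound for the number of terms. -/
noncomputable def profileHeight (α ε' c₄ c₆ j : ℝ) (i : ℕ) : ℝ :=
  2 * c₄ * gamScale α j (i + 2) + Real.log (ballSize α ε' c₆ j i)

lemma one_le_ballSize (hc₆ : 1 ≤ c₆) (hj : 0 < j) (i : ℕ) : 1 ≤ ballSize α ε' c₆ j i := by
  have hγ := gamScale_pos (α := α) hj i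
  exact le_add_of_nonneg_left (by positivity)

lemma ballSize_le (hα1 : α < 1) (hε' : 0 < ε') (hj : 1 ≤ j) (i : ℕ) :
    ballSize α ε' c₆ j i ≤ (2 * c₆ + 1) * gamScale α j i ^ (2 + ε') := by
  have hpow := Real.one_le_rpow (one_le_gamScale hα1 hj i) (z := 2 + ε') (by linarith)
  rw [ballSize]
  linarith

lemma one_le_profileRadius (hc₅ : 0 < c₅) (hj : 0 < j) (i : ℕ) :
    1 ≤ profileRadius α ε' c₅ j i := by
  have hγ := gamScale_pos (α := α) hj (i + 1)
  exact Nat.one_le_ceil_iff.2 (by positivity)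

lemma profileHeight_nonneg (hc₄ : 0 < c₄) (hc₆ : 1 ≤ c₆) (hj : 0 < j) (i : ℕ) :
    0 ≤ profileHeight α ε' c₄ c₆ j i := by
  have hγ := gamScale_pos (α := α) hj (i + 2)
  have hlog := Real.log_nonneg (one_le_ballSize (α := α) (ε' := ε') hc₆ hj i)
  rw [profileHeight]
  positivity

lemma log_ballSize_le (hα1 : α < 1) (hε' : 0 < ε') (hc₆ : 1 ≤ c₆) (hj : 1 ≤ j) (i : ℕ) :
    Real.log (ballSize α ε' c₆ j i) ≤
      Real.log (2 * c₆ + 1) + (2 + ε') / (1 - α) ^ 2 * gamScale α j (i + 1) ^ (1 - α) := by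
  have hα' : 0 < 1 - α := by linarith
  have hγ := gamScale_pos (α := α) (zero_lt_one.trans_le hj) i
  have hball := one_le_ballSize (α := α) (ε' := ε') hc₆ (zero_lt_one.trans_le hj) i
  have hlog : Real.log (gamScale α j i) ≤ gamScale α j (i + 1) ^ (1 - α) / (1 - α) / (1 - α) := by
    rw [le_div_iff₀' hα', ← Real.log_rpow hγ, ← gamScale_succ (by linarith)]
    exact Real.log_le_rpow_div (gamScale_pos (by linarith) _).le hα'
  calc Real.log (ballSize α ε' c₆ j i)
      ≤ Real.log ((2 * c₆ + 1) * gamScale α j i ^ (2 + ε')) :=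
        Real.log_le_log (by linarith) (ballSize_le hα1 hε' hj i)
    _ = Real.log (2 * c₆ + 1) + (2 + ε') * Real.log (gamScale α j i) := by
        rw [Real.log_mul (by positivity) (by positivity), Real.log_rpow hγ]
    _ ≤ Real.log (2 * c₆ + 1) +
          (2 + ε') * (gamScale α j (i + 1) ^ (1 - α) / (1 - α) / (1 - α)) := by gcongr
    _ = _ := by rw [div_div, ← sq, mul_div_assoc', div_mul_eq_mul_div]

lemma exists_profileHeight_add_le (hα1 : α < 1) (hε' : 0 < ε') (hc₄ : 0 < c₄) (hc₆ : 1 ≤ c₆)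
    {L : ℝ} (hL : 0 ≤ L) :
    ∃ C > 0, ∀ j : ℝ, 1 ≤ j → ∀ i,
      profileHeight α ε' c₄ c₆ j i + L ≤ C * gamScale α j (i + 1) ^ (1 - α) := by
  have hα' : 0 < 1 - α := by linarith
  have hlog : 0 ≤ Real.log (2 * c₆ + 1) := Real.log_nonneg (by linarith)
  refine ⟨2 * c₄ + (Real.log (2 * c₆ + 1) + L) + (2 + ε') / (1 - α) ^ 2, by positivity,
    fun j hj i => ?_⟩
  have hpow : 1 ≤ gamScale α j (i + 1) ^ (1 - α) :=
    Real.one_le_rpow (one_le_gamScale hα1 hj (i + 1)) hα'.le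
  have hconst : Real.log (2 * c₆ + 1) + L ≤
      (Real.log (2 * c₆ + 1) + L) * gamScale α j (i + 1) ^ (1 - α) :=
    le_mul_of_one_le_right (by positivity) hpow
  rw [profileHeight, gamScale_succ (by linarith) (i + 1)]
  linarith [log_ballSize_le hα1 hε' hc₆ hj i]

lemma eventually_two_mul_profileHeight_le (hα0 : 0 < α) (hα1 : α < 1) (hε' : 0 < ε')
    (hc₄ : 0 < c₄) (hc₆ : 1 ≤ c₆) :
    ∀ᶠ j in atTop, ∀ i, 2 * profileHeight α ε' c₄ c₆ j i ≤ 3 * j := by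
  obtain ⟨C, hC, hheight⟩ := exists_profileHeight_add_le hα1 hε' hc₄ hc₆ le_rfl
  have hlim : Tendsto (fun j : ℝ => C * j ^ (-α)) atTop (nhds 0) := by
    simpa using (tendsto_rpow_neg_atTop hα0).const_mul C
  filter_upwards [eventually_ge_atTop 1, hlim.eventually_le_const zero_lt_one] with j hj hCj i
  have hj0 : 0 < j := by linarith
  have : 0 ≤ 1 - α := by linarith
  have hγ := gamScale_pos (α := α) hj0 (i + 1)
  have hle : profileHeight α ε' c₄ c₆ j i ≤ j := by
    calc profileHeight α ε' c₄ c₆ j i ≤ C * gamScale α j (i + 1) ^ (1 - α) := by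
          simpa using hheight j hj i
      _ ≤ C * j ^ (1 - α) := by
          gcongr
          exact gamScale_le_self hα0 hα1 hj _
      _ = C * j ^ (-α) * j := by rw [mul_assoc, ← Real.rpow_add_one hj0.ne', neg_add_eq_sub]
      _ ≤ j := mul_le_of_le_one_left hj0.le hCj
  linarith

lemma sqrt_mul_rpow_le_sqrt_profileRadius (hc₅ : 0 < c₅) (hj : 0 < j) (i : ℕ) :
    √c₅ * gamScale α j (i + 1) ^ (1 + ε' / 2) ≤ √(profileRadius α ε' c₅ j i) := by
  have hγ := gamScale_pos (α := α) hj (i + 1)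
  refine Real.le_sqrt_of_sq_le ?_
  rw [mul_pow, Real.sq_sqrt hc₅.le, ← Real.rpow_natCast, ← Real.rpow_mul hγ.le, Nat.cast_two,
    show (1 + ε' / 2) * 2 = 2 + ε' by ring]
  exact Nat.le_ceil _

lemma sum_range_sub_one_succ_le {f : ℕ → ℝ} (hf : ∀ i, 0 ≤ f i) (M : ℕ) :
    ∑ i ∈ Finset.range (M - 1), f (i + 1) ≤ ∑ i ∈ Finset.range M, f i := by
  cases M with
  | zero => rfl
  | succ M =>
    rw [Nat.add_sub_cancel, Finset.sum_range_succ']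
    exact le_add_of_nonneg_right (hf 0)

lemma tendsto_sum_profile (hα0 : 0 < α) (hα1 : α < 1) (hε' : 0 < ε') (hc₄ : 0 < c₄)
    (hc₅ : 0 < c₅) (hc₆ : 1 ≤ c₆) {L : ℝ} (hL : 0 ≤ L) :
    Tendsto (fun j => ∑ i ∈ Finset.range (bigM α ε' j - 1),
      (profileHeight α ε' c₄ c₆ j i + L) / √(profileRadius α ε' c₅ j i)) atTop (nhds 0) := by
  obtain ⟨C, hC, hheight⟩ := exists_profileHeight_add_le hα1 hε' hc₄ hc₆ hL
  have hκ : 0 < α + ε' / 2 := by positivity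
  have hlim : Tendsto (fun j => C / √c₅ * ∑ i ∈ Finset.range (bigM α ε' j),
      gamScale α j i ^ (-(α + ε' / 2))) atTop (nhds 0) := by
    simpa using (tendsto_sum_gamScale_rpow_neg hα0 hα1 hε' hκ).const_mul (C / √c₅)
  refine squeeze_zero' ?_ ?_ hlim
  · filter_upwards [eventually_gt_atTop 0] with j hj
    exact Finset.sum_nonneg fun i _ =>
      div_nonneg (add_nonneg (profileHeight_nonneg hc₄ hc₆ hj i) hL) (Real.sqrt_nonneg _)
  filter_upwards [eventually_ge_atTop 1] with j hj
  have hj0 : 0 < j := by linarith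
  have hterm : ∀ i, (profileHeight α ε' c₄ c₆ j i + L) / √(profileRadius α ε' c₅ j i) ≤
      C / √c₅ * gamScale α j (i + 1) ^ (-(α + ε' / 2)) := fun i => by
    have hγ := gamScale_pos (α := α) hj0 (i + 1)
    have := Real.sqrt_pos.2 hc₅
    calc _ ≤ C * gamScale α j (i + 1) ^ (1 - α) /
            (√c₅ * gamScale α j (i + 1) ^ (1 + ε' / 2)) :=
          div_le_div₀ (by positivity) (hheight j hj i) (by positivity)
            (sqrt_mul_rpow_le_sqrt_profileRadius hc₅ hj0 i)
      _ = C / √c₅ * gamScale α j (i + 1) ^ (-(α + ε' / 2)) := by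
          rw [mul_div_mul_comm, ← Real.rpow_sub hγ]
          congr 2
          ring
  calc _ ≤ C / √c₅ * ∑ i ∈ Finset.range (bigM α ε' j - 1),
          gamScale α j (i + 1) ^ (-(α + ε' / 2)) := by
        rw [Finset.mul_sum]
        exact Finset.sum_le_sum fun i _ => hterm i
    _ ≤ _ := by
        gcongr
        exact sum_range_sub_one_succ_le (fun i => Real.rpow_nonneg (gamScale_pos hj0 i).le _) _

lemma ballSize_mul_one_div_rpow_le (hα1 : α < 1) (hε' : 0 < ε') (hc₄ : 0 < c₄) (ε : ℝ)
    (hj : 1 ≤ j) (i : ℕ) :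
    ballSize α ε' c₆ j i * (1 / (c₄ * gamScale α j (i + 2) / 4) ^ (2 + ε)) ≤
      (2 * c₆ + 1) * (4 / c₄) ^ (2 + ε) *
        gamScale α j i ^ (-((1 - α) ^ 2 * (2 + ε) - (2 + ε'))) := by
  have hγ := gamScale_pos (α := α) (zero_lt_one.trans_le hj) i
  have hγ2 : gamScale α j (i + 2) = gamScale α j i ^ ((1 - α) ^ 2) := by
    rw [gamScale_succ (by linarith), gamScale_succ (by linarith), ← Real.rpow_mul hγ.le, sq]
  calc _ ≤ (2 * c₆ + 1) * gamScale α j i ^ (2 + ε') *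
          (1 / (c₄ * gamScale α j (i + 2) / 4) ^ (2 + ε)) := by
        gcongr
        · have := gamScale_pos (α := α) (zero_lt_one.trans_le hj) (i + 2)
          positivity
        · exact ballSize_le hα1 hε' hj i
    _ = (2 * c₆ + 1) * gamScale α j i ^ (2 + ε') *
          ((4 / c₄) ^ (2 + ε) * (gamScale α j i ^ ((1 - α) ^ 2 * (2 + ε)))⁻¹) := by
        rw [hγ2, Real.rpow_mul hγ.le, ← Real.inv_rpow (by positivity), one_div,
          ← Real.inv_rpow (by positivity), ← Real.mul_rpow (by positivity) (by positivity)]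
        congr 2
        field_simp
    _ = (2 * c₆ + 1) * (4 / c₄) ^ (2 + ε) *
          (gamScale α j i ^ (2 + ε') / gamScale α j i ^ ((1 - α) ^ 2 * (2 + ε))) := by ring
    _ = _ := by rw [← Real.rpow_sub hγ, neg_sub]

lemma tendsto_sum_ballSize_mul (hα0 : 0 < α) (hα1 : α < 1) (hε' : 0 < ε') (hc₄ : 0 < c₄)
    (hc₆ : 1 ≤ c₆) {ε : ℝ} (hβ : 0 < (1 - α) ^ 2 * (2 + ε) - (2 + ε')) :
    Tendsto (fun j => ∑ i ∈ Finset.range (bigM α ε' j - 1),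
      ballSize α ε' c₆ j i * (1 / (c₄ * gamScale α j (i + 2) / 4) ^ (2 + ε))) atTop (nhds 0) := by
  set C := (2 * c₆ + 1) * (4 / c₄) ^ (2 + ε)
  have hC : 0 ≤ C := by positivity
  have hlim := (tendsto_sum_gamScale_rpow_neg hα0 hα1 hε' hβ).const_mul C
  rw [mul_zero] at hlim
  refine squeeze_zero' ?_ ?_ hlim
  · filter_upwards [eventually_gt_atTop 0] with j hj
    refine Finset.sum_nonneg fun i _ => ?_
    have hball := one_le_ballSize (α := α) (ε' := ε') hc₆ hj i
    have hγ := gamScale_pos (α := α) hj (i + 2)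
    positivity
  · filter_upwards [eventually_ge_atTop 1] with j hj
    rw [Finset.mul_sum]
    calc _ ≤ ∑ i ∈ Finset.range (bigM α ε' j - 1),
            C * gamScale α j i ^ (-((1 - α) ^ 2 * (2 + ε) - (2 + ε'))) :=
          Finset.sum_le_sum fun i _ => ballSize_mul_one_div_rpow_le hα1 hε' hc₄ ε hj i
      _ ≤ _ := Finset.sum_le_sum_of_subset_of_nonneg (Finset.range_subset_range.2 (by omega))
          fun i _ _ => mul_nonneg hC
            (Real.rpow_nonneg (gamScale_pos (zero_lt_one.trans_le hj) i).le _)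

lemma eventually_le_gamScale (hα1 : α < 1) (hε' : 0 < ε') (hc₄ : 0 < c₄) (A : ℝ) :
    ∀ᶠ j in atTop, ∀ i < bigM α ε' j - 1, A ≤ c₄ * gamScale α j (i + 2) / 4 := by
  have hα' : 0 < 1 - α := by linarith
  have hlim : Tendsto (fun j => c₄ * scaleThreshold α ε' j ^ (1 - α) / 4) atTop atTop :=
    (((tendsto_rpow_atTop hα').comp (tendsto_scaleThreshold hα1 hε')).const_mul_atTop
      hc₄).atTop_div_const (by norm_num)
  filter_upwards [eventually_gt_atTop 0, hlim.eventually_ge_atTop A,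
    (tendsto_scaleThreshold hα1 hε').eventually_gt_atTop 0] with j hj hA hR i hi
  rw [gamScale_succ hj.le]
  refine hA.trans ?_
  gcongr
  exact (scaleThreshold_lt_gamScale (by omega)).le

end Scales

/-! ### From valleys to good environments -/

section Extremes

variable {v : ℤ → ℝ} {j : ℝ} {m n : ℕ}

lemma dPlus_le (hn : j ≤ v n) : dPlus v j ≤ n := Nat.sInf_le hn

lemma lt_dPlus (hn : j ≤ v n) (hm : ∀ k : ℕ, k ≤ m → v k < j) : m < dPlus v j :=
  have : j ≤ v (dPlus v j) := Nat.sInf_mem (s := {n : ℕ | j ≤ v n}) ⟨n, hn⟩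
  not_le.1 fun h => (hm _ h).not_ge this

lemma lt_nuMinus (hn : v n ≤ -j) (hm : ∀ k : ℕ, k ≤ m → -j < v k) : m < nuMinus v j :=
  have : v (nuMinus v j) ≤ -j := Nat.sInf_mem (s := {n : ℕ | v n ≤ -j}) ⟨n, hn⟩
  not_le.1 fun h => (hm _ h).not_ge this

lemma apply_bPlus_le (hm : m ≤ dPlus v j) : v (bPlus v j) ≤ v m := by
  obtain ⟨b, -, hmin, -⟩ := exists_first_argmin (fun k => v k) (dPlus v j)
  exact Nat.sInf_mem (s := {n : ℕ | ∀ m : ℕ, m ≤ dPlus v j → v n ≤ v m}) ⟨b, hmin⟩ m hm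

lemma bPlus_eq {b : ℕ} (hb : b ≤ dPlus v j) (hmin : ∀ m : ℕ, m ≤ dPlus v j → v b ≤ v m)
    (hlt : ∀ m : ℕ, m < b → v b < v m) : bPlus v j = b :=
  le_antisymm (Nat.sInf_le hmin) (not_lt.1 fun h => (hlt _ h).not_ge (apply_bPlus_le hb))

end Extremes

/-- The potential `v` stays close to `0` on `[0, t]` and, seen from `t`, it has a valley of scale
`j` with bottom `t + b` inside `[t, t + N]`. -/
structure IsFlatThenValley (v : ℤ → ℝ) (t N b : ℕ) (j : ℝ) : Prop where
  pos : 0 < j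
  flat : ∀ n : ℕ, n ≤ t → |v n| ≤ 0.01 * j
  valley : IsValley (fun k => v (t + k) - v t) N b j

lemma abs_sub_shift_le {v : ℤ → ℝ} {t : ℕ} {j : ℝ} (hv : ∀ n : ℕ, n ≤ t → |v n| ≤ 0.01 * j)
    (x : ℕ) : |v x - (v (t + (x - t : ℕ)) - v t)| ≤ 0.01 * j := by
  rcases le_total x t with hx | hx
  · simpa [Nat.sub_eq_zero_of_le hx] using hv x hx
  · simpa [Nat.cast_sub hx] using hv t le_rfl

namespace IsFlatThenValley

variable {v : ℤ → ℝ} {t N b : ℕ} {j : ℝ}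

lemma apply_add_bottom_le (hv : IsFlatThenValley v t N b j) : v (t + b : ℕ) ≤ -3.09 * j := by
  have := (abs_le.1 (abs_sub_shift_le hv.flat (t + b))).2
  have := hv.valley.bottom_le_neg
  rw [Nat.add_sub_cancel_left] at *
  linarith

lemma apply_bottom_lt_of_le (hv : IsFlatThenValley v t N b j) {m : ℕ} (hm : m ≤ t) :
    v (t + b : ℕ) < v m := by
  linarith [(abs_le.1 (hv.flat m hm)).1, hv.apply_add_bottom_le, hv.pos]

lemma le_apply_end (hv : IsFlatThenValley v t N b j) : j ≤ v (t + N : ℕ) := by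
  have := (abs_le.1 (abs_sub_shift_le hv.flat (t + N))).1
  have := hv.valley.le_end
  rw [Nat.add_sub_cancel_left] at *
  linarith [hv.pos]

lemma dPlus_le (hv : IsFlatThenValley v t N b j) : dPlus v j ≤ t + N :=
  _root_.dPlus_le hv.le_apply_end

lemma bottom_lt_dPlus (hv : IsFlatThenValley v t N b j) : t + b < dPlus v j := by
  refine lt_dPlus hv.le_apply_end fun k hk => ?_
  have hclose := (abs_le.1 (abs_sub_shift_le hv.flat k)).2
  have hrise := hv.valley.rise_le 0 (k - t) (Nat.zero_le _) (by omega)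
  rw [Nat.cast_zero, add_zero] at hrise
  linarith [hv.pos]

lemma bPlus_eq (hv : IsFlatThenValley v t N b j) : bPlus v j = t + b := by
  refine _root_.bPlus_eq hv.bottom_lt_dPlus.le (fun m hm => ?_) fun m hm => ?_
  · rcases le_total m t with hmt | hmt
    · exact (hv.apply_bottom_lt_of_le hmt).le
    · obtain ⟨k, rfl⟩ := Nat.exists_eq_add_of_le hmt
      have := hv.valley.bottom_min k (by have := hm.trans hv.dPlus_le; omega)
      push_cast
      linarith
  · rcases le_total m t with hmt | hmt
    · exact hv.apply_bottom_lt_of_le hmt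
    · obtain ⟨k, rfl⟩ := Nat.exists_eq_add_of_le hmt
      have := hv.valley.bottom_lt k (by omega)
      push_cast
      linarith

lemma lt_nuMinus (hv : IsFlatThenValley v t N b j) : t < nuMinus v j := by
  have hj := hv.pos
  refine _root_.lt_nuMinus (n := t + b) (by linarith [hv.apply_add_bottom_le]) fun k hk => ?_
  linarith [(abs_le.1 (hv.flat k hk)).1]

lemma a1env (hv : IsFlatThenValley v t N b j) : A1env v j := by
  have hj := hv.pos
  have hlow := (abs_le.1 (abs_sub_shift_le hv.flat (t + b))).1
  have hle := hv.valley.le_bottom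
  rw [Nat.add_sub_cancel_left] at hlow
  rw [A1env, hv.bPlus_eq]
  constructor <;> linarith [hv.apply_add_bottom_le]

lemma a2env (hv : IsFlatThenValley v t N b j) : A2env v j := by
  intro x y hxy hy
  rw [hv.bPlus_eq] at hy
  have hx' := (abs_le.1 (abs_sub_shift_le hv.flat x)).1
  have hy' := (abs_le.1 (abs_sub_shift_le hv.flat y)).2
  have hrise := hv.valley.rise_le (x - t) (y - t) (by omega) (by omega)
  linarith [hv.pos]

lemma lt_apply_sub_of_isSteepFrom (hv : IsFlatThenValley v t N b j) {n : ℕ} {h : ℝ}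
    (hsteep : IsSteepFrom (fun k => v (t + k) - v t) N b n h) {x : ℤ} (hx : t ≤ x)
    (hxN : x ≤ t + N) (hn : (n : ℝ) ≤ |(x : ℝ) - bPlus v j|) : h < v x - v (bPlus v j) := by
  rw [hv.bPlus_eq] at hn ⊢
  have hn' : (n : ℤ) ≤ |x - (t + b : ℕ)| := by exact_mod_cast hn
  rw [le_abs] at hn'
  rcases le_total x (t + b) with hxb | hxb
  · obtain ⟨k, hk⟩ := Int.eq_ofNat_of_zero_le (sub_nonneg.2 hxb)
    have hlt := hsteep.1 k (by omega) (by omega)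
    have hxk : ((t : ℤ) + (b - k : ℕ)) = x := by omega
    simp only [hxk] at hlt
    push_cast
    linarith
  · obtain ⟨k, hk⟩ := Int.eq_ofNat_of_zero_le (sub_nonneg.2 hxb)
    have hlt := hsteep.2 k (by omega) (by omega)
    have hxk : ((t : ℤ) + (b + k : ℕ)) = x := by omega
    simp only [hxk] at hlt
    push_cast
    linarith

end IsFlatThenValley

lemma bEnv_of_isLeftValley {v : ℤ → ℝ} {t N : ℕ} {j : ℝ} (hj : 0 < j)
    (hflat : ∀ n : ℕ, n ≤ t → |v (-n)| ≤ 0.01 * j)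
    (hv : IsLeftValley (fun k => v (-t - k) - v (-t)) N j) : Benv v j := by
  obtain ⟨k₀, hk₀, hlow, hhigh⟩ := hv.exists_le
  have hclose (x : ℕ) := abs_le.1 (abs_sub_shift_le (v := fun x => v (-x)) hflat x)
  simp only [neg_add, ← sub_eq_add_neg] at hclose
  have hend : j ≤ v (-(t + N : ℕ)) := by
    have := (hclose (t + N)).1
    have := hv.le_end
    rw [Nat.add_sub_cancel_left] at *
    linarith
  have hd : dMinusAbs v j ≤ t + N := dPlus_le (v := fun x => v (-x)) hend
  have hk₀d : t + k₀ < dMinusAbs v j := by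
    refine lt_dPlus (v := fun x => v (-x)) hend fun k hk => ?_
    linarith [(hclose k).2, hhigh (k - t) (by omega)]
  refine ⟨?_, fun x y hx hxy hy => ?_⟩
  · have hmin : v (-bMinusAbs v j) ≤ v (-(t + k₀ : ℕ)) :=
      apply_bPlus_le (v := fun x => v (-x)) hk₀d.le
    have hk₀' := (hclose (t + k₀)).2
    rw [Nat.add_sub_cancel_left] at hk₀'
    linarith
  · obtain ⟨m, rfl⟩ := Int.exists_eq_neg_ofNat (hxy.trans hy)
    obtain ⟨n, rfl⟩ := Int.exists_eq_neg_ofNat hy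
    linarith [(hclose m).1, (hclose n).2, hv.drop_le (n - t) (m - t) (by omega) (by omega)]

section Annuli

variable {v : ℤ → ℝ} {j α ε' c₅ c₆ : ℝ} {i : ℕ} {x : ℤ}

lemma abs_sub_bPlus_le_of_mem_thetaBar (hi : i < bigM α ε' j - 1)
    (hx : x ∈ thetaBar α ε' c₅ c₆ v j i) :
    |(x : ℝ) - bPlus v j| ≤ c₆ * gamScale α j i ^ (2 + ε') := by
  simpa only [thetaBall, if_neg hi.ne, mem_ofPred_eq] using hx.1

lemma abs_sub_bPlus_le_of_mem_thetaBar_bigM_sub_one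
    (hx : x ∈ thetaBar α ε' c₅ c₆ v j (bigM α ε' j - 1)) :
    |(x : ℝ) - bPlus v j| ≤ c₅ * gamScale α j (bigM α ε' j - 1) ^ (2 + ε') := by
  simpa only [thetaBall, if_true, mem_ofPred_eq] using hx.1

lemma lt_abs_sub_bPlus_of_mem_thetaBar (hj : 0 < j) (hc : c₅ ≤ c₆) {p : ℕ} (hip : i < p)
    (hp : p < bigM α ε' j) (hx : x ∈ thetaBar α ε' c₅ c₆ v j i) :
    c₅ * gamScale α j p ^ (2 + ε') < |(x : ℝ) - bPlus v j| := by
  have hxp : x ∉ thetaBall α ε' c₅ c₆ v j p := fun h =>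
    hx.2 (mem_biUnion (Finset.coe_mem (s := Finset.Ioo i _) ⟨p, Finset.mem_Ioo.2 ⟨hip, hp⟩⟩) h)
  rw [thetaBall, mem_ofPred_eq, not_le] at hxp
  refine lt_of_le_of_lt ?_ hxp
  have : 0 < gamScale α j p := gamScale_pos hj p
  gcongr
  split_ifs <;> simp [hc]

end Annuli

lemma card_le_of_abs_sub_le (c : ℤ) {r : ℝ} (hr : 0 ≤ r) {s : Finset ℤ}
    (hs : ∀ x ∈ s, |(x : ℝ) - c| ≤ r) : (s.card : ℝ) ≤ 2 * r + 1 := by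
  have hsub : s ⊆ Finset.Icc (c - ⌊r⌋) (c + ⌊r⌋) := fun x hx => by
    have hxr : |x - c| ≤ ⌊r⌋ := Int.le_floor.2 (by exact_mod_cast hs x hx)
    rw [abs_le] at hxr
    exact Finset.mem_Icc.2 ⟨by linarith, by linarith⟩
  have hcard : (s.card : ℤ) ≤ 2 * ⌊r⌋ + 1 := by
    have := Finset.card_le_card hsub
    have := Int.floor_nonneg.2 hr
    rw [Int.card_Icc] at *
    omega
  have : (s.card : ℝ) ≤ 2 * ⌊r⌋ + 1 := by exact_mod_cast hcard
  linarith [Int.floor_le r]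

lemma tsum_exp_neg_le (c : ℤ) {r : ℝ} (hr : 0 ≤ r) {S : Set ℤ} {f : ℤ → ℝ} {h : ℝ}
    (hS : ∀ x ∈ S, |(x : ℝ) - c| ≤ r) (hf : ∀ x ∈ S, h ≤ f x) :
    ∑' x : S, Real.exp (-f x) ≤ (2 * r + 1) * Real.exp (-h) := by
  refine Real.tsum_le_of_sum_le (fun x => (Real.exp_pos _).le) fun s => ?_
  have hcard : (s.card : ℝ) ≤ 2 * r + 1 := by
    rw [← Finset.card_map (Function.Embedding.subtype _)]
    refine card_le_of_abs_sub_le c hr fun x hx => ?_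
    obtain ⟨y, -, rfl⟩ := Finset.mem_map.1 hx
    exact hS y y.2
  calc ∑ x ∈ s, Real.exp (-f x) ≤ s.card * Real.exp (-h) := by
        rw [← nsmul_eq_mul]
        exact Finset.sum_le_card_nsmul _ _ _ fun x _ =>
          Real.exp_le_exp.2 (neg_le_neg (hf x x.2))
    _ ≤ (2 * r + 1) * Real.exp (-h) := by gcongr

lemma ballSize_mul_exp_neg_profileHeight {α ε' c₄ c₆ j : ℝ} (hc₆ : 1 ≤ c₆) (hj : 0 < j) (i : ℕ) :
    ballSize α ε' c₆ j i * Real.exp (-profileHeight α ε' c₄ c₆ j i) = epsScale α c₄ j i ^ 2 := by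
  have hpos : 0 < ballSize α ε' c₆ j i := zero_lt_one.trans_le (one_le_ballSize hc₆ hj i)
  rw [profileHeight, neg_add, Real.exp_add, Real.exp_neg (Real.log _), Real.exp_log hpos, epsScale,
    ← Real.exp_nat_mul]
  field_simp
  push_cast
  ring_nf

/-- The scenery `ξ` is at least `y` on the part of the ball of radius `r` around `c` lying in
`(lo, hi]`. -/
def IsHighOnBall (ξ : ℤ → ℝ) (lo hi c : ℤ) (r y : ℝ) : Prop :=
  ∀ x, lo < x → x ≤ hi → |(x : ℝ) - c| ≤ r → y ≤ ξ x

/-- Off the ball of radius `r` around `c`, the negative part of the scenery `ξ` is below `u i` on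
the part of the ball of radius `R i` lying in `(lo, hi]`, for all `i < I`. -/
def IsTameOffBall (ξ : ℤ → ℝ) (lo hi c : ℤ) (r : ℝ) (I : ℕ) (R u : ℕ → ℝ) : Prop :=
  ∀ i < I, ∀ x, lo < x → x ≤ hi → r < |(x : ℝ) - c| → |(x : ℝ) - c| ≤ R i → max (-ξ x) 0 < u i

namespace IsFlatThenValley

variable {v ξ : ℤ → ℝ} {t N b : ℕ} {j α ε' c₄ c₅ c₆ a ρ : ℝ}

lemma mem_Ioc_of_mem_thetaSet (hv : IsFlatThenValley v t N b j) {i : ℕ} {x : ℤ}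
    (hx : x ∈ thetaSet α ε' c₅ c₆ v j i) : x ∈ Ioc (t : ℤ) (t + N) := by
  have := hv.lt_nuMinus
  have := hv.dPlus_le
  exact ⟨by have := hx.2.1; omega, by have := hx.2.2; omega⟩

lemma aannEnv (hv : IsFlatThenValley v t N b j) (hc : c₅ ≤ c₆) (hc₆ : 1 ≤ c₆)
    (hsteep : ∀ i < bigM α ε' j - 1, IsSteepFrom (fun k => v (t + k) - v t) N b
      (profileRadius α ε' c₅ j i) (profileHeight α ε' c₄ c₆ j i)) :
    AannEnv α ε' c₄ c₅ c₆ v j := by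
  intro i hi
  have hr : 0 ≤ c₆ * gamScale α j i ^ (2 + ε') :=
    mul_nonneg (zero_le_one.trans hc₆) (Real.rpow_nonneg (gamScale_pos hv.pos i).le _)
  rw [← ballSize_mul_exp_neg_profileHeight (ε' := ε') hc₆ hv.pos, ballSize, mul_assoc 2]
  refine tsum_exp_neg_le (f := fun x => v x - v (bPlus v j)) (bPlus v j) hr
    (fun x hx => ?_) fun x hx => ?_
  · exact abs_sub_bPlus_le_of_mem_thetaBar (by omega) hx.1
  · obtain ⟨htx, hxN⟩ := hv.mem_Ioc_of_mem_thetaSet hx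
    refine (hv.lt_apply_sub_of_isSteepFrom (hsteep i (by omega)) htx.le hxN ?_).le
    have hfar := lt_abs_sub_bPlus_of_mem_thetaBar hv.pos hc (Nat.lt_succ_self i) hi hx.1
    have hceil : profileRadius α ε' c₅ j i ≤ (x - bPlus v j).natAbs :=
      Nat.ceil_le.2 (hfar.le.trans_eq (by rw [Nat.cast_natAbs]; push_cast; rfl))
    calc (profileRadius α ε' c₅ j i : ℝ) ≤ (x - bPlus v j).natAbs := by exact_mod_cast hceil
      _ = |(x : ℝ) - bPlus v j| := by rw [Nat.cast_natAbs]; push_cast; rfl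

lemma goodPair (hv : IsFlatThenValley v t N b j) (hc : c₅ ≤ c₆) (hc₆ : 1 ≤ c₆)
    (hsteep : ∀ i < bigM α ε' j - 1, IsSteepFrom (fun k => v (t + k) - v t) N b
      (profileRadius α ε' c₅ j i) (profileHeight α ε' c₄ c₆ j i))
    (hflat : ∀ n : ℕ, n ≤ t → |v (-n)| ≤ 0.01 * j)
    (hleft : IsLeftValley (fun k => v (-t - k) - v (-t)) N j)
    (hneg : ∀ x : ℤ, |(x : ℝ)| ≤ j ^ (2 + ε') →
      max (-ξ x) 0 < epsScale α c₄ j 0 ^ (-(1 / 2) : ℝ))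
    (hhigh : IsHighOnBall ξ t (t + N) (t + b) (c₅ * gamScale α j (bigM α ε' j - 1) ^ (2 + ε'))
      (a - ρ))
    (htame : IsTameOffBall ξ t (t + N) (t + b) (c₅ * gamScale α j (bigM α ε' j - 1) ^ (2 + ε'))
      (bigM α ε' j - 1) (fun i => c₆ * gamScale α j i ^ (2 + ε'))
      (fun i => epsScale α c₄ j i ^ (-(1 / 2) : ℝ))) :
    goodPair α ε' c₄ c₅ c₆ a ρ v ξ j := by
  have hb : ((t + b : ℤ) : ℝ) = bPlus v j := by rw [hv.bPlus_eq]; push_cast; rfl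
  refine ⟨hv.a1env, hv.a2env, hv.aannEnv hc hc₆ hsteep, bEnv_of_isLeftValley hv.pos hflat hleft,
    fun x hx => hneg x (abs_le.2 ⟨hx.1, hx.2.1⟩), fun i hi x hx => ?_, fun x hx => ?_⟩
  · obtain ⟨htx, hxN⟩ := hv.mem_Ioc_of_mem_thetaSet hx
    refine htame i (by omega) x htx hxN ?_ ?_ <;> rw [hb]
    · exact lt_abs_sub_bPlus_of_mem_thetaBar hv.pos hc (by omega) (by omega) hx.1
    · exact abs_sub_bPlus_le_of_mem_thetaBar (by omega) hx.1
  · obtain ⟨htx, hxN⟩ := hv.mem_Ioc_of_mem_thetaSet hx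
    refine hhigh x htx hxN ?_
    rw [hb]
    exact abs_sub_bPlus_le_of_mem_thetaBar_bigM_sub_one hx.1

end IsFlatThenValley

/-! ### Borel–Cantelli lemmas -/

section BorelCantelli

variable {Ω ι κ β : Type*} [MeasurableSpace β] {mΩ : MeasurableSpace Ω} {μ : Measure Ω}

lemma iIndepFun_sumElim {X : ι → Ω → β} {Y : κ → Ω → β} (hX : iIndepFun X μ)
    (hY : iIndepFun Y μ) (hXY : IndepFun (fun ω i => X i ω) (fun ω k => Y k ω) μ) :
    iIndepFun (Sum.elim X Y) μ := by
  rw [iIndepFun_iff_measure_inter_preimage_eq_mul] at hX hY ⊢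
  intro S A hA
  have hAl : ∀ i ∈ S.toLeft, MeasurableSet (A (Sum.inl i)) := fun i hi => hA _ (by simpa using hi)
  have hAr : ∀ k ∈ S.toRight, MeasurableSet (A (Sum.inr k)) := fun k hk => hA _ (by simpa using hk)
  have hsplit : ⋂ i ∈ S, Sum.elim X Y i ⁻¹' A i =
      (⋂ i ∈ S.toLeft, X i ⁻¹' A (Sum.inl i)) ∩ ⋂ k ∈ S.toRight, Y k ⁻¹' A (Sum.inr k) := by
    ext ω
    simp
  have hprod := hXY.measure_inter_preimage_eq_mul
    (Set.pi S.toLeft fun i => A (Sum.inl i)) (Set.pi S.toRight fun k => A (Sum.inr k))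
    (.pi S.toLeft.countable_toSet hAl) (.pi S.toRight.countable_toSet hAr)
  have hpreX : (fun ω i => X i ω) ⁻¹' Set.pi S.toLeft (fun i => A (Sum.inl i)) =
      ⋂ i ∈ S.toLeft, X i ⁻¹' A (Sum.inl i) := by
    ext ω
    simp
  have hpreY : (fun ω k => Y k ω) ⁻¹' Set.pi S.toRight (fun k => A (Sum.inr k)) =
      ⋂ k ∈ S.toRight, Y k ⁻¹' A (Sum.inr k) := by
    ext ω
    simp
  rw [hsplit, ← hpreX, ← hpreY, hprod, hpreX, hpreY, hX _ hAl, hY _ hAr,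
    Finset.prod_sum_eq_prod_toLeft_mul_prod_toRight]
  rfl

lemma iIndepSet_of_coordSigma [IsProbabilityMeasure μ] {X : ι → Ω → β}
    (hX : ∀ i, Measurable (X i)) (hi : iIndepFun X μ)
    {J : κ → Set ι} (hJ : Pairwise (Function.onFun Disjoint J)) {G : κ → Set Ω}
    (hG : ∀ k, MeasurableSet[coordSigma X (J k)] (G k)) : iIndepSet G μ := by
  classical
  rw [iIndepSet_iff_meas_biInter fun k => coordSigma_le hX _ _ (hG k)]
  intro S
  induction S using Finset.induction_on with
  | empty => simp
  | insert k S hk ih =>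
    have hGS : MeasurableSet[coordSigma X (⋃ l ∈ S, J l)] (⋂ l ∈ S, G l) :=
      MeasurableSet.biInter S.countable_toSet fun l hl =>
        coordSigma_mono (subset_biUnion_of_mem (u := J) hl) _ (hG l)
    have hdisj : Disjoint (J k) (⋃ l ∈ S, J l) :=
      disjoint_iUnion₂_right.2 fun l hl => hJ (ne_of_mem_of_not_mem hl hk).symm
    rw [Finset.prod_insert hk, ← ih, Finset.set_biInter_insert]
    exact (Indep_iff _ _ μ).1 (indep_coordSigma hX hi hdisj) _ _ (hG k) hGS

lemma ae_eventually_notMem_of_le_div_sq [IsFiniteMeasure μ] {s : ℕ → Set Ω} {C : ℝ}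
    (hs : ∀ᶠ p : ℕ in atTop, μ.real (s p) ≤ C / (p : ℝ) ^ 2) :
    ∀ᵐ ω ∂μ, ∀ᶠ p in atTop, ω ∉ s p := by
  have hC : Summable fun p : ℕ => C / (p : ℝ) ^ 2 := by
    simpa only [div_eq_mul_inv, one_mul] using
      (Real.summable_one_div_nat_pow.2 one_lt_two).mul_left C
  have hsum : Summable fun p => μ.real (s p) :=
    hC.of_norm_bounded_eventually_nat (by simpa only [Real.norm_of_nonneg measureReal_nonneg])
  refine ae_eventually_notMem ?_
  simpa only [ofReal_measureReal (measure_ne_top μ _)] using hsum.tsum_ofReal_ne_top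

lemma ae_frequently_mem_of_div_le [IsProbabilityMeasure μ] {X : ι → Ω → β}
    (hX : ∀ i, Measurable (X i)) (hi : iIndepFun X μ) {J : ℕ → Set ι}
    (hJ : ∀ᶠ p in atTop, ∀ q, p < q → Disjoint (J p) (J q)) {G : ℕ → Set Ω}
    (hG : ∀ p, MeasurableSet[coordSigma X (J p)] (G p)) {C : ℝ} (hC : 0 < C)
    (hlow : ∀ᶠ p : ℕ in atTop, C / p ≤ μ.real (G p)) :
    ∀ᵐ ω ∂μ, ∃ᶠ p in atTop, ω ∈ G p := by
  obtain ⟨n, hn⟩ := eventually_atTop.1 hJ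
  have hind : iIndepSet (fun p => G (p + n)) μ := by
    refine iIndepSet_of_coordSigma hX hi (J := fun p => J (p + n)) (fun p q hpq => ?_)
      fun p => hG (p + n)
    rcases hpq.lt_or_gt with h | h
    · exact hn (p + n) (by omega) _ (by omega)
    · exact (hn (q + n) (by omega) _ (by omega)).symm
  have hGm : ∀ p, MeasurableSet (G (p + n)) := fun p => coordSigma_le hX _ _ (hG _)
  have hdiv : ∑' p, μ (G (p + n)) = ⊤ := by
    by_contra hne
    have hsum : Summable fun p => μ.real (G p) :=
      (summable_nat_add_iff n).1 (ENNReal.summable_toReal hne)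
    have hharm : Summable fun p : ℕ => C / p := hsum.of_norm_bounded_eventually_nat <| by
      filter_upwards [hlow] with p hp
      rwa [Real.norm_of_nonneg (by positivity)]
    simp only [div_eq_mul_one_div C] at hharm
    exact Real.not_summable_one_div_natCast ((summable_mul_left_iff hC.ne').1 hharm)
  have hlim : ∀ᵐ ω ∂μ, ω ∈ limsup (fun p => G (p + n)) atTop := by
    exact (mem_ae_iff_prob_eq_one (.measurableSet_limsup hGm)).2
      (measure_limsup_eq_one hGm hind hdiv)
  filter_upwards [hlim] with ω hω
  exact (tendsto_add_atTop_nat n).frequently (mem_limsup_iff_frequently_mem.1 hω)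

lemma mul_measureReal_biUnion_le [IsFiniteMeasure μ] {X : ι → Ω → β}
    (hX : ∀ i, Measurable (X i)) (hi : iIndepFun X μ) {A B : Set ι} (hAB : Disjoint A B)
    {D S : ℕ → Set Ω} {σ : ℝ} (n : ℕ) (hD : ∀ b < n, MeasurableSet[coordSigma X A] (D b))
    (hS : ∀ b < n, MeasurableSet[coordSigma X B] (S b)) (hσ0 : 0 ≤ σ)
    (hσ : ∀ b < n, σ ≤ μ.real (S b)) :
    σ * μ.real (⋃ b ∈ Finset.range n, D b) ≤ μ.real (⋃ b ∈ Finset.range n, (D b ∩ S b)) := by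
  have hDm : ∀ b < n, MeasurableSet[coordSigma X A] (disjointed D b) := fun b hb => by
    rw [disjointed_eq_inter_compl]
    exact (hD b hb).inter <| MeasurableSet.iInter fun k => MeasurableSet.iInter fun hk =>
      (hD k (hk.trans hb)).compl
  have hDle : ∀ b, disjointed D b ⊆ D b := disjointed_subset D
  have hcover : ⋃ b ∈ Finset.range n, D b ⊆ ⋃ b ∈ Finset.range n, disjointed D b := by
    cases n with
    | zero => simp
    | succ n =>
      rw [biUnion_range_succ_disjointed]
      exact iUnion₂_subset fun b hb =>
        le_partialSups_of_le D (Nat.lt_succ_iff.1 (Finset.mem_range.1 hb))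
  have hdisj : (↑(Finset.range n) : Set ℕ).PairwiseDisjoint fun b => disjointed D b ∩ S b :=
    fun b _ k _ hbk => (disjoint_disjointed D hbk).mono inter_subset_left inter_subset_left
  calc σ * μ.real (⋃ b ∈ Finset.range n, D b)
      ≤ σ * ∑ b ∈ Finset.range n, μ.real (disjointed D b) := by
        gcongr
        exact (measureReal_mono hcover (measure_ne_top _ _)).trans
          (measureReal_biUnion_finset_le _ _)
    _ = ∑ b ∈ Finset.range n, μ.real (disjointed D b) * σ := by rw [mul_comm, Finset.sum_mul]
    _ ≤ ∑ b ∈ Finset.range n, μ.real (disjointed D b ∩ S b) := by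
        refine Finset.sum_le_sum fun b hb => ?_
        have hb := Finset.mem_range.1 hb
        rw [measureReal_inter_of_coordSigma hX hi hAB (hDm b hb) (hS b hb)]
        exact mul_le_mul_of_nonneg_left (hσ b hb) measureReal_nonneg
    _ = μ.real (⋃ b ∈ Finset.range n, (disjointed D b ∩ S b)) := by
        refine (measureReal_biUnion_finset hdisj fun b hb => ?_).symm
        have hb := Finset.mem_range.1 hb
        exact (coordSigma_le hX _ _ (hDm b hb)).inter (coordSigma_le hX _ _ (hS b hb))
    _ ≤ μ.real (⋃ b ∈ Finset.range n, (D b ∩ S b)) :=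
        measureReal_mono (iUnion₂_mono fun b _ => inter_subset_inter_left _ (hDle b))
          (measure_ne_top _ _)

end BorelCantelli

/-! ### Good sceneries near a given site -/

section Scenery

variable {Ω ι : Type*} {mΩ : MeasurableSpace Ω} {μ : Measure Ω}

lemma measureReal_exists_le_negPart_le [IsFiniteMeasure μ] {ξ : ι → Ω → ℝ} {i₀ : ι}
    (hid : ∀ i, IdentDistrib (ξ i) (ξ i₀) μ μ) (S : Finset ι) {l u τ : ℝ} (hlu : l < u)
    (hτ : μ.real {ω | l < max (-ξ i₀ ω) 0} ≤ τ) :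
    μ.real {ω | ∃ i ∈ S, u ≤ max (-ξ i ω) 0} ≤ S.card * τ := by
  have hm : MeasurableSet {z : ℝ | l < max (-z) 0} :=
    measurableSet_lt measurable_const (measurable_neg.max measurable_const)
  have hsite : ∀ i, μ.real {ω | l < max (-ξ i ω) 0} ≤ τ := fun i =>
    (congrArg ENNReal.toReal ((hid i).measure_mem_eq hm)).trans_le hτ
  have hsub : {ω | ∃ i ∈ S, u ≤ max (-ξ i ω) 0} ⊆ ⋃ i ∈ S, {ω | l < max (-ξ i ω) 0} :=
    fun ω ⟨i, hiS, hu⟩ => mem_iUnion₂.2 ⟨i, hiS, hlu.trans_le hu⟩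
  calc μ.real {ω | ∃ i ∈ S, u ≤ max (-ξ i ω) 0}
      ≤ ∑ i ∈ S, μ.real {ω | l < max (-ξ i ω) 0} :=
        (measureReal_mono hsub (measure_ne_top _ _)).trans (measureReal_biUnion_finset_le _ _)
    _ ≤ ∑ _i ∈ S, τ := Finset.sum_le_sum fun i _ => hsite i
    _ = S.card * τ := by rw [Finset.sum_const, nsmul_eq_mul]

variable {ξ : ℤ → Ω → ℝ}

lemma rpow_le_measureReal_isHighOnBall [IsProbabilityMeasure μ] (hi : iIndepFun ξ μ)
    (hid : ∀ x, IdentDistrib (ξ x) (ξ 0) μ μ) (lo hi' c : ℤ) {r y : ℝ} (hr : 0 ≤ r)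
    (hq : 0 < μ.real {ω | y ≤ ξ 0 ω}) :
    μ.real {ω | y ≤ ξ 0 ω} ^ (2 * r + 1) ≤
      μ.real {ω | IsHighOnBall (fun x => ξ x ω) lo hi' c r y} := by
  classical
  set S : Finset ℤ := {x ∈ Finset.Ioc lo hi' | |(x : ℝ) - c| ≤ r}
  have hset : {ω | IsHighOnBall (fun x => ξ x ω) lo hi' c r y} = ⋂ x ∈ S, ξ x ⁻¹' Ici y := by
    ext ω
    simp [S, IsHighOnBall, and_imp]
  have hprod : μ.real (⋂ x ∈ S, ξ x ⁻¹' Ici y) = μ.real {ω | y ≤ ξ 0 ω} ^ S.card := by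
    rw [Measure.real, hi.measure_inter_preimage_eq_mul S fun _ _ => measurableSet_Ici,
      Finset.prod_congr rfl fun x _ => (hid x).measure_mem_eq measurableSet_Ici,
      Finset.prod_const, ENNReal.toReal_pow]
    rfl
  rw [hset, hprod, ← Real.rpow_natCast]
  exact Real.rpow_le_rpow_of_exponent_ge hq measureReal_le_one
    (card_le_of_abs_sub_le c hr fun x hx => (Finset.mem_filter.1 hx).2)

lemma measurableSet_isHighOnBall (lo hi c : ℤ) (r y : ℝ) :
    MeasurableSet[coordSigma ξ {x | (lo < x ∧ x ≤ hi) ∧ |(x : ℝ) - c| ≤ r}]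
      {ω | IsHighOnBall (fun x => ξ x ω) lo hi c r y} := by
  simp only [IsHighOnBall, ofPred_forall]
  exact MeasurableSet.iInter fun x => MeasurableSet.iInter fun h1 => MeasurableSet.iInter fun h2 =>
    MeasurableSet.iInter fun h3 =>
      measurableSet_le measurable_const (measurable_coordSigma (by exact ⟨⟨h1, h2⟩, h3⟩))

lemma measurableSet_isTameOffBall (lo hi c : ℤ) (r : ℝ) (I : ℕ) (R u : ℕ → ℝ) :
    MeasurableSet[coordSigma ξ {x | (lo < x ∧ x ≤ hi) ∧ r < |(x : ℝ) - c|}]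
      {ω | IsTameOffBall (fun x => ξ x ω) lo hi c r I R u} := by
  simp only [IsTameOffBall, ofPred_forall]
  refine MeasurableSet.iInter fun i => MeasurableSet.iInter fun _ => MeasurableSet.iInter fun x =>
    MeasurableSet.iInter fun h1 => MeasurableSet.iInter fun h2 => MeasurableSet.iInter fun h3 =>
    MeasurableSet.iInter fun _ => measurableSet_lt ?_ measurable_const
  exact (Measurable.neg (measurable_coordSigma (by exact ⟨⟨h1, h2⟩, h3⟩))).max measurable_const

lemma half_le_measureReal_isTameOffBall [IsProbabilityMeasure μ] (hξ : ∀ x, Measurable (ξ x))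
    (hid : ∀ x, IdentDistrib (ξ x) (ξ 0) μ μ) (lo hi c : ℤ) (r : ℝ) (I : ℕ)
    {R u l τ : ℕ → ℝ} (hR : ∀ i < I, 0 ≤ R i) (hlu : ∀ i < I, l i < u i)
    (hτ : ∀ i < I, μ.real {ω | l i < max (-ξ 0 ω) 0} ≤ τ i)
    (hsum : ∑ i ∈ Finset.range I, (2 * R i + 1) * τ i ≤ 1 / 2) :
    1 / 2 ≤ μ.real {ω | IsTameOffBall (fun x => ξ x ω) lo hi c r I R u} := by
  classical
  set S : ℕ → Finset ℤ := fun i => {x ∈ Finset.Ioc lo hi | |(x : ℝ) - c| ≤ R i}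
  have hsub : {ω | IsTameOffBall (fun x => ξ x ω) lo hi c r I R u}ᶜ ⊆
      ⋃ i ∈ Finset.range I, {ω | ∃ x ∈ S i, u i ≤ max (-ξ x ω) 0} := by
    intro ω hω
    simp only [IsTameOffBall, mem_compl_iff, mem_ofPred_eq, not_forall, not_lt] at hω
    obtain ⟨i, hiI, x, hlo, hhi, -, hR, hu⟩ := hω
    exact mem_iUnion₂.2 ⟨i, Finset.mem_range.2 hiI, x,
      Finset.mem_filter.2 ⟨Finset.mem_Ioc.2 ⟨hlo, hhi⟩, hR⟩, hu⟩
  have hscale : ∀ i < I, μ.real {ω | ∃ x ∈ S i, u i ≤ max (-ξ x ω) 0} ≤ (2 * R i + 1) * τ i :=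
    fun i hiI => (measureReal_exists_le_negPart_le hid (S i) (hlu i hiI) (hτ i hiI)).trans <|
      mul_le_mul_of_nonneg_right
        (card_le_of_abs_sub_le c (hR i hiI) fun x hx => (Finset.mem_filter.1 hx).2)
        (measureReal_nonneg.trans (hτ i hiI))
  have hcompl : μ.real {ω | IsTameOffBall (fun x => ξ x ω) lo hi c r I R u}ᶜ ≤ 1 / 2 :=
    calc _ ≤ ∑ i ∈ Finset.range I, μ.real {ω | ∃ x ∈ S i, u i ≤ max (-ξ x ω) 0} :=
          (measureReal_mono hsub (measure_ne_top _ _)).trans (measureReal_biUnion_finset_le _ _)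
      _ ≤ ∑ i ∈ Finset.range I, (2 * R i + 1) * τ i :=
          Finset.sum_le_sum fun i hiI => hscale i (Finset.mem_range.1 hiI)
      _ ≤ 1 / 2 := hsum
  have hm := coordSigma_le hξ _ _ (measurableSet_isTameOffBall (ξ := ξ) lo hi c r I R u)
  rw [probReal_compl_eq_one_sub hm] at hcompl
  linarith

lemma le_measureReal_isHighOnBall_inter_isTameOffBall [IsProbabilityMeasure μ]
    (hξ : ∀ x, Measurable (ξ x)) (hi : iIndepFun ξ μ)
    (hid : ∀ x, IdentDistrib (ξ x) (ξ 0) μ μ) (lo hi' c : ℤ) {r y : ℝ} (hr : 0 ≤ r)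
    (hq : 0 < μ.real {ω | y ≤ ξ 0 ω}) (I : ℕ)
    {R u l τ : ℕ → ℝ} (hR : ∀ i < I, 0 ≤ R i) (hlu : ∀ i < I, l i < u i)
    (hτ : ∀ i < I, μ.real {ω | l i < max (-ξ 0 ω) 0} ≤ τ i)
    (hsum : ∑ i ∈ Finset.range I, (2 * R i + 1) * τ i ≤ 1 / 2) :
    μ.real {ω | y ≤ ξ 0 ω} ^ (2 * r + 1) / 2 ≤
      μ.real ({ω | IsHighOnBall (fun x => ξ x ω) lo hi' c r y} ∩
        {ω | IsTameOffBall (fun x => ξ x ω) lo hi' c r I R u}) := by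
  have hdisj : Disjoint {x : ℤ | (lo < x ∧ x ≤ hi') ∧ |(x : ℝ) - c| ≤ r}
      {x : ℤ | (lo < x ∧ x ≤ hi') ∧ r < |(x : ℝ) - c|} :=
    Set.disjoint_left.2 fun x hin hout => hout.2.not_ge hin.2
  rw [measureReal_inter_of_coordSigma hξ hi hdisj (measurableSet_isHighOnBall ..)
    (measurableSet_isTameOffBall ..), div_eq_mul_one_div]
  exact mul_le_mul (rpow_le_measureReal_isHighOnBall hi hid lo hi' c hr hq)
    (half_le_measureReal_isTameOffBall hξ hid lo hi' c r I hR hlu hτ hsum) (by norm_num)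
    measureReal_nonneg

end Scenery

/-! ### Levels and blocks -/

section Levels

/-- The level `j_p = p ^ (3 * p)`. -/
noncomputable def level (p : ℕ) : ℝ := (p : ℝ) ^ (3 * p)

/-- The distance to the origin at which the `p`-th block of sites begins. It is negligible compared
with `level p ^ 2`, so that the potential is still of smaller order than `level p` there. -/
def blockStart (p : ℕ) : ℕ := p ^ (6 * p - 3)

variable {p : ℕ}

lemma le_level (hp : 1 ≤ p) : (p : ℝ) ≤ level p :=
  le_self_pow₀ (by exact_mod_cast hp) (by omega)

lemma tendsto_level : Tendsto level atTop atTop :=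
  tendsto_atTop_mono' _ (eventually_atTop.2 ⟨1, fun _ => le_level⟩) tendsto_natCast_atTop_atTop

lemma eventually_level_pos : ∀ᶠ p in atTop, 0 < level p := tendsto_level.eventually_gt_atTop 0

lemma blockStart_mul_pow_three (hp : 1 ≤ p) : (blockStart p : ℝ) * p ^ 3 = level p ^ 2 := by
  rw [blockStart, level, Nat.cast_pow, ← pow_add, ← pow_mul]
  congr 1
  omega

lemma blockStart_le_level_sq (hp : 1 ≤ p) : (blockStart p : ℝ) ≤ level p ^ 2 :=
  blockStart_mul_pow_three hp ▸ le_mul_of_one_le_right (Nat.cast_nonneg _)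
    (one_le_pow₀ (by exact_mod_cast hp))

lemma mul_level_sq_le_blockStart {q : ℕ} (hq : p < q) : p * level p ^ 2 ≤ blockStart q := by
  have : p * (p ^ (3 * p)) ^ 2 ≤ blockStart q :=
    calc p * (p ^ (3 * p)) ^ 2 = p ^ (6 * p + 1) := by ring
      _ ≤ q ^ (6 * p + 1) := Nat.pow_le_pow_left hq.le _
      _ ≤ q ^ (6 * q - 3) := Nat.pow_le_pow_right (by omega) (by omega)
  rw [level]
  exact_mod_cast this

lemma eventually_blockStart_add_lt (κ : ℝ) :
    ∀ᶠ p : ℕ in atTop, ∀ N : ℕ, (N : ℝ) ≤ κ * level p ^ 2 → ∀ q, p < q →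
      blockStart p + N < blockStart q := by
  filter_upwards [(tendsto_natCast_atTop_atTop (R := ℝ)).eventually_gt_atTop (1 + κ),
    eventually_ge_atTop 1, eventually_level_pos] with p hpκ hp hpos N hN q hq
  have : (blockStart p + N : ℝ) < blockStart q :=
    calc (blockStart p + N : ℝ) ≤ (1 + κ) * level p ^ 2 := by
          linarith [blockStart_le_level_sq hp]
      _ < p * level p ^ 2 := by gcongr
      _ ≤ blockStart q := mul_level_sq_le_blockStart hq
  exact_mod_cast this

/-- The number of steps in one stretch of the steered walk at scale `j`, chosen such that the
half-width `48 * L * √m` of the tube containing a walk steered in stretches of length `m` is at most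
`j / 100`. -/
noncomputable def stepLength (L j : ℝ) : ℕ := ⌊(j / (4800 * L)) ^ 2⌋₊

/-- The number of stretches of length `stepLength L j` that suffice to draw a valley of scale `j`;
it does not depend on `j`. -/
noncomputable def stepCount (L s : ℝ) : ℕ := ⌈2764800 * L ^ 2 / s⌉₊

/-- The number of sites allotted to a valley of scale `j`. -/
noncomputable def blockLength (L s j : ℝ) : ℕ := stepCount L s * stepLength L j

variable {L s j : ℝ}

lemma stepLength_le : (stepLength L j : ℝ) ≤ (j / (4800 * L)) ^ 2 := Nat.floor_le (sq_nonneg _)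

lemma sq_half_le_stepLength (hL : 0 < L) (hj : 9600 * L ≤ j) :
    (j / (9600 * L)) ^ 2 ≤ stepLength L j := by
  have hx : 1 ≤ j / (9600 * L) := (one_le_div (by positivity)).2 hj
  have hfloor : (j / (4800 * L)) ^ 2 < stepLength L j + 1 := Nat.lt_floor_add_one _
  have htwo : j / (4800 * L) = 2 * (j / (9600 * L)) := by field_simp; ring
  nlinarith

lemma one_le_stepLength (hL : 0 < L) (hj : 9600 * L ≤ j) : 1 ≤ stepLength L j := by
  have : (1 : ℝ) ≤ stepLength L j :=
    (one_le_pow₀ ((one_le_div (by positivity)).2 hj)).trans (sq_half_le_stepLength hL hj)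
  exact_mod_cast this

lemma mul_sqrt_stepLength_le (hL : 0 < L) (hj : 0 ≤ j) : 48 * L * √(stepLength L j) ≤ 0.01 * j := by
  have hsqrt : √(stepLength L j) ≤ j / (4800 * L) :=
    (Real.sqrt_le_left (by positivity)).2 stepLength_le
  rw [le_div_iff₀ (by positivity)] at hsqrt
  linarith

lemma nine_mul_le_blockLength (hL : 0 < L) (hs : 0 < s) (hj : 9600 * L ≤ j) :
    9 * j ≤ s / (32 * L) / √(stepLength L j) * blockLength L s j := by
  have hsqrt : j / (9600 * L) ≤ √(stepLength L j) :=
    Real.le_sqrt_of_sq_le (sq_half_le_stepLength hL hj)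
  have hcount : 2764800 * L ^ 2 / s ≤ stepCount L s := Nat.le_ceil _
  have hj0 : 0 < j := by linarith
  calc 9 * j = s / (32 * L) * (2764800 * L ^ 2 / s * (j / (9600 * L))) := by field_simp; norm_num
    _ ≤ s / (32 * L) * (stepCount L s * √(stepLength L j)) := by gcongr
    _ = s / (32 * L) * (stepCount L s * (stepLength L j / √(stepLength L j))) := by
        rw [Real.div_sqrt]
    _ = _ := by
        rw [blockLength, Nat.cast_mul]
        ring

lemma blockLength_le : (blockLength L s j : ℝ) ≤ stepCount L s / (4800 * L) ^ 2 * j ^ 2 := by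
  rw [blockLength, Nat.cast_mul]
  calc (stepCount L s * stepLength L j : ℝ) ≤ stepCount L s * (j / (4800 * L)) ^ 2 := by
        gcongr
        exact stepLength_le
    _ = _ := by ring

lemma tendsto_blockLength_add_one_mul (hL : 0 < L) {f : ℝ → ℝ} (hf : Tendsto f atTop (nhds 0)) :
    Tendsto (fun j => ((blockLength L s j + 1 : ℕ) : ℝ) * (f j / j ^ 2)) atTop (nhds 0) := by
  have hlim := hf.abs.const_mul (stepCount L s / (4800 * L) ^ 2 + 1)
  rw [abs_zero, mul_zero] at hlim
  refine squeeze_zero_norm' ?_ hlim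
  filter_upwards [eventually_ge_atTop 1] with j hj
  have hlen : ((blockLength L s j + 1 : ℕ) : ℝ) ≤ (stepCount L s / (4800 * L) ^ 2 + 1) * j ^ 2 := by
    push_cast
    linarith [blockLength_le (L := L) (s := s) (j := j), one_le_pow₀ hj (n := 2)]
  rw [norm_mul, norm_div, Real.norm_natCast, Real.norm_eq_abs, Real.norm_of_nonneg (sq_nonneg j)]
  calc _ ≤ (stepCount L s / (4800 * L) ^ 2 + 1) * j ^ 2 * (|f j| / j ^ 2) := by gcongr
    _ = _ := by field_simp

end Levels

/-! ### Almost sure behaviour along the levels -/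

section AlmostSure

variable {Ω : Type*} {mΩ : MeasurableSpace Ω} {μ : Measure Ω} {L s α ε ε' c₄ c₅ c₆ : ℝ}

lemma CenteredSteps.ae_eventually_abs_walk_lt [IsProbabilityMeasure μ] {Y : ℕ → Ω → ℝ}
    (hY : CenteredSteps μ Y L s) :
    ∀ᵐ ω ∂μ, ∀ᶠ p in atTop, ∀ k ≤ blockStart p, |walk Y k ω| < 0.01 * level p := by
  have hbc : ∀ᵐ ω ∂μ, ∀ᶠ p in atTop,
      ω ∉ {ω | ∃ k ≤ blockStart p, 0.01 * level p ≤ |walk Y k ω|} := by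
    refine ae_eventually_notMem_of_le_div_sq (C := s * 10000) ?_
    filter_upwards [eventually_ge_atTop 1, eventually_level_pos] with p hp hpos
    have : (0 : ℝ) < p := by exact_mod_cast hp
    have hmax := hY.measureReal_exists_le_abs_walk_mul_sq_le (blockStart p)
      (l := 0.01 * level p) (by positivity)
    set P := μ.real {ω | ∃ k ≤ blockStart p, 0.01 * level p ≤ |walk Y k ω|}
    have hstart : (0 : ℝ) < blockStart p := by
      rw [blockStart, Nat.cast_pow]
      positivity
    have hcube : P * p ^ 3 ≤ s * 10000 := by
      refine le_of_mul_le_mul_right ?_ hstart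
      rw [mul_pow, ← blockStart_mul_pow_three hp] at hmax
      linarith
    rw [le_div_iff₀ (by positivity)]
    refine le_trans ?_ hcube
    have : 0 ≤ P := measureReal_nonneg
    gcongr
    · exact_mod_cast hp
    · norm_num
  filter_upwards [hbc] with ω hω
  filter_upwards [hω] with p hp k hk
  exact not_le.1 fun h => hp ⟨k, hk, h⟩

lemma CenteredSteps.ae_eventually_abs_potential_le [IsProbabilityMeasure μ] {X V : ℤ → Ω → ℝ}
    (hX : CenteredSteps μ X L s) (hV : IsPotential X V) :
    ∀ᵐ ω ∂μ, ∀ᶠ p in atTop, ∀ n : ℕ, n ≤ blockStart p →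
      |V n ω| ≤ 0.01 * level p ∧ |V (-n) ω| ≤ 0.01 * level p := by
  filter_upwards [(hX.right 0).ae_eventually_abs_walk_lt, (hX.left 0).ae_eventually_abs_walk_lt]
    with ω hright hleft
  filter_upwards [hright, hleft] with p hright hleft n hn
  have hVr := hV.sub_eq_walk_right 0 n ω
  have hVl := hV.sub_eq_walk_left 0 n ω
  rw [hV.zero, sub_zero] at hVr hVl
  rw [zero_add] at hVr
  rw [zero_sub] at hVl
  exact ⟨hVr ▸ (hright n hn).le, hVl ▸ (hleft n hn).le⟩

lemma epsScale_rpow_neg_half (α c₄ j : ℝ) (i : ℕ) :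
    epsScale α c₄ j i ^ (-(1 / 2) : ℝ) = Real.exp (c₄ * gamScale α j (i + 2) / 2) := by
  rw [epsScale, ← Real.exp_mul]
  congr 1
  ring

/-- The thin tail condition of order `2 + ε` on the negative part of `Y`. -/
def HasThinNegTail (μ : Measure Ω) (Y : Ω → ℝ) (ε : ℝ) : Prop :=
  ∀ᶠ l in atTop, μ.real {ω | l < max (-Y ω) 0} ≤ 1 / Real.log l ^ (2 + ε)

lemma HasThinNegTail.eventually_exp {Y : Ω → ℝ} (hY : HasThinNegTail μ Y ε) :
    ∀ᶠ y in atTop, μ.real {ω | Real.exp y < max (-Y ω) 0} ≤ 1 / y ^ (2 + ε) := by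
  filter_upwards [Real.tendsto_exp_atTop.eventually hY] with y hy
  rwa [Real.log_exp] at hy

lemma eventually_sq_le_level_rpow {β : ℝ} (hβ : 0 < β) :
    ∀ᶠ p : ℕ in atTop, (p : ℝ) ^ 2 ≤ level p ^ β := by
  filter_upwards [(tendsto_natCast_atTop_atTop (R := ℝ)).eventually_ge_atTop (2 / (3 * β)),
    eventually_ge_atTop 1] with p hp hp1
  rw [level, ← Real.rpow_natCast, ← Real.rpow_natCast, ← Real.rpow_mul (Nat.cast_nonneg p)]
  refine Real.rpow_le_rpow_of_exponent_le (by exact_mod_cast hp1) ?_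
  rw [div_le_iff₀ (by positivity)] at hp
  push_cast
  linarith

lemma gamScale_two_rpow {j : ℝ} (hj : 0 < j) (hc₄ : 0 < c₄) :
    (c₄ * gamScale α j 2 / 4) ^ (2 + ε) = (c₄ / 4) ^ (2 + ε) *
      (j ^ ((1 - α) ^ 2 * (2 + ε) - (2 + ε')) * j ^ (2 + ε')) := by
  have := gamScale_pos (α := α) hj 2
  rw [mul_div_right_comm, Real.mul_rpow (by positivity) (by positivity), gamScale,
    ← Real.rpow_mul hj.le, ← Real.rpow_add hj, sub_add_cancel]

lemma eventually_mul_thinTail_le_div_sq (hε' : 0 < ε') (hc₄ : 0 < c₄)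
    (hβ : 0 < (1 - α) ^ 2 * (2 + ε) - (2 + ε')) :
    ∀ᶠ p : ℕ in atTop, (2 * level p ^ (2 + ε') + 1) *
        (1 / (c₄ * gamScale α (level p) 2 / 4) ^ (2 + ε)) ≤
      3 / (c₄ / 4) ^ (2 + ε) / (p : ℝ) ^ 2 := by
  filter_upwards [eventually_sq_le_level_rpow hβ, tendsto_level.eventually_ge_atTop 1,
    eventually_ge_atTop 1] with p hp hj hp1
  have : (0 : ℝ) < p := by exact_mod_cast hp1
  have hj0 : 0 < level p := by linarith
  have hvol : 2 * level p ^ (2 + ε') + 1 ≤ 3 * level p ^ (2 + ε') := by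
    linarith [Real.one_le_rpow hj (z := 2 + ε') (by linarith)]
  rw [gamScale_two_rpow (ε' := ε') hj0 hc₄, mul_one_div, div_div]
  calc _ ≤ 3 * level p ^ (2 + ε') /
        ((c₄ / 4) ^ (2 + ε) * ((p : ℝ) ^ 2 * level p ^ (2 + ε'))) := by gcongr
    _ = _ := by field_simp

variable {ξ : ℤ → Ω → ℝ}

lemma ae_eventually_negPart_lt [IsFiniteMeasure μ] (hid : ∀ x, IdentDistrib (ξ x) (ξ 0) μ μ)
    (hα1 : α < 1) (hε' : 0 < ε') (hc₄ : 0 < c₄) (hβ : 0 < (1 - α) ^ 2 * (2 + ε) - (2 + ε'))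
    (htail : HasThinNegTail μ (ξ 0) ε) :
    ∀ᵐ ω ∂μ, ∀ᶠ p in atTop, ∀ x : ℤ, |(x : ℝ)| ≤ level p ^ (2 + ε') →
      max (-ξ x ω) 0 < epsScale α c₄ (level p) 0 ^ (-(1 / 2) : ℝ) := by
  set S : ℕ → Finset ℤ := fun p => Finset.Icc (-⌊level p ^ (2 + ε')⌋) ⌊level p ^ (2 + ε')⌋
  have hmem : ∀ p (x : ℤ), x ∈ S p ↔ |(x : ℝ)| ≤ level p ^ (2 + ε') := fun p x => by
    rw [Finset.mem_Icc, ← abs_le, Int.le_floor, Int.cast_abs]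
  have hheight : Tendsto (fun p => c₄ * gamScale α (level p) 2 / 4) atTop atTop :=
    (((tendsto_rpow_atTop (pow_pos (sub_pos.2 hα1) 2)).comp tendsto_level).const_mul_atTop
      hc₄).atTop_div_const (by norm_num)
  have hbc : ∀ᵐ ω ∂μ, ∀ᶠ p in atTop, ω ∉
      {ω | ∃ x ∈ S p, epsScale α c₄ (level p) 0 ^ (-(1 / 2) : ℝ) ≤ max (-ξ x ω) 0} := by
    refine ae_eventually_notMem_of_le_div_sq (C := 3 / (c₄ / 4) ^ (2 + ε)) ?_
    filter_upwards [eventually_mul_thinTail_le_div_sq hε' hc₄ hβ, eventually_level_pos,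
      hheight.eventually htail.eventually_exp, hheight.eventually_gt_atTop 0] with p hp hj htail hγ
    have hcard : ((S p).card : ℝ) ≤ 2 * level p ^ (2 + ε') + 1 :=
      card_le_of_abs_sub_le 0 (by positivity) fun x hx => by simpa using (hmem p x).1 hx
    refine (measureReal_exists_le_negPart_le hid (S p) ?_ htail).trans
      ((mul_le_mul_of_nonneg_right hcard (by positivity)).trans hp)
    rw [epsScale_rpow_neg_half, Real.exp_lt_exp, zero_add]
    linarith
  filter_upwards [hbc] with ω hω
  filter_upwards [hω] with p hp x hx
  exact not_le.1 fun h => hp ⟨x, (hmem p x).2 hx, h⟩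

end AlmostSure

/-! ### Probability of a good block -/

section Probability

variable {Ω : Type*} {mΩ : MeasurableSpace Ω} {μ : Measure Ω} [IsProbabilityMeasure μ]
  {X V ξ : ℤ → Ω → ℝ} {L s α ε ε' c₄ c₅ c₆ : ℝ}

lemma CenteredSteps.eventually_pow_le_measureReal_leftValleyEvent (hX : CenteredSteps μ X L s)
    (hs : 0 < s) (hL : 0 < L) (hV : IsPotential X V) :
    ∀ᶠ j in atTop, ∀ t : ℤ, (s / (128 * L ^ 2)) ^ stepCount L s ≤
      μ.real (leftValleyEvent V t (blockLength L s j) j) := by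
  filter_upwards [eventually_ge_atTop (9600 * L)] with j hj t
  have hj0 : 0 < j := by linarith
  exact hX.pow_le_measureReal_leftValleyEvent hs hL hV t hj0 (one_le_stepLength hL hj)
    (mul_sqrt_stepLength_le hL hj0.le) (nine_mul_le_blockLength hL hs hj)

/-- The event that, seen from `t`, the potential has a valley of scale `j` with bottom `t + b`
inside a block, with the profile around the bottom required by `goodPair`. -/
def deepValleyEvent (V : ℤ → Ω → ℝ) (α ε' c₄ c₅ c₆ : ℝ) (t : ℤ) (N b : ℕ) (j : ℝ) : Set Ω :=
  valleyEvent V t N b j (bigM α ε' j - 1) (profileRadius α ε' c₅ j) (profileHeight α ε' c₄ c₆ j)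

lemma CenteredSteps.eventually_le_measureReal_iUnion_deepValleyEvent (hX : CenteredSteps μ X L s)
    (hs : 0 < s) (hL : 0 < L) (hV : IsPotential X V) (hα0 : 0 < α) (hα1 : α < 1) (hε' : 0 < ε')
    (hc₄ : 0 < c₄) (hc₅ : 0 < c₅) (hc₆ : 1 ≤ c₆) :
    ∀ᶠ j in atTop, ∀ t : ℤ, (s / (128 * L ^ 2)) ^ stepCount L s / 2 ≤
      μ.real (⋃ b ∈ Finset.range (blockLength L s j + 1),
        deepValleyEvent V α ε' c₄ c₅ c₆ t (blockLength L s j) b j) := by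
  set c := (s / (128 * L ^ 2)) ^ stepCount L s
  have hc : 0 < c / 2 := by positivity
  have hsum := (tendsto_sum_profile hα0 hα1 hε' hc₄ hc₅ hc₆ hL.le).const_mul
    (4 * L * persistConst L s / 9)
  rw [mul_zero] at hsum
  filter_upwards [eventually_ge_atTop (9600 * L),
    eventually_two_mul_profileHeight_le hα0 hα1 hε' hc₄ hc₆,
    (tendsto_blockLength_add_one_mul (s := s) hL hsum).eventually_le_const hc]
    with j hj hheight hloss t
  have hj0 : 0 < j := by linarith
  have hprob := hX.sub_le_measureReal_iUnion_valleyEvent hs hL hV t hj0 (one_le_stepLength hL hj)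
    (mul_sqrt_stepLength_le hL hj0.le) (nine_mul_le_blockLength hL hs hj)
    (I := bigM α ε' j - 1) (fun i _ => one_le_profileRadius (α := α) (ε' := ε') hc₅ hj0 i)
    (fun i _ => profileHeight_nonneg (α := α) (ε' := ε') hc₄ hc₆ hj0 i) (fun i _ => hheight i)
  refine le_trans ?_ hprob
  have hrw : ∀ S : ℝ, 4 * L * persistConst L s / (9 * j ^ 2) * S =
      4 * L * persistConst L s / 9 * S / j ^ 2 := fun S => by ring
  rw [hrw]
  exact le_sub_comm.1 (hloss.trans_eq (sub_half c).symm)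

/-- The event that the scenery is at least `y` on the innermost ball around `t + b` and has the
negative parts allowed by `goodPair` on the other balls. -/
def goodSceneryEvent (ξ : ℤ → Ω → ℝ) (α ε' c₄ c₅ c₆ y : ℝ) (t : ℤ) (N b : ℕ) (j : ℝ) : Set Ω :=
  {ω | IsHighOnBall (fun x => ξ x ω) t (t + N) (t + b)
      (c₅ * gamScale α j (bigM α ε' j - 1) ^ (2 + ε')) y} ∩
    {ω | IsTameOffBall (fun x => ξ x ω) t (t + N) (t + b)
      (c₅ * gamScale α j (bigM α ε' j - 1) ^ (2 + ε')) (bigM α ε' j - 1)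
      (fun i => c₆ * gamScale α j i ^ (2 + ε')) fun i => epsScale α c₄ j i ^ (-(1 / 2) : ℝ)}

lemma eventually_rpow_le_measureReal_goodSceneryEvent (hξ : ∀ x, Measurable (ξ x))
    (hi : iIndepFun ξ μ) (hid : ∀ x, IdentDistrib (ξ x) (ξ 0) μ μ) (hα0 : 0 < α) (hα1 : α < 1)
    (hε' : 0 < ε') (hc₄ : 0 < c₄) (hc₅ : 0 ≤ c₅) (hc₆ : 1 ≤ c₆)
    (hβ : 0 < (1 - α) ^ 2 * (2 + ε) - (2 + ε')) (htail : HasThinNegTail μ (ξ 0) ε) {y : ℝ}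
    (hq : 0 < μ.real {ω | y ≤ ξ 0 ω}) :
    ∀ᶠ j in atTop, ∀ (t : ℤ) (N b : ℕ), μ.real {ω | y ≤ ξ 0 ω} ^
        (2 * (c₅ * gamScale α j (bigM α ε' j - 1) ^ (2 + ε')) + 1) / 2 ≤
      μ.real (goodSceneryEvent ξ α ε' c₄ c₅ c₆ y t N b j) := by
  obtain ⟨A, hA⟩ := eventually_atTop.1 htail.eventually_exp
  filter_upwards [eventually_gt_atTop 0, eventually_le_gamScale hα1 hε' hc₄ A,
    (tendsto_sum_ballSize_mul hα0 hα1 hε' hc₄ hc₆ hβ).eventually_le_const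
      (show (0 : ℝ) < 1 / 2 by norm_num)] with j hj hγA hsum t N b
  have hγ := gamScale_pos (α := α) hj
  refine le_measureReal_isHighOnBall_inter_isTameOffBall hξ hi hid t (t + N) (t + b)
    (mul_nonneg hc₅ (Real.rpow_nonneg (hγ _).le _)) hq _
    (l := fun i => Real.exp (c₄ * gamScale α j (i + 2) / 4))
    (τ := fun i => 1 / (c₄ * gamScale α j (i + 2) / 4) ^ (2 + ε))
    (fun i _ => mul_nonneg (by linarith) (Real.rpow_nonneg (hγ _).le _)) (fun i _ => ?_)
    (fun i hiM => hA _ (hγA i hiM)) ?_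
  · rw [epsScale_rpow_neg_half, Real.exp_lt_exp]
    linarith [mul_pos hc₄ (hγ (i + 2))]
  · simpa only [ballSize, mul_assoc] using hsum

lemma log_log_level_le {p : ℕ} (hlog : 0 < Real.log (level p)) :
    Real.log (Real.log (level p)) ≤ 2 * Real.log (3 * p) := by
  have hlevel : Real.log (level p) ≤ (3 * p : ℝ) ^ 2 := by
    have := Real.log_le_self (Nat.cast_nonneg p)
    rw [level, Real.log_pow]
    push_cast
    nlinarith [Nat.cast_nonneg (α := ℝ) p]
  calc Real.log (Real.log (level p)) ≤ Real.log ((3 * p : ℝ) ^ 2) := Real.log_le_log hlog hlevel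
    _ = 2 * Real.log (3 * p) := by rw [Real.log_pow, Nat.cast_two]

lemma eventually_div_le_rpow {q : ℝ} (hα0 : 0 < α) (hα1 : α < 1) (hε' : 0 < ε')
    (hq0 : 0 < q) (hq1 : q ≤ 1) (hq : c₅ * |Real.log q| < 1 / 5) :
    ∀ᶠ p : ℕ in atTop, q / 6 / p ≤
      q ^ (2 * (c₅ * gamScale α (level p) (bigM α ε' (level p) - 1) ^ (2 + ε')) + 1) / 2 := by
  have hloglog := Real.tendsto_log_atTop.comp (Real.tendsto_log_atTop.comp tendsto_level)
  filter_upwards [eventually_ge_atTop 1, eventually_level_pos,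
    tendsto_level.eventually ((tendsto_scaleThreshold hα1 hε').eventually_gt_atTop 1),
    tendsto_level.eventually (eventually_scaleThreshold_lt hα0 hε'),
    (Real.tendsto_log_atTop.comp tendsto_level).eventually_gt_atTop 0,
    hloglog.eventually_ge_atTop 0] with p hp hj hR hRj hlog hloglog
  have hp0 : (0 : ℝ) < p := by exact_mod_cast hp
  have hγ := gamScale_bigM_sub_one_rpow_le hα0 hα1 hε' hj hR hRj hloglog
  have hγ0 := Real.rpow_nonneg (gamScale_pos (α := α) hj (bigM α ε' (level p) - 1)).le (2 + ε')
  set g := gamScale α (level p) (bigM α ε' (level p) - 1) ^ (2 + ε')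
  rw [abs_of_nonpos (Real.log_nonpos hq0.le hq1)] at hq
  have hcost : c₅ * -Real.log q * g ≤ 1 / 5 * (2 * Real.log (3 * p)) :=
    mul_le_mul hq.le (hγ.trans (log_log_level_le hlog)) hγ0 (by norm_num)
  have hlogp : 0 ≤ Real.log (3 * p) := by
    linarith [hloglog.trans (log_log_level_le hlog)]
  have hexp : Real.log q - Real.log (3 * p) ≤ Real.log q * (2 * (c₅ * g) + 1) := by linarith
  calc q / 6 / p = Real.exp (Real.log q - Real.log (3 * p)) / 2 := by
        rw [Real.exp_sub, Real.exp_log hq0, Real.exp_log (by positivity)]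
        ring
    _ ≤ _ := by
        rw [Real.rpow_def_of_pos hq0]
        gcongr

end Probability

/-! ### The laws of the environment and of the scenery -/

section Environment

variable {Ω : Type*} {mΩ : MeasurableSpace Ω} {μ : Measure Ω}

lemma measurable_log_odds : Measurable fun z : ℝ => Real.log ((1 - z) / z) := by fun_prop

lemma abs_log_odds_le {δ z : ℝ} (hδ : 0 < δ) (hz : δ ≤ z) (hz' : z ≤ 1 - δ) :
    |Real.log ((1 - z) / z)| ≤ Real.log ((1 - δ) / δ) := by
  have hz0 : 0 < z := hδ.trans_le hz
  have hz1 : 0 < 1 - z := by linarith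
  have hδ1 : 0 < 1 - δ := by linarith
  refine abs_le'.2 ⟨Real.log_le_log (by positivity) (by gcongr), ?_⟩
  rw [← Real.log_inv, inv_div]
  exact Real.log_le_log (by positivity) (div_le_div₀ hδ1.le hz' hδ (by linarith))

lemma centeredSteps_log_odds {ι : Type*} {env : ι → Ω → ℝ} {i₀ : ι} {δ : ℝ} (hδ : 0 < δ)
    (hmeas : ∀ i, Measurable (env i)) (hindep : iIndepFun env μ)
    (hident : ∀ i, IdentDistrib (env i) (env i₀) μ μ)
    (hell : ∀ i, ∀ᵐ ω ∂μ, δ ≤ env i ω ∧ env i ω ≤ 1 - δ)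
    (hmean : ∫ ω, Real.log ((1 - env i₀ ω) / env i₀ ω) ∂μ = 0) :
    CenteredSteps μ (fun i ω => Real.log ((1 - env i ω) / env i ω)) (Real.log ((1 - δ) / δ))
      (variance (fun ω => Real.log ((1 - env i₀ ω) / env i₀ ω)) μ) where
  measurable i := measurable_log_odds.comp (hmeas i)
  indep := hindep.comp _ fun _ => measurable_log_odds
  bounded i := (hell i).mono fun _ h => abs_log_odds_le hδ h.1 h.2
  integral_eq_zero i := ((hident i).comp measurable_log_odds).integral_eq.trans hmean
  integral_sq i := by
    have hlog : Measurable fun ω => Real.log ((1 - env i₀ ω) / env i₀ ω) :=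
      measurable_log_odds.comp (hmeas i₀)
    rw [variance_of_integral_eq_zero hlog.aemeasurable hmean]
    exact ((hident i).comp (measurable_log_odds.pow_const 2)).integral_eq

lemma isPotential_of_eq_sum {X V : ℤ → Ω → ℝ}
    (hpos : ∀ x : ℤ, 0 ≤ x → ∀ ω, V x ω = ∑ i ∈ Finset.range x.toNat, X ((i : ℤ) + 1) ω)
    (hneg : ∀ x : ℤ, x < 0 → ∀ ω, V x ω = -∑ i ∈ Finset.range (-x).toNat, X (x + 1 + (i : ℤ)) ω) :
    IsPotential X V where
  zero ω := by simp [hpos 0 le_rfl]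
  add_one x ω := by
    rcases le_or_gt 0 x with hx | hx
    · obtain ⟨n, rfl⟩ := Int.eq_ofNat_of_zero_le hx
      rw [hpos n hx, hpos (n + 1) (by omega), show ((n : ℤ) + 1).toNat = n + 1 by omega,
        Int.toNat_natCast, Finset.sum_range_succ]
    · obtain ⟨n, rfl⟩ : ∃ n : ℕ, x = -(n : ℤ) - 1 := ⟨(-x).toNat - 1, by omega⟩
      have hn : V (-(n : ℤ)) ω = -∑ i ∈ Finset.range n, X (-(n : ℤ) + 1 + i) ω := by
        rcases n.eq_zero_or_pos with rfl | hn
        · simp [hpos 0 le_rfl]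
        · rw [hneg _ (by omega), neg_neg, Int.toNat_natCast]
      rw [hneg _ hx, show (-(-(n : ℤ) - 1)).toNat = n + 1 by omega, Finset.sum_range_succ',
        sub_add_cancel, hn, Nat.cast_zero, add_zero, neg_add, neg_add_cancel_right]
      simp only [Nat.cast_add_one, add_assoc, add_comm (1 : ℤ)]

lemma measureReal_essSup_sub_le_pos [IsProbabilityMeasure μ] {f : Ω → ℝ} {ρ : ℝ} (hρ : 0 < ρ) :
    0 < μ.real {ω | essSup f μ - ρ ≤ f ω} := by
  have hco : IsCoboundedUnder (· ≤ ·) (ae μ) f := by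
    by_contra hco
    have hall : ∀ᵐ ω ∂μ, ∀ n : ℕ, f ω ≤ -n := ae_all_iff.2 fun n => by
      by_contra hn
      have hfreq : ∃ᶠ ω in ae μ, -(n : ℝ) ≤ f ω :=
        (not_eventually.1 hn).mono fun _ h => (not_le.1 h).le
      exact hco (IsCoboundedUnder.of_frequently_ge hfreq)
    obtain ⟨ω, hω⟩ := hall.exists
    obtain ⟨n, hn⟩ := exists_nat_gt (-f ω)
    linarith [hω n]
  have hfreq : ∃ᶠ ω in ae μ, essSup f μ - ρ ≤ f ω :=
    (frequently_lt_of_lt_limsup hco (sub_lt_self _ hρ)).mono fun _ h => h.le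
  exact ENNReal.toReal_pos (frequently_ae_iff.1 hfreq) (measure_ne_top μ _)

end Environment

/-! ### Good blocks -/

section GoodBlocks

/-- The sites `t ≤ |x| ≤ t + N`, with one copy for the steps of the potential (`Sum.inl`) and one
for the scenery (`Sum.inr`). -/
def blockSites (t N : ℕ) : Set (ℤ ⊕ ℤ) :=
  {i | (t : ℤ) ≤ |Sum.elim id id i| ∧ |Sum.elim id id i| ≤ t + N}

lemma disjoint_blockSites {t N t' : ℕ} (N' : ℕ) (h : t + N < t') :
    Disjoint (blockSites t N) (blockSites t' N') :=
  disjoint_left.2 fun _ hi hi' => by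
    have := hi.2.trans_lt (by exact_mod_cast h : (t + N : ℤ) < t')
    exact this.not_ge hi'.1

/-- The event that the block of length `N` starting at `t` carries a good valley for `goodPair`:
the potential has the required left shape at `-t` and, for some `b`, the required valley with bottom
`t + b`, around which the scenery is as required. -/
def goodBlockEvent {Ω : Type*} (V ξ : ℤ → Ω → ℝ) (α ε' c₄ c₅ c₆ y : ℝ) (t N : ℕ) (j : ℝ) : Set Ω :=
  leftValleyEvent V (-t) N j ∩ ⋃ b ∈ Finset.range (N + 1),
    (deepValleyEvent V α ε' c₄ c₅ c₆ t N b j ∩ goodSceneryEvent ξ α ε' c₄ c₅ c₆ y t N b j)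

variable {Ω : Type*} {X V ξ : ℤ → Ω → ℝ} {L s α ε ε' c₄ c₅ c₆ y : ℝ}

lemma measurableSet_goodSceneryEvent (t : ℤ) (N b : ℕ) (j : ℝ) :
    MeasurableSet[coordSigma ξ (Ioc t (t + N))] (goodSceneryEvent ξ α ε' c₄ c₅ c₆ y t N b j) :=
  (coordSigma_mono (fun _ hx => hx.1) _ (measurableSet_isHighOnBall t (t + N) (t + b) _ y)).inter
    (coordSigma_mono (fun _ hx => hx.1) _ (measurableSet_isTameOffBall t (t + N) (t + b) _ _ _ _))

lemma measurableSet_goodBlockEvent (hV : IsPotential X V) (t N : ℕ) (j : ℝ) :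
    MeasurableSet[coordSigma (Sum.elim X ξ) (blockSites t N)]
      (goodBlockEvent V ξ α ε' c₄ c₅ c₆ y t N j) := by
  have hleft : coordSigma X (Ioc (-t - N : ℤ) (-t)) ≤
      coordSigma (Sum.elim X ξ) (blockSites t N) :=
    coordSigma_le_coordSigma fun x hx => measurable_coordSigma (i := Sum.inl x) (by
      obtain ⟨hx1, hx2⟩ := hx
      exact ⟨le_abs.2 (.inr (by simp; omega)), abs_le.2 (by simp; omega)⟩)
  have hright : coordSigma X (Ioc (t : ℤ) (t + N)) ≤
      coordSigma (Sum.elim X ξ) (blockSites t N) :=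
    coordSigma_le_coordSigma fun x hx => measurable_coordSigma (i := Sum.inl x)
      ⟨le_abs.2 (.inl hx.1.le), abs_le.2 ⟨by simp; linarith [hx.1], hx.2⟩⟩
  have hscenery : coordSigma ξ (Ioc (t : ℤ) (t + N)) ≤
      coordSigma (Sum.elim X ξ) (blockSites t N) :=
    coordSigma_le_coordSigma fun x hx => measurable_coordSigma (i := Sum.inr x)
      ⟨le_abs.2 (.inl hx.1.le), abs_le.2 ⟨by simp; linarith [hx.1], hx.2⟩⟩
  refine (hleft _ (hV.measurableSet_leftValleyEvent _ N j)).inter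
    (Finset.measurableSet_biUnion _ fun b hb => ?_)
  exact (hright _ (hV.measurableSet_valleyEvent t (Finset.mem_range_succ_iff.1 hb) j _ _ _)).inter
    (hscenery _ (measurableSet_goodSceneryEvent t N b j))

lemma goodPair_of_mem_goodBlockEvent {a ρ j : ℝ} {t N : ℕ} {ω : Ω} (hj : 0 < j) (hc : c₅ ≤ c₆)
    (hc₆ : 1 ≤ c₆) (hω : ω ∈ goodBlockEvent V ξ α ε' c₄ c₅ c₆ (a - ρ) t N j)
    (hflat : ∀ n : ℕ, n ≤ t → |V n ω| ≤ 0.01 * j ∧ |V (-n) ω| ≤ 0.01 * j)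
    (hneg : ∀ x : ℤ, |(x : ℝ)| ≤ j ^ (2 + ε') →
      max (-ξ x ω) 0 < epsScale α c₄ j 0 ^ (-(1 / 2) : ℝ)) :
    goodPair α ε' c₄ c₅ c₆ a ρ (fun x => V x ω) (fun x => ξ x ω) j := by
  obtain ⟨hleft, hright⟩ := hω
  simp only [mem_iUnion] at hright
  obtain ⟨b, _, ⟨hvalley, hsteep⟩, hhigh, htame⟩ := hright
  exact IsFlatThenValley.goodPair ⟨hj, fun n hn => (hflat n hn).1, hvalley⟩ hc hc₆ hsteep
    (fun n hn => (hflat n hn).2) hleft hneg hhigh htame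

variable {mΩ : MeasurableSpace Ω} {μ : Measure Ω} [IsProbabilityMeasure μ]

lemma mul_mul_le_measureReal_goodBlockEvent (hX : ∀ i, Measurable (X i))
    (hξ : ∀ x, Measurable (ξ x)) (hi : iIndepFun (Sum.elim X ξ) μ) (hV : IsPotential X V)
    {t N : ℕ} {j u v σ : ℝ} (hv0 : 0 ≤ v) (hσ0 : 0 ≤ σ)
    (hu : u ≤ μ.real (leftValleyEvent V (-t) N j))
    (hv : v ≤ μ.real (⋃ b ∈ Finset.range (N + 1), deepValleyEvent V α ε' c₄ c₅ c₆ t N b j))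
    (hσ : ∀ b : ℕ, σ ≤ μ.real (goodSceneryEvent ξ α ε' c₄ c₅ c₆ y t N b j)) :
    σ * (u * v) ≤ μ.real (goodBlockEvent V ξ α ε' c₄ c₅ c₆ y t N j) := by
  have hiX : iIndepFun X μ := iIndepFun.precomp (g := Sum.inl) Sum.inl_injective hi
  have hm : ∀ i, Measurable (Sum.elim X ξ i) := Sum.forall.2 ⟨hX, hξ⟩
  have hleft := hV.measurableSet_leftValleyEvent (-t) N j
  have hdeep : ∀ b < N + 1, MeasurableSet[coordSigma X (Ioc (t : ℤ) (t + N))]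
      (deepValleyEvent V α ε' c₄ c₅ c₆ t N b j) := fun b hb =>
    hV.measurableSet_valleyEvent t (Nat.lt_succ_iff.1 hb) j _ _ _
  have henv : u * v ≤ μ.real (⋃ b ∈ Finset.range (N + 1),
      (leftValleyEvent V (-t) N j ∩ deepValleyEvent V α ε' c₄ c₅ c₆ t N b j)) := by
    have hdisj : Disjoint (Ioc (-t - N : ℤ) (-t)) (Ioc (t : ℤ) (t + N)) :=
      Ioc_disjoint_Ioc_of_le (by omega)
    rw [← inter_iUnion₂, measureReal_inter_of_coordSigma hX hiX hdisj hleft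
      (Finset.measurableSet_biUnion _ fun b hb => hdeep b (Finset.mem_range.1 hb))]
    exact mul_le_mul hu hv hv0 measureReal_nonneg
  have hXsum : ∀ S : Set ℤ, coordSigma X S ≤ coordSigma (Sum.elim X ξ) (range Sum.inl) := fun S =>
    coordSigma_le_coordSigma fun x _ => measurable_coordSigma (i := Sum.inl x) (mem_range_self x)
  have hξsum : coordSigma ξ (Ioc (t : ℤ) (t + N)) ≤
      coordSigma (Sum.elim X ξ) (range Sum.inr) :=
    coordSigma_le_coordSigma fun x _ => measurable_coordSigma (i := Sum.inr x) (mem_range_self x)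
  have hscenery := mul_measureReal_biUnion_le hm hi isCompl_range_inl_range_inr.disjoint (N + 1)
    (fun b hb => (hXsum _ _ hleft).inter (hXsum _ _ (hdeep b hb)))
    (fun b _ => hξsum _ (measurableSet_goodSceneryEvent t N b j)) hσ0 fun b _ => hσ b
  rw [goodBlockEvent, inter_iUnion₂]
  simp only [inter_assoc] at hscenery
  exact (mul_le_mul_of_nonneg_left henv hσ0).trans hscenery

lemma CenteredSteps.exists_eventually_div_le_measureReal_goodBlockEvent
    (hX : CenteredSteps μ X L s) (hs : 0 < s) (hL : 0 < L) (hV : IsPotential X V)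
    (hξ : ∀ x, Measurable (ξ x)) (hiξ : iIndepFun ξ μ)
    (hid : ∀ x, IdentDistrib (ξ x) (ξ 0) μ μ) (hi : iIndepFun (Sum.elim X ξ) μ)
    (hα0 : 0 < α) (hα1 : α < 1) (hε' : 0 < ε') (hc₄ : 0 < c₄) (hc₅ : 0 < c₅) (hc₆ : 1 ≤ c₆)
    (hβ : 0 < (1 - α) ^ 2 * (2 + ε) - (2 + ε')) (htail : HasThinNegTail μ (ξ 0) ε)
    (hq0 : 0 < μ.real {ω | y ≤ ξ 0 ω}) (hq : c₅ * |Real.log (μ.real {ω | y ≤ ξ 0 ω})| < 1 / 5) :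
    ∃ C > 0, ∀ᶠ p : ℕ in atTop, C / p ≤ μ.real (goodBlockEvent V ξ α ε' c₄ c₅ c₆ y
      (blockStart p) (blockLength L s (level p)) (level p)) := by
  set q := μ.real {ω | y ≤ ξ 0 ω}
  set κ := (s / (128 * L ^ 2)) ^ stepCount L s
  have : 0 < κ := by positivity
  refine ⟨q / 6 * (κ * (κ / 2)), by positivity, ?_⟩
  filter_upwards [
    tendsto_level.eventually (hX.eventually_pow_le_measureReal_leftValleyEvent hs hL hV),
    tendsto_level.eventually (hX.eventually_le_measureReal_iUnion_deepValleyEvent hs hL hV hα0 hα1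
      hε' hc₄ hc₅ hc₆),
    tendsto_level.eventually (eventually_rpow_le_measureReal_goodSceneryEvent hξ hiξ hid hα0 hα1
      hε' hc₄ hc₅.le hc₆ hβ htail hq0),
    eventually_div_le_rpow hα0 hα1 hε' hq0 measureReal_le_one hq]
    with p hleft hdeep hscenery hrate
  rw [mul_div_right_comm]
  exact mul_mul_le_measureReal_goodBlockEvent hX.measurable hξ hi hV (by positivity) (by positivity)
    (hleft _) (hdeep _) fun b => hrate.trans (hscenery _ _ b)

theorem stmt9_general (hX : CenteredSteps μ X L s) (hs : 0 < s) (hV : IsPotential X V)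
    (hξ : ∀ x, Measurable (ξ x)) (hiξ : iIndepFun ξ μ)
    (hid : ∀ x, IdentDistrib (ξ x) (ξ 0) μ μ)
    (hξX : IndepFun (fun ω x => ξ x ω) (fun ω i => X i ω) μ) {a ρ : ℝ}
    (htail : HasThinNegTail μ (ξ 0) ε) (hα0 : 0 < α) (hα1 : α < 1) (hε' : 0 < ε')
    (hβ : 0 < (1 - α) ^ 2 * (2 + ε) - (2 + ε')) (hc₄ : 0 < c₄) (hc₅ : 0 < c₅) (hc : c₅ ≤ c₆)
    (hc₆ : 1 ≤ c₆) (hq0 : 0 < μ.real {ω | a - ρ ≤ ξ 0 ω})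
    (hq : c₅ * |Real.log (μ.real {ω | a - ρ ≤ ξ 0 ω})| < 1 / 5) :
    ∀ᵐ ω ∂μ, ∃ᶠ p : ℕ in atTop, goodPair α ε' c₄ c₅ c₆ a ρ (fun x => V x ω) (fun x => ξ x ω)
      ((p : ℝ) ^ (3 * p)) := by
  have hL : 0 < L := hX.bound_nonneg.lt_of_ne' fun hL0 => by
    have := (hX.right 0).variance_le_sq
    rw [hL0] at this
    linarith
  have hi := iIndepFun_sumElim hX.indep hiξ hξX.symm
  obtain ⟨C, hC, hlow⟩ := hX.exists_eventually_div_le_measureReal_goodBlockEvent hs hL hV hξ hiξ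
    hid hi hα0 hα1 hε' hc₄ hc₅ hc₆ hβ htail hq0 hq
  have hdisj : ∀ᶠ p in atTop, ∀ q, p < q →
      Disjoint (blockSites (blockStart p) (blockLength L s (level p)))
        (blockSites (blockStart q) (blockLength L s (level q))) := by
    filter_upwards [eventually_blockStart_add_lt (stepCount L s / (4800 * L) ^ 2)] with p hp q hpq
    exact disjoint_blockSites _ (hp _ blockLength_le q hpq)
  filter_upwards [ae_frequently_mem_of_div_le (Sum.forall.2 ⟨hX.measurable, hξ⟩) hi hdisj
      (fun _ => measurableSet_goodBlockEvent hV _ _ _) hC hlow,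
    hX.ae_eventually_abs_potential_le hV, ae_eventually_negPart_lt hid hα1 hε' hc₄ hβ htail]
    with ω hgood hflat hneg
  refine (hgood.and_eventually (hflat.and (hneg.and eventually_level_pos))).mono ?_
  rintro p ⟨hgood, hflat, hneg, hlevel⟩
  exact goodPair_of_mem_goodBlockEvent hlevel hc hc₆ hgood hflat hneg

end GoodBlocks

/-- Proposition 3.2: under assumptions (1.1)–(1.3), `ess sup ξ₀ = a < ∞`, thin
negative tails for the scenery, and the choice `c₅·|log Q{ξ₀ ≥ a−ρ}| < 1/5`,
`P⊗Q`-almost every `(ω,ξ)` is a good environment-scenery: `(ω,ξ) ∈ A(j_p)` for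
infinitely many `p`, where `j_p := p^{3p}`. -/
theorem stmt9 {Ω : Type*} [MeasurableSpace Ω] (μ : Measure Ω) [IsProbabilityMeasure μ]
    -- the i.i.d. environment
    (env : ℤ → Ω → ℝ) (henv_meas : ∀ i, Measurable (env i))
    (henv_indep : iIndepFun env μ)
    (henv_ident : ∀ i, IdentDistrib (env i) (env 0) μ μ)
    (δ : ℝ) (hδ0 : 0 < δ) (hδ1 : δ < 1 / 2)
    (henv_ell : ∀ i, ∀ᵐ ω ∂μ, δ ≤ env i ω ∧ env i ω ≤ 1 - δ)
    (henv_mean : ∫ ω, Real.log ((1 - env 0 ω) / env 0 ω) ∂μ = 0)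
    (henv_var : 0 < variance (fun ω => Real.log ((1 - env 0 ω) / env 0 ω)) μ)
    -- the potential
    (V : ℤ → Ω → ℝ)
    (hV_pos : ∀ (x : ℤ), 0 ≤ x → ∀ ω, V x ω =
      ∑ i ∈ Finset.range x.toNat, Real.log ((1 - env ((i : ℤ) + 1) ω) / env ((i : ℤ) + 1) ω))
    (hV_neg : ∀ (x : ℤ), x < 0 → ∀ ω, V x ω =
      -∑ i ∈ Finset.range (-x).toNat,
        Real.log ((1 - env (x + 1 + (i : ℤ)) ω) / env (x + 1 + (i : ℤ)) ω))
    -- the i.i.d. scenery, independent of the environment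
    (sce : ℤ → Ω → ℝ) (hsce_meas : ∀ x, Measurable (sce x))
    (hsce_indep : iIndepFun sce μ)
    (hsce_ident : ∀ x, IdentDistrib (sce x) (sce 0) μ μ)
    (hsce_env_indep :
      IndepFun (fun ω => (fun x : ℤ => sce x ω)) (fun ω => (fun i : ℤ => env i ω)) μ)
    -- `a := ess sup ξ₀ < ∞` and thin negative tails
    (a : ℝ) (ha : a = essSup (fun ω => sce 0 ω) μ) (ha_fin : ∀ᵐ ω ∂μ, sce 0 ω ≤ a)
    (ε : ℝ) (hε : 0 < ε) (lam₀ : ℝ) (hlam₀ : 1 < lam₀)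
    (htail : ∀ lam : ℝ, lam₀ ≤ lam →
      (μ {ω | lam < max (-(sce 0 ω)) 0}).toReal ≤ 1 / Real.log lam ^ (2 + ε : ℝ))
    -- the scale parameters
    (ε' α c₄ c₅ c₆ ρ : ℝ)
    (hε' : ε' = min (1 / 35) (ε / 2))
    (hα0 : 0 < α) (hα1 : α < 1)
    (hβ : 0 < (1 - α) ^ 2 * (2 + ε) - (2 + ε'))
    (hβ' : 0 < ε' / 2 - α)
    (hc₄0 : 0 < c₄) (hc₄1 : c₄ < 1 / 6)
    (hρ0 : 0 < ρ) (hρ1 : ρ < 1)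
    (hc₅0 : 0 < c₅) (hc₅1 : c₅ < 1)
    (hc₅ : c₅ * |Real.log (μ {ω | a - ρ ≤ sce 0 ω}).toReal| < 1 / 5)
    (hc₆ : max 1 (2 * (1 + 2 / (2 + ε'))) ≤ c₆) :
    ∀ᵐ ω ∂μ, ∀ N : ℕ, ∃ p : ℕ, N ≤ p ∧
      goodPair α ε' c₄ c₅ c₆ a ρ (fun x => V x ω) (fun x => sce x ω) ((p : ℝ) ^ (3 * p)) := by
  have hε'0 : 0 < ε' := hε' ▸ lt_min (by norm_num) (half_pos hε)
  have hc₆1 : 1 ≤ c₆ := (le_max_left _ _).trans hc₆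
  have hsteps := centeredSteps_log_odds hδ0 henv_meas henv_indep henv_ident henv_ell henv_mean
  have hindep : IndepFun (fun ω x => sce x ω)
      (fun ω i => Real.log ((1 - env i ω) / env i ω)) μ :=
    hsce_env_indep.comp measurable_id
      (measurable_pi_lambda _ fun i => measurable_log_odds.comp (measurable_pi_apply i))
  have hq : 0 < μ.real {ω | a - ρ ≤ sce 0 ω} := ha ▸ measureReal_essSup_sub_le_pos hρ0
  exact (stmt9_general hsteps henv_var (isPotential_of_eq_sum hV_pos hV_neg) hsce_meas hsce_indep
    hsce_ident hindep (eventually_atTop.2 ⟨lam₀, htail⟩) hα0 hα1 hε'0 hβ hc₄0 hc₅0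
    (hc₅1.le.trans hc₆1) hc₆1 hq hc₅).mono fun _ h => frequently_atTop.1 h
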